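/- Let 𝔭 ∈ [2,3), T > 0, let 𝐙 be a geometric 𝔭-rough path over ℝ^m on [0,T], let ξ ∈ C³_b(ℝ^d;ℝ^{d×m}) with ∇·ξ_k = 0 for every k = 1,…,m, and let b satisfy the Osgood assumption and, in addition, have distributional divergence ∇·b_t represented by an essentially bounded function with ∫_0^T ‖∇·b_s‖_{L^∞} ds < ∞. Let Φ_t denote the flow of homeomorphisms of the RDE dy = b_t(y) dt + ξ(y) d𝐙 (Φ_t(x) is the unique solution at time t started at x). Then for every t ∈ [0,T] and every Borel set A ⊆ ℝ^d, exp(−∫_0^t ‖∇·b_s‖_{L^∞} ds) · λ(A) ≤ λ(Φ_t(A)) ≤ exp(∫_0^t ‖∇·b_s‖_{L^∞} ds) · λ(A), where λ denotes Lebesgue measure on ℝ^d; the same two-sided bound holds with Φ_t replaced by Φ_t^{-1}. -/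

import Mathlib

/-!
The flow is the limit of a splitting scheme whose maps almost preserve volume, up to the divergence
of the drift. On a fine partition of `[0, t]` each interval `[s, r]` contributes a rough step
`x ↦ x + ξ(x) δZ + Ξ(x) 𝕫` (`stepF`), followed by a drift step `x ↦ x + B(x)`, where `B` is a
mollification of the averaged drift `∫ₛʳ b_q dq` (`drift_approx`).

*Volume.* Passing to the limit in the integration by parts formula for canonical lifts, geometricity
gives `𝕫 + 𝕫ᵀ = δZ ⊗ δZ` (`IsGeometricRoughPath.symm_eq`). Together with `tr Dξ_k = 0` this shows
that the derivative of a rough step agrees, up to an error of third order, with `exp Q` for some `Q`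
of zero trace, so that its Jacobian is `exp (O(w ^ (3 / p)))`, where `w` is the size of the data on
the interval (`fA_det`, `stepF_det`). The derivative `DB` of the drift is of the order
`γ = ∫ₛʳ g`, with a constant depending on the mollification, and the Jacobian of the drift step is
`exp (div B + O(γ²))` (`det_drift`), where `|div B| ≤ ∫ₛʳ D` since mollification commutes with the
weak divergence (`divg_mollified_le`). As `3 / p > 1`, the errors sum up to an arbitrarily small
quantity on fine partitions, and the composition of all steps distorts Lebesgue measure by a factor
of at most `exp (∫₀ᵗ D + δ)` in either direction (`exists_scheme`).

*Convergence.* Chen's relation makes the rough steps an almost flow, with a defect of order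
`w ^ (3 / p)` (`stepF_almostFlow`). A discrete sewing lemma (`sewing`) then yields stability of the
scheme with respect to perturbations of the increments, uniformly over fine partitions
(`stability_global`, `scheme_stab`). A solution of the equation satisfies the recursion of the
scheme up to the remainder `y^♮`, whose sum over a partition tends to zero with the mesh, and up to
the error of the drift (`local_error`); the latter leads to a discrete integral inequality which is
closed by a discrete Osgood lemma (`OsgoodModulus.discrete`). Hence the scheme converges to `Φ_t`
pointwise (`scheme_conv`).

*Limit.* Two-sided bounds for the measures of preimages pass to pointwise limits of maps with
uniformly bounded displacement (`quasiPres_lim`): the upper bound for open sets and the lower bound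
for compact sets are stable, and regularity of Lebesgue measure gives both for all Borel sets. The
bounds for images follow, `Φ_t` being bijective.
-/

open Real MeasureTheory Set Filter Topology Metric
open scoped BigOperators ENNReal NNReal RealInnerProductSpace

noncomputable section

/-- `ℝ^d` with the Euclidean norm. -/
abbrev Ed (d : ℕ) : Type := EuclideanSpace ℝ (Fin d)

section Var

variable {E : Type*} [NormedAddCommGroup E]

/-- The set of partition sums `(∑ ‖g_{tᵢ tᵢ₊₁}‖^q)^{1/q}` over finite partitions of `[s,t]`. -/
def varSums (q : ℝ) (g : ℝ → ℝ → E) (s t : ℝ) : Set ℝ :=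
  {v | ∃ n : ℕ, ∃ u : Fin (n + 1) → ℝ, Monotone u ∧ u 0 = s ∧ u (Fin.last n) = t ∧
    v = (∑ i : Fin n, ‖g (u i.castSucc) (u i.succ)‖ ^ q) ^ (1 / q)}

/-- `q`-variation seminorm of a two-parameter map on `[s,t]`. -/
def pVar (q : ℝ) (g : ℝ → ℝ → E) (s t : ℝ) : ℝ :=
  sSup (varSums q g s t)

/-- `g` has finite `q`-variation on `[s,t]`. -/
def FiniteVar (q : ℝ) (g : ℝ → ℝ → E) (s t : ℝ) : Prop :=
  BddAbove (varSums q g s t)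

/-- Increment `δx_{st} = x_t - x_s` of a path. -/
def incr (x : ℝ → E) : ℝ → ℝ → E := fun s t => x t - x s

/-- A control on `[0,T]`. -/
def IsControl (T : ℝ) (w : ℝ → ℝ → ℝ) : Prop :=
  ContinuousOn (fun q : ℝ × ℝ => w q.1 q.2) {q : ℝ × ℝ | 0 ≤ q.1 ∧ q.1 ≤ q.2 ∧ q.2 ≤ T} ∧
  (∀ s : ℝ, 0 ≤ s → s ≤ T → w s s = 0) ∧
  (∀ s t : ℝ, 0 ≤ s → s ≤ t → t ≤ T → 0 ≤ w s t) ∧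
  (∀ s u t : ℝ, 0 ≤ s → s ≤ u → u ≤ t → t ≤ T → w s u + w u t ≤ w s t)

end Var

section RP

variable {m : ℕ}

/-- A continuous `p`-rough path over `ℝ^m` on `[0,T]`. -/
def IsRoughPath (p T : ℝ) (Z : ℝ → Ed m) (ZZ : ℝ → ℝ → Fin m → Fin m → ℝ) : Prop :=
  ContinuousOn Z (Icc 0 T) ∧
  ContinuousOn (fun q : ℝ × ℝ => ZZ q.1 q.2) {q : ℝ × ℝ | 0 ≤ q.1 ∧ q.1 ≤ q.2 ∧ q.2 ≤ T} ∧
  FiniteVar p (incr Z) 0 T ∧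
  FiniteVar (p / 2) ZZ 0 T ∧
  ∀ s u t : ℝ, 0 ≤ s → s ≤ u → u ≤ t → t ≤ T → ∀ i j : Fin m,
    ZZ s t i j - ZZ s u i j - ZZ u t i j = (Z u i - Z s i) * (Z t j - Z u j)

/-- Canonical lift of a C¹ path. -/
def canonLift (Z : ℝ → Ed m) : ℝ → ℝ → Fin m → Fin m → ℝ :=
  fun s t i j => ∫ r in s..t, (Z r i - Z s i) * deriv (fun τ => Z τ j) r

/-- A geometric `p`-rough path: a rough path that is the limit of canonical lifts of C¹
paths in `p`-variation (plus uniform) distance. -/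
def IsGeometricRoughPath (p T : ℝ) (Z : ℝ → Ed m) (ZZ : ℝ → ℝ → Fin m → Fin m → ℝ) : Prop :=
  IsRoughPath p T Z ZZ ∧
  ∃ Zs : ℕ → ℝ → Ed m,
    (∀ n, ContDiff ℝ 1 (Zs n)) ∧
    Tendsto (fun n =>
        pVar p (fun s t => (Zs n t - Z t) - (Zs n s - Z s)) 0 T
          + (⨆ t : Icc (0 : ℝ) T, ‖Zs n ↑t - Z ↑t‖)
          + pVar (p / 2) (fun s t => (fun i j => canonLift (Zs n) s t i j - ZZ s t i j)) 0 T)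
      atTop (nhds 0)

end RP

section RDE

variable {d m : ℕ}

/-- `f` is of class `C^k_b` with all derivatives up to order `k` bounded by `K`. -/
def CkbBound {F G : Type*} [NormedAddCommGroup F] [NormedSpace ℝ F]
    [NormedAddCommGroup G] [NormedSpace ℝ G] (k : ℕ) (f : F → G) (K : ℝ) : Prop :=
  ContDiff ℝ k f ∧ ∀ i : ℕ, i ≤ k → ∀ x, ‖iteratedFDeriv ℝ i f x‖ ≤ K

/-- `ξ(y) z = ∑ₖ zₖ ξₖ(y)`. -/
def xiAct (ξ : Fin m → Ed d → Ed d) (y : Ed d) (z : Ed m) : Ed d :=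
  ∑ k, z k • ξ k y

/-- `Ξ(y) A = ∑_{j,k} A_{jk} Dξₖ(y) ξⱼ(y)`. -/
def xi2Act (ξ : Fin m → Ed d → Ed d) (y : Ed d) (A : Fin m → Fin m → ℝ) : Ed d :=
  ∑ j, ∑ k, A j k • fderiv ℝ (ξ k) y (ξ j y)

/-- The remainder `y♮_{st}` of a candidate solution of `dy = dμ + ξ(y) d𝐙`. -/
def rdeRem (Z : ℝ → Ed m) (ZZ : ℝ → ℝ → Fin m → Fin m → ℝ) (ξ : Fin m → Ed d → Ed d)
    (μ y : ℝ → Ed d) : ℝ → ℝ → Ed d :=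
  fun s t => y t - y s - (μ t - μ s) - xiAct ξ (y s) (Z t - Z s) - xi2Act ξ (y s) (ZZ s t)

/-- `y` solves the forced RDE `dy = dμ + ξ(y) d𝐙` on `[0,T]`. -/
def SolvesRDEForced (p T : ℝ) (Z : ℝ → Ed m) (ZZ : ℝ → ℝ → Fin m → Fin m → ℝ)
    (ξ : Fin m → Ed d → Ed d) (μ y : ℝ → Ed d) : Prop :=
  ContinuousOn y (Icc 0 T) ∧ FiniteVar (p / 3) (rdeRem Z ZZ ξ μ y) 0 T

/-- `y` solves the RDE `dy = b_t(y) dt + ξ(y) d𝐙` on `[0,T]`. -/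
def SolvesRDE (p T : ℝ) (Z : ℝ → Ed m) (ZZ : ℝ → ℝ → Fin m → Fin m → ℝ)
    (ξ : Fin m → Ed d → Ed d) (b : ℝ → Ed d → Ed d) (y : ℝ → Ed d) : Prop :=
  IntegrableOn (fun s => b s (y s)) (Icc 0 T) volume ∧
  SolvesRDEForced p T Z ZZ ξ (fun t => ∫ s in (0 : ℝ)..t, b s (y s)) y

/-- The control `w_𝐙(s,t) = ⟦Z⟧_{p,[s,t]}^p + ⟦𝕫⟧_{p/2,[s,t]}^{p/2}` of a rough path. -/
def wRP (p : ℝ) (Z : ℝ → Ed m) (ZZ : ℝ → ℝ → Fin m → Fin m → ℝ) (s t : ℝ) : ℝ :=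
  pVar p (incr Z) s t ^ p + pVar (p / 2) ZZ s t ^ (p / 2)

end RDE

section Osgood

/-- An Osgood modulus of continuity. -/
def OsgoodModulus (h : ℝ → ℝ) : Prop :=
  ContinuousOn h (Ici 0) ∧ StrictMonoOn h (Ici 0) ∧ h 0 = 0 ∧
  (∀ a b : ℝ, 0 ≤ a → 0 ≤ b → h (a + b) ≤ h a + h b) ∧
  ∀ ε : ℝ, 0 < ε → (∫⁻ r in Ioo (0 : ℝ) ε, ENNReal.ofReal (h r)⁻¹) = ⊤

/-- The drift `b` satisfies the Osgood assumption with data `(g,h)`. -/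
def OsgoodDrift {d : ℕ} (g h : ℝ → ℝ) (b : ℝ → Ed d → Ed d) : Prop :=
  (∀ T : ℝ, 0 < T → IntegrableOn g (Icc 0 T) volume) ∧
  (∀ t x, ‖b t x‖ ≤ g t) ∧
  ∀ t x x', ‖b t x - b t x'‖ ≤ g t * h ‖x - x'‖

/-- `G(r) = ∫_{1}^{r} dr̃ / h(r̃)` (with base point `r₀ = 1`). -/
def osgoodG (h : ℝ → ℝ) (r : ℝ) : ℝ := ∫ x in (1 : ℝ)..r, (h x)⁻¹

/-- `M^h(α,β) = G⁻¹(G(α) + β)`, with `M^h(0,β) = 0`. -/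
def osgoodM (h : ℝ → ℝ) (α β : ℝ) : ℝ :=
  if α ≤ 0 then 0 else sSup {r : ℝ | 0 < r ∧ osgoodG h r ≤ osgoodG h α + β}

end Osgood

section WeakSol

variable {d m : ℕ}

/-- Divergence of a vector field on `ℝ^d`. -/
def divg (v : Ed d → Ed d) (x : Ed d) : ℝ :=
  ∑ i, fderiv ℝ v x (EuclideanSpace.single i (1 : ℝ)) i

/-- Divergence (trace) of a continuous linear map on `ℝ^d`. -/
def clmDiv (L : Ed d →L[ℝ] Ed d) : ℝ :=
  ∑ i, L (EuclideanSpace.single i (1 : ℝ)) i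

/-- Infinitely differentiable function. -/
def IsSmoothFn {dd : ℕ} (φ : Ed dd → ℝ) : Prop := ∀ k : ℕ, ContDiff ℝ k φ

/-- `W^{3,∞}` norm: sum of sup norms of derivatives up to order 3. -/
def W3Norm (φ : Ed d → ℝ) : ℝ :=
  ∑ i ∈ Finset.range 4, ⨆ x : Ed d, ‖iteratedFDeriv ℝ i φ x‖

/-- Remainder `⟨ρ♮_{st}, φ⟩` of the rough continuity equation. -/
def CERem (Z : ℝ → Ed m) (ZZ : ℝ → ℝ → Fin m → Fin m → ℝ)
    (ξ : Fin m → Ed d → Ed d) (b : ℝ → Ed d → Ed d) (ρ : ℝ → Ed d → ℝ)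
    (s t : ℝ) (φ : Ed d → ℝ) : ℝ :=
  (∫ x, (ρ t x - ρ s x) * φ x)
    - (∫ r in s..t, ∫ x, ρ r x * ⟪b r x, gradient φ x⟫)
    - (∑ k, (Z t k - Z s k) * ∫ x, ρ s x * ⟪ξ k x, gradient φ x⟫)
    - ∑ j, ∑ k, ZZ s t j k *
        ∫ x, ρ s x * ⟪ξ k x, gradient (fun y => ⟪ξ j y, gradient φ y⟫) x⟫

/-- Weak solution of the rough continuity equation
`dρ + ∇·(bρ) dt + ∑ₖ ∇·(ξₖ ρ) d𝐙ᵏ = 0` on `[0,T]`. -/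
def IsWeakSolCE (p T : ℝ) (Z : ℝ → Ed m) (ZZ : ℝ → ℝ → Fin m → Fin m → ℝ)
    (ξ : Fin m → Ed d → Ed d) (b : ℝ → Ed d → Ed d) (ρ : ℝ → Ed d → ℝ) : Prop :=
  Measurable (fun q : ℝ × Ed d => ρ q.1 q.2) ∧
  (∀ t ∈ Icc (0 : ℝ) T, LocallyIntegrable (ρ t) volume) ∧
  (∀ R : ℝ, 1 ≤ R → ∃ M : ℝ, ∀ t ∈ Icc (0 : ℝ) T,
      (∫ x in closedBall (0 : Ed d) R, |ρ t x|) ≤ M) ∧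
  (∀ R : ℝ, 1 ≤ R → IntegrableOn (fun q : ℝ × Ed d => ‖b q.1 q.2‖ * |ρ q.1 q.2|)
      (Icc (0 : ℝ) T ×ˢ closedBall (0 : Ed d) R) volume) ∧
  ∀ R : ℝ, 1 ≤ R → ∃ w : ℝ → ℝ → ℝ, IsControl T w ∧
    ∀ s t : ℝ, 0 ≤ s → s ≤ t → t ≤ T → ∀ φ : Ed d → ℝ,
      IsSmoothFn φ → HasCompactSupport φ → tsupport φ ⊆ closedBall (0 : Ed d) R →
      |CERem Z ZZ ξ b ρ s t φ| ≤ w s t ^ (3 / p) * W3Norm φ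

/-- Remainder `⟨f♮_{st}, φ⟩` of the rough transport equation. -/
def TERem (Z : ℝ → Ed m) (ZZ : ℝ → ℝ → Fin m → Fin m → ℝ)
    (ξ : Fin m → Ed d → Ed d) (b : ℝ → Ed d → Ed d) (divb : ℝ → Ed d → ℝ)
    (f : ℝ → Ed d → ℝ) (s t : ℝ) (φ : Ed d → ℝ) : ℝ :=
  (∫ x, (f t x - f s x) * φ x)
    - (∫ r in s..t, ∫ x, f r x * (⟪b r x, gradient φ x⟫ + divb r x * φ x))
    - (∑ k, (Z t k - Z s k) * ∫ x, f s x * ⟪ξ k x, gradient φ x⟫)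
    - ∑ j, ∑ k, ZZ s t j k *
        ∫ x, f s x * ⟪ξ k x, gradient (fun y => ⟪ξ j y, gradient φ y⟫) x⟫

/-- Weak solution of the rough transport equation
`df + b·∇f dt + ∑ₖ ξₖ·∇f d𝐙ᵏ = 0` on `[0,T]`, where `divb` is the divergence of `b`. -/
def IsWeakSolTE (p T : ℝ) (Z : ℝ → Ed m) (ZZ : ℝ → ℝ → Fin m → Fin m → ℝ)
    (ξ : Fin m → Ed d → Ed d) (b : ℝ → Ed d → Ed d) (divb : ℝ → Ed d → ℝ)
    (f : ℝ → Ed d → ℝ) : Prop :=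
  Measurable (fun q : ℝ × Ed d => f q.1 q.2) ∧
  (∀ t ∈ Icc (0 : ℝ) T, LocallyIntegrable (f t) volume) ∧
  (∀ R : ℝ, 1 ≤ R → ∃ M : ℝ, ∀ t ∈ Icc (0 : ℝ) T,
      (∫ x in closedBall (0 : Ed d) R, |f t x|) ≤ M) ∧
  (∀ R : ℝ, 1 ≤ R → IntegrableOn
      (fun q : ℝ × Ed d => (‖b q.1 q.2‖ + |divb q.1 q.2|) * |f q.1 q.2|)
      (Icc (0 : ℝ) T ×ˢ closedBall (0 : Ed d) R) volume) ∧
  ∀ R : ℝ, 1 ≤ R → ∃ w : ℝ → ℝ → ℝ, IsControl T w ∧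
    ∀ s t : ℝ, 0 ≤ s → s ≤ t → t ≤ T → ∀ φ : Ed d → ℝ,
      IsSmoothFn φ → HasCompactSupport φ → tsupport φ ⊆ closedBall (0 : Ed d) R →
      |TERem Z ZZ ξ b divb f s t φ| ≤ w s t ^ (3 / p) * W3Norm φ

/-- `Dv` is the weak (distributional) differential of the vector field `v`. -/
def IsWeakFDeriv (v : Ed d → Ed d) (Dv : Ed d → Ed d →L[ℝ] Ed d) : Prop :=
  ∀ φ : Ed d → ℝ, IsSmoothFn φ → HasCompactSupport φ → ∀ w : Ed d,
    (∫ x, φ x • Dv x w) = -∫ x, fderiv ℝ φ x w • v x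

end WeakSol

section BS

/-- The Biot–Savart kernel `K(z) = z^⊥ / (2π |z|²)` on `ℝ²` (with `K(0) = 0`). -/
def biotSavart (z : Ed 2) : Ed 2 :=
  (2 * π * ‖z‖ ^ 2)⁻¹ •
    (EuclideanSpace.single (0 : Fin 2) (-(z 1)) + EuclideanSpace.single (1 : Fin 2) (z 0))

/-- The velocity `K ∗ ω` associated with a vorticity `ω`. -/
def biotVel (ω : Ed 2 → ℝ) (x : Ed 2) : Ed 2 := ∫ y, ω y • biotSavart (x - y)

/-- Symmetrized Biot–Savart pairing `B(f,φ)`. -/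
def Bpair (f φ : Ed 2 → ℝ) : ℝ :=
  (1 / 2) * ∫ q : Ed 2 × Ed 2,
    ⟪biotSavart (q.1 - q.2), gradient φ q.1 - gradient φ q.2⟫ * (f q.1 * f q.2)

end BS

end

/-! ### Determinants near the identity -/

section DetNear

variable {E : Type*} [NormedAddCommGroup E] [NormedSpace ℝ E] [FiniteDimensional ℝ E]

/-- The trace of a continuous endomorphism. -/
noncomputable abbrev ctr (L : E →L[ℝ] E) : ℝ := LinearMap.trace ℝ E (L : E →ₗ[ℝ] E)

/-- The determinant is that of a matrix in a fixed basis, hence polynomial in the entries. -/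
lemma clm_det_eq (A : E →L[ℝ] E) :
    A.det = (LinearMap.toMatrix (Module.finBasis ℝ E) (Module.finBasis ℝ E)
      (A : E →ₗ[ℝ] E)).det := by
  rw [LinearMap.det_toMatrix]

lemma det_one_smul (A : E →L[ℝ] E) :
    HasDerivAt (fun r : ℝ => (1 + r • A).det) (ctr A) 0 := by
  set M := LinearMap.toMatrix (Module.finBasis ℝ E) (Module.finBasis ℝ E) (A : E →ₗ[ℝ] E) with hM
  have h1 : (fun r : ℝ => (1 + r • A).det) = fun r => 1 + M.trace * r +
      (Matrix.det (1 + (Polynomial.X : Polynomial ℝ) • M.map Polynomial.C)).divX.divX.eval r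
        * r ^ 2 := by
    funext r
    rw [← Matrix.det_one_add_smul, clm_det_eq]
    congr 1
    simp [hM]
  rw [h1]
  have h2 : ctr A = M.trace := LinearMap.trace_eq_matrix_trace ℝ _ _
  rw [h2]
  set q := (Matrix.det (1 + (Polynomial.X : Polynomial ℝ) • M.map Polynomial.C)).divX.divX
  have h3 := ((hasDerivAt_id (0 : ℝ)).const_mul M.trace).const_add 1 |>.add
    ((q.hasDerivAt 0).mul ((hasDerivAt_id (0 : ℝ)).pow 2))
  exact h3.congr_deriv (by simp)

lemma det_contDiff : ContDiff ℝ 1 (fun A : E →L[ℝ] E => A.det) := by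
  set bas := Module.finBasis ℝ E
  have : (fun A : E →L[ℝ] E => A.det) = fun A => ∑ σ : Equiv.Perm (Fin (Module.finrank ℝ E)),
      ((Equiv.Perm.sign σ : ℤ) : ℝ) * ∏ i, (bas.coord (σ i)).toContinuousLinearMap
        (ContinuousLinearMap.apply ℝ E (bas i) A) := by
    funext A
    rw [clm_det_eq, Matrix.det_apply']
    simp [LinearMap.toMatrix_apply, bas]
  rw [this]
  refine ContDiff.sum fun σ _ => contDiff_const.mul (contDiff_prod fun i _ => ?_)
  exact (ContinuousLinearMap.contDiff _).comp (ContinuousLinearMap.contDiff _)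

lemma det_fderiv_one :
    HasFDerivAt (fun A : E →L[ℝ] E => A.det)
      (fderiv ℝ (fun A : E →L[ℝ] E => A.det) 1) 1 :=
  (det_contDiff.differentiable one_ne_zero).differentiableAt.hasFDerivAt

/-- Jacobi's formula at the identity. -/
lemma det_fderiv_one_apply (A : E →L[ℝ] E) :
    fderiv ℝ (fun A : E →L[ℝ] E => A.det) 1 A = ctr A := by
  have h1 : HasDerivAt (fun r : ℝ => (1 : E →L[ℝ] E) + r • A) A 0 := by
    simpa using ((hasDerivAt_id (0 : ℝ)).smul_const A).const_add 1
  have h2 := HasFDerivAt.comp_hasDerivAt (x := (0 : ℝ)) (f := fun r : ℝ => 1 + r • A)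
    (l := fun A : E →L[ℝ] E => A.det) (hf := h1)
    (hl := by simpa using det_fderiv_one)
  exact h2.unique (det_one_smul A)

lemma norm_exp_le_exp (Q : E →L[ℝ] E) : ‖NormedSpace.exp Q‖ ≤ Real.exp ‖Q‖ := by
  rw [NormedSpace.exp_eq_tsum ℝ]
  have hs := NormedSpace.expSeries_summable' (𝕂 := ℝ) ‖Q‖
  have hb : ∀ n : ℕ, ‖((n.factorial : ℝ)⁻¹) • Q ^ n‖ ≤ ((n.factorial : ℝ)⁻¹) • ‖Q‖ ^ n := by
    intro n
    rw [norm_smul, norm_inv, Real.norm_natCast, smul_eq_mul]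
    gcongr
    rcases Nat.eq_zero_or_pos n with rfl | hn
    · simp only [pow_zero]; exact ContinuousLinearMap.norm_id_le
    · exact norm_pow_le' _ hn
  refine (tsum_of_norm_bounded hs.hasSum hb).trans ?_
  rw [Real.exp_eq_exp_ℝ, NormedSpace.exp_eq_tsum ℝ]

/-- `det (exp Q) = exp (tr Q)`. -/
lemma det_exp_eq (Q : E →L[ℝ] E) :
    (NormedSpace.exp Q).det = Real.exp (ctr Q) := by
  set φ : ℝ → ℝ := fun t => (NormedSpace.exp (t • Q)).det with hφ
  have hadd : ∀ t s, φ (t + s) = φ t * φ s := by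
    intro t s
    have hc : Commute (t • Q) (s • Q) :=
      ((Commute.refl Q).smul_left t).smul_right s
    simp only [hφ]
    rw [add_smul]
    let : NormedAlgebra ℚ (E →L[ℝ] E) := NormedAlgebra.restrictScalars ℚ ℝ _
    rw [NormedSpace.exp_add_of_commute hc]
    exact LinearMap.det_comp _ _
  have hexp : HasDerivAt (fun t : ℝ => NormedSpace.exp (t • Q)) Q 0 := by
    have := hasDerivAt_exp_smul_const (𝕂 := ℝ) Q (0 : ℝ)
    simpa using this
  have h0 : HasDerivAt φ (ctr Q) 0 := by
    have h2 := HasFDerivAt.comp_hasDerivAt (x := (0 : ℝ)) (f := fun t : ℝ => NormedSpace.exp (t • Q))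
      (l := fun A : E →L[ℝ] E => A.det) (hf := hexp)
      (hl := by simpa using det_fderiv_one)
    rw [det_fderiv_one_apply] at h2
    exact h2
  have hφ0 : φ 0 = 1 := by
    simp only [hφ, zero_smul, NormedSpace.exp_zero]
    exact LinearMap.det_id
  have hd : ∀ t, HasDerivAt φ (φ t * ctr Q) t := by
    intro t
    have h1 : HasDerivAt (fun s => φ t * φ (s - t)) (φ t * ctr Q) t := by
      have h2 : HasDerivAt (fun s => φ (s - t)) (ctr Q) t := by
        have := HasDerivAt.comp_sub_const (f := φ) (f' := ctr Q) t t (by simpa using h0)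
        exact this
      exact h2.const_mul _
    refine h1.congr_of_eventuallyEq (Eventually.of_forall fun s => ?_)
    simp only
    rw [← hadd]; congr 1; ring
  have hconst : ∀ t, HasDerivAt (fun t => φ t * Real.exp (-(t * ctr Q))) 0 t := by
    intro t
    have h1 : HasDerivAt (fun t => Real.exp (-(t * ctr Q)))
        (Real.exp (-(t * ctr Q)) * (-(ctr Q))) t := by
      have := (((hasDerivAt_id t).mul_const (ctr Q)).neg).exp
      simpa using this
    have := (hd t).mul h1
    exact this.congr_deriv (by ring)
  have hc := is_const_of_deriv_eq_zero (fun t => (hconst t).differentiableAt)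
    (fun t => (hconst t).deriv) 1 0
  simp only [one_mul, zero_mul, neg_zero, Real.exp_zero, mul_one, hφ0] at hc
  have h1 : φ 1 = (NormedSpace.exp Q).det := by simp [hφ]
  rw [← h1]
  rw [Real.exp_neg] at hc
  field_simp at hc
  linarith

/-- First-order Lipschitz control of the determinant near the identity; the constants depend only on
the space. -/
lemma det_near_one : ∃ K r : ℝ, 0 < K ∧ 0 < r ∧ ∀ R : E →L[ℝ] E, ‖R‖ ≤ r →
    |(1 + R).det - 1| ≤ K * ‖R‖ := by
  have h := (det_fderiv_one (E := E)).isBigO_sub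
  obtain ⟨K, hK, h⟩ := h.exists_pos
  have h2 := h.bound
  rw [Metric.eventually_nhds_iff] at h2
  obtain ⟨ε, hε, h2⟩ := h2
  refine ⟨K, ε / 2, hK, by positivity, fun R hR => ?_⟩
  have := @h2 (1 + R) (by simp; linarith)
  have h1 : (1 : E →L[ℝ] E).det = 1 := LinearMap.det_id
  simpa [h1, Real.norm_eq_abs] using this

/-- If `1 + M` is within `s` of `exp Q`, then `|det (1 + M)|` is within a factor `exp (± K s)`
of `exp (tr Q)`. -/
lemma det_near_exp : ∃ K r : ℝ, 0 < K ∧ 0 < r ∧ ∀ M Q : E →L[ℝ] E, ∀ s : ℝ, ‖Q‖ ≤ 1 →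
    ‖1 + M - NormedSpace.exp Q‖ ≤ s → s ≤ r →
    Real.exp (ctr Q - K * s) ≤ |(1 + M).det| ∧ |(1 + M).det| ≤ Real.exp (ctr Q + K * s) := by
  obtain ⟨K, r, hK, hr, h⟩ := det_near_one (E := E)
  set e := Real.exp 1
  have he : 0 < e := Real.exp_pos _
  refine ⟨2 * K * e, min (r / e) (1 / (2 * K * e)), by positivity, by positivity, ?_⟩
  intro M Q s hQ hM hs
  have hs1 : e * s ≤ r := by
    have := hs.trans (min_le_left _ _)
    rw [le_div_iff₀ he] at this; linarith
  have hs2 : 2 * K * e * s ≤ 1 := by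
    have := hs.trans (min_le_right _ _)
    rw [le_div_iff₀ (by positivity)] at this; linarith
  have hs0 : 0 ≤ s := (norm_nonneg _).trans hM
  let : NormedAlgebra ℚ (E →L[ℝ] E) := NormedAlgebra.restrictScalars ℚ ℝ _
  have hinv : NormedSpace.exp (-Q) * NormedSpace.exp Q = 1 := by
    rw [← NormedSpace.exp_add_of_commute ((Commute.refl Q).neg_left)]; simp
  have hinv' : NormedSpace.exp Q * NormedSpace.exp (-Q) = 1 := by
    rw [← NormedSpace.exp_add_of_commute ((Commute.refl Q).neg_right)]; simp
  set R := NormedSpace.exp (-Q) * (1 + M - NormedSpace.exp Q) with hR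
  have hRn : ‖R‖ ≤ e * s := by
    have hexpn : ‖NormedSpace.exp (-Q)‖ ≤ e := by
      refine (norm_exp_le_exp _).trans ?_
      rw [norm_neg]
      exact Real.exp_le_exp.2 hQ
    calc ‖R‖ ≤ _ := norm_mul_le _ _
      _ ≤ e * s := by gcongr
  have hprod : 1 + M = NormedSpace.exp Q * (1 + R) := by
    rw [hR, mul_sub, hinv, mul_add, mul_sub, mul_one, ← mul_assoc, hinv']
    simp
  have hdet : (1 + M).det = Real.exp (ctr Q) * (1 + R).det := by
    rw [hprod, ← det_exp_eq]
    exact LinearMap.det_comp _ _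
  have h1 := h R (hRn.trans hs1)
  have h2 : |(1 + R).det - 1| ≤ K * (e * s) := h1.trans (by gcongr)
  rw [abs_le] at h2
  set x := K * (e * s) with hx
  have hx2 : 2 * x ≤ 1 := by rw [hx]; linarith
  have hx0 : 0 ≤ x := by positivity
  have hpos : 0 < (1 + R).det := by linarith
  have hKs : 2 * K * e * s = 2 * x := by rw [hx]; ring
  rw [hdet, abs_mul, abs_of_pos (Real.exp_pos _), abs_of_pos hpos, hKs]
  constructor
  · rw [sub_eq_add_neg, Real.exp_add]
    gcongr
    have h3 : Real.exp (-(2 * x)) ≤ 1 - x := by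
      rw [Real.exp_neg, inv_le_comm₀ (Real.exp_pos _) (by linarith)]
      have := Real.add_one_le_exp (2 * x)
      refine le_trans ?_ this
      rw [inv_le_iff_one_le_mul₀ (by linarith)]
      nlinarith
    linarith
  · rw [Real.exp_add]
    gcongr
    have := Real.add_one_le_exp (2 * x)
    linarith

/-- The exponential agrees with its second-order Taylor polynomial up to third order. -/
lemma exp_taylor {𝔸 : Type*} [NormedRing 𝔸] [NormedAlgebra ℝ 𝔸] [CompleteSpace 𝔸] :
    ∃ K r : ℝ, 0 < K ∧ 0 < r ∧ ∀ Q : 𝔸, ‖Q‖ ≤ r →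
      ‖NormedSpace.exp Q - (1 + Q + (1 / 2 : ℝ) • Q ^ 2)‖ ≤ K * ‖Q‖ ^ 3 := by
  have h := (NormedSpace.exp_hasFPowerSeriesAt_zero (𝕂 := ℝ) (𝔸 := 𝔸)).isBigO_sub_partialSum_pow 3
  obtain ⟨K, hK, h⟩ := h.exists_pos
  have h2 := h.bound
  rw [Metric.eventually_nhds_iff] at h2
  obtain ⟨ε, hε, h2⟩ := h2
  refine ⟨K, ε / 2, hK, by positivity, fun R hR => ?_⟩
  have := @h2 R (by simp; linarith)
  simpa [FormalMultilinearSeries.partialSum, Finset.sum_range_succ, NormedSpace.expSeries_apply_eq,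
    Nat.factorial] using this

end DetNear

section DetCor

variable {E : Type*} [NormedAddCommGroup E] [NormedSpace ℝ E] [FiniteDimensional ℝ E]

/-- Jacobian of a drift step: the exponent is the trace up to a second-order error. -/
lemma det_drift : ∃ K r : ℝ, 0 < K ∧ 0 < r ∧ ∀ B : E →L[ℝ] E, ‖B‖ ≤ r →
    Real.exp (ctr B - K * ‖B‖ ^ 2) ≤ |(1 + B).det| ∧
      |(1 + B).det| ≤ Real.exp (ctr B + K * ‖B‖ ^ 2) := by
  have : CompleteSpace E := FiniteDimensional.complete ℝ E
  obtain ⟨K, r, hK, hr, h⟩ := det_near_exp (E := E)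
  obtain ⟨K', r', hK', hr', h'⟩ := exp_taylor (𝔸 := E →L[ℝ] E)
  refine ⟨K * (1 + K'), min (min r' 1) (r / (1 + K')), by positivity, by positivity, fun B hB => ?_⟩
  have h1 : ‖B‖ ≤ r' := hB.trans ((min_le_left _ _).trans (min_le_left _ _))
  have h2 : ‖B‖ ≤ 1 := hB.trans ((min_le_left _ _).trans (min_le_right _ _))
  have h3 : ‖B‖ ≤ r / (1 + K') := hB.trans (min_le_right _ _)
  rw [le_div_iff₀ (by positivity)] at h3
  have hn := norm_nonneg B
  have key : ‖1 + B - NormedSpace.exp B‖ ≤ (1 + K') * ‖B‖ ^ 2 := by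
    have e : 1 + B - NormedSpace.exp B =
        -((NormedSpace.exp B - (1 + B + (1 / 2 : ℝ) • B ^ 2)) + (1 / 2 : ℝ) • B ^ 2) := by abel
    rw [e, norm_neg]
    refine (norm_add_le _ _).trans ?_
    have h4 := h' B h1
    have h5 : ‖(1 / 2 : ℝ) • B ^ 2‖ ≤ (1 / 2) * ‖B‖ ^ 2 := by
      rw [norm_smul]
      have : ‖B ^ 2‖ ≤ ‖B‖ ^ 2 := norm_pow_le' B (by norm_num)
      norm_num; linarith
    have h6 : ‖B‖ ^ 3 ≤ ‖B‖ ^ 2 := pow_le_pow_of_le_one hn h2 (by norm_num)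
    nlinarith [sq_nonneg ‖B‖]
  have := h B B ((1 + K') * ‖B‖ ^ 2) h2 key (by nlinarith)
  rw [← mul_assoc] at this
  exact this

set_option maxHeartbeats 1000000 in
/-- Jacobian of a rough step, in terms of its first-order part `M1` and second-order part `M2`.
With `Q = M1 + M2 - M1² / 2` the map `1 + M1 + M2` is `exp Q` up to third order, and the two trace
conditions say that `tr Q = 0`. -/
lemma det_rough (c : ℝ) (hc : 0 ≤ c) : ∃ K r : ℝ, 0 < K ∧ 0 < r ∧
    ∀ (M1 M2 : E →L[ℝ] E) (θ : ℝ), 0 ≤ θ → θ ≤ r → ‖M1‖ ≤ c * θ → ‖M2‖ ≤ c * θ ^ 2 →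
      ctr M1 = 0 → ctr M2 = 1 / 2 * ctr (M1 * M1) →
    Real.exp (-(K * θ ^ 3)) ≤ |(1 + (M1 + M2)).det| ∧
      |(1 + (M1 + M2)).det| ≤ Real.exp (K * θ ^ 3) := by
  have : CompleteSpace E := FiniteDimensional.complete ℝ E
  obtain ⟨K, r, hK, hr, h⟩ := det_near_exp (E := E)
  obtain ⟨K', r', hK', hr', h'⟩ := exp_taylor (𝔸 := E →L[ℝ] E)
  set c' := c + c ^ 2 with hc'
  set q := c + c' with hq
  have hc'0 : 0 ≤ c' := by positivity
  have hq0 : 0 ≤ q := by positivity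
  set C := K' * q ^ 3 + c * c' + c' ^ 2 + 1 with hC
  have hC1 : 1 ≤ C := by
    have : 0 ≤ K' * q ^ 3 + c * c' + c' ^ 2 := by positivity
    linarith
  have hC0 : 0 < C := by linarith
  refine ⟨K * C, min (min 1 (min r' 1 / (q + 1))) (r / C), by positivity, by positivity,
    fun M1 M2 θ hθ0 hθ hM1 hM2 ht1 ht2 => ?_⟩
  have hθ1 : θ ≤ 1 := hθ.trans ((min_le_left _ _).trans (min_le_left _ _))
  have hθ2 : θ ≤ min r' 1 / (q + 1) := hθ.trans ((min_le_left _ _).trans (min_le_right _ _))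
  have hθ3 : θ ≤ r / C := hθ.trans (min_le_right _ _)
  rw [le_div_iff₀ (by positivity)] at hθ2 hθ3
  have hsq : θ ^ 2 ≤ θ := by nlinarith
  have hcu : θ ^ 3 ≤ θ := by nlinarith [sq_nonneg θ]
  set P := M2 - (1 / 2 : ℝ) • (M1 * M1) with hP
  set Q := M1 + P with hQ
  have hM1n := norm_nonneg M1
  have hM11 : ‖M1 * M1‖ ≤ c ^ 2 * θ ^ 2 := by
    calc ‖M1 * M1‖ ≤ ‖M1‖ * ‖M1‖ := norm_mul_le _ _
      _ ≤ (c * θ) * (c * θ) := by gcongr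
      _ = _ := by ring
  have hPn : ‖P‖ ≤ c' * θ ^ 2 := by
    have h5 : ‖(1 / 2 : ℝ) • (M1 * M1)‖ ≤ (1 / 2) * (c ^ 2 * θ ^ 2) := by
      rw [norm_smul]; norm_num; linarith
    have := norm_sub_le M2 ((1 / 2 : ℝ) • (M1 * M1))
    have : 0 ≤ c ^ 2 * θ ^ 2 := by positivity
    rw [hc']; nlinarith
  have hQn : ‖Q‖ ≤ q * θ := by
    have := norm_add_le M1 P
    have := mul_le_mul_of_nonneg_left hsq hc'0
    rw [hq]; nlinarith
  have hQq : ‖Q‖ ≤ min r' 1 := by linarith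
  have htQ : ctr Q = 0 := by
    have : ((Q : E →L[ℝ] E) : E →ₗ[ℝ] E) = (M1 : E →ₗ[ℝ] E) + ((M2 : E →ₗ[ℝ] E) -
      (1 / 2 : ℝ) • ((M1 * M1 : E →L[ℝ] E) : E →ₗ[ℝ] E)) := rfl
    unfold ctr at *
    rw [this, map_add, map_sub, map_smul, ht1, ht2]
    simp
  have key : ‖1 + (M1 + M2) - NormedSpace.exp Q‖ ≤ C * θ ^ 3 := by
    have e : 1 + (M1 + M2) - NormedSpace.exp Q =
        -((NormedSpace.exp Q - (1 + Q + (1 / 2 : ℝ) • Q ^ 2)) +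
          (1 / 2 : ℝ) • (M1 * P + P * M1 + P * P)) := by
      have e1 : Q ^ 2 = M1 * M1 + (M1 * P + P * M1 + P * P) := by rw [hQ]; noncomm_ring
      have e2 : M1 + M2 = Q + (1 / 2 : ℝ) • (M1 * M1) := by rw [hQ, hP]; abel
      rw [e1, e2, smul_add]; abel
    rw [e, norm_neg]
    refine (norm_add_le _ _).trans ?_
    have h4 := h' Q (hQq.trans (min_le_left _ _))
    have h5 : ‖Q‖ ^ 3 ≤ (q * θ) ^ 3 := by gcongr
    have h6 : ‖M1 * P‖ ≤ (c * θ) * (c' * θ ^ 2) := (norm_mul_le _ _).trans (by gcongr)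
    have h7 : ‖P * M1‖ ≤ (c' * θ ^ 2) * (c * θ) := (norm_mul_le _ _).trans (by gcongr)
    have h8 : ‖P * P‖ ≤ (c' * θ ^ 2) * (c' * θ ^ 2) := (norm_mul_le _ _).trans (by gcongr)
    have h9 : ‖(1 / 2 : ℝ) • (M1 * P + P * M1 + P * P)‖ ≤
        (1 / 2) * ((c * θ) * (c' * θ ^ 2) + (c' * θ ^ 2) * (c * θ)
          + (c' * θ ^ 2) * (c' * θ ^ 2)) := by
      rw [norm_smul]
      have := norm_add₃_le (a := M1 * P) (b := P * M1) (c := P * P)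
      norm_num; linarith
    have h10 : (c' * θ ^ 2) * (c' * θ ^ 2) ≤ c' ^ 2 * θ ^ 3 := by
      have : θ ^ 4 ≤ θ ^ 3 := pow_le_pow_of_le_one hθ0 hθ1 (by norm_num)
      have := mul_le_mul_of_nonneg_left this (sq_nonneg c')
      linarith
    have h11 : K' * ‖Q‖ ^ 3 ≤ K' * (q * θ) ^ 3 := by gcongr
    have h12 : 0 ≤ c' ^ 2 * θ ^ 3 := by positivity
    have h13 : 0 ≤ θ ^ 3 := by positivity
    rw [hC]; linarith
  have := h (M1 + M2) Q (C * θ ^ 3) (hQq.trans (min_le_right _ _)) key (by linarith [mul_comm C (θ ^ 3), mul_le_mul_of_nonneg_left hcu hC0.le])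
  rw [htQ, ← mul_assoc] at this
  simpa using this

end DetCor

/-! ### Calculus of `C^k_b` maps and the local defect of the second-order scheme -/

section Ckb

variable {E F G : Type*} [NormedAddCommGroup E] [NormedSpace ℝ E]
  [NormedAddCommGroup F] [NormedSpace ℝ F] [NormedAddCommGroup G] [NormedSpace ℝ G]

lemma CkbBound.nonneg {k : ℕ} {f : E → F} {K : ℝ} (hf : CkbBound k f K) : 0 ≤ K :=
  (norm_nonneg _).trans (hf.2 0 (Nat.zero_le _) 0)

lemma CkbBound.norm_le {k : ℕ} {f : E → F} {K : ℝ} (hf : CkbBound k f K) (x : E) : ‖f x‖ ≤ K := by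
  simpa using hf.2 0 (Nat.zero_le _) x

lemma CkbBound.mono {k : ℕ} {f : E → F} {K : ℝ} (hf : CkbBound k f K) {k' : ℕ} {K' : ℝ}
    (hk : k' ≤ k) (hK : K ≤ K') : CkbBound k' f K' :=
  ⟨hf.1.of_le (by exact_mod_cast hk), fun i hi x => (hf.2 i (hi.trans hk) x).trans hK⟩

lemma CkbBound.fderiv {k : ℕ} {f : E → F} {K : ℝ} (hf : CkbBound (k + 1) f K) :
    CkbBound k (fderiv ℝ f) K :=
  ⟨hf.1.fderiv_right (by norm_cast), fun i hi x => by
    rw [norm_iteratedFDeriv_fderiv]; exact hf.2 (i + 1) (by omega) x⟩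

lemma CkbBound.clm_apply {k : ℕ} {f : E → F →L[ℝ] G} {g : E → F} {K L : ℝ}
    (hf : CkbBound k f K) (hg : CkbBound k g L) :
    CkbBound k (fun x => f x (g x)) (2 ^ k * (K * L)) := by
  refine ⟨hf.1.clm_apply hg.1, fun i hi x => ?_⟩
  refine (norm_iteratedFDeriv_clm_apply hf.1 hg.1 x (by exact_mod_cast hi)).trans ?_
  have hK := hf.nonneg
  have hL := hg.nonneg
  calc _ ≤ ∑ j ∈ Finset.range (i + 1), (i.choose j : ℝ) * (K * L) := by
        refine Finset.sum_le_sum fun j hj => ?_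
        rw [mul_assoc]
        have := Finset.mem_range.1 hj
        gcongr
        · exact hf.2 j (by omega) x
        · exact hg.2 (i - j) (by omega) x
    _ = 2 ^ i * (K * L) := by
        rw [← Finset.sum_mul]; congr 1; exact_mod_cast Nat.sum_range_choose i
    _ ≤ _ := by gcongr; norm_num

lemma CkbBound.const_smul {k : ℕ} {f : E → F} {K : ℝ} (hf : CkbBound k f K) (c : ℝ) {θ : ℝ}
    (hc : |c| ≤ θ) : CkbBound k (fun x => c • f x) (θ * K) := by
  refine ⟨hf.1.const_smul c, fun i hi x => ?_⟩
  have h1 : ContDiffAt ℝ i f x := (hf.1.of_le (by exact_mod_cast hi)).contDiffAt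
  have : iteratedFDeriv ℝ i (fun x => c • f x) x = c • iteratedFDeriv ℝ i f x :=
    iteratedFDeriv_const_smul_apply h1
  rw [this, norm_smul]
  exact mul_le_mul hc (hf.2 i hi x) (norm_nonneg _) ((abs_nonneg _).trans hc)

lemma CkbBound.add {k : ℕ} {f g : E → F} {K L : ℝ} (hf : CkbBound k f K) (hg : CkbBound k g L) :
    CkbBound k (fun x => f x + g x) (K + L) := by
  refine ⟨hf.1.add hg.1, fun i hi x => ?_⟩
  have h1 : ContDiffAt ℝ i f x := (hf.1.of_le (by exact_mod_cast hi)).contDiffAt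
  have h2 : ContDiffAt ℝ i g x := (hg.1.of_le (by exact_mod_cast hi)).contDiffAt
  have : iteratedFDeriv ℝ i (fun x => f x + g x) x
      = iteratedFDeriv ℝ i f x + iteratedFDeriv ℝ i g x := iteratedFDeriv_add_apply h1 h2
  rw [this]
  exact (norm_add_le _ _).trans (add_le_add (hf.2 i hi x) (hg.2 i hi x))

lemma ckbBound_zero (k : ℕ) : CkbBound k (fun _ : E => (0 : F)) 0 :=
  ⟨contDiff_const, fun i _ x => by
    have : iteratedFDeriv ℝ i (fun _ : E => (0 : F)) x = 0 := by
      have := iteratedFDeriv_fun_zero (𝕜 := ℝ) (E := E) (F := F) (n := i)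
      exact congrFun this x
    rw [this, norm_zero]⟩

lemma ckbBound_sum {k : ℕ} {ι : Type*} (s : Finset ι) {f : ι → E → F} {K : ι → ℝ}
    (hf : ∀ i ∈ s, CkbBound k (f i) (K i)) :
    CkbBound k (fun x => ∑ i ∈ s, f i x) (∑ i ∈ s, K i) := by
  classical
  induction s using Finset.induction_on with
  | empty => simpa using ckbBound_zero k
  | insert a s ha ih =>
    simp only [Finset.sum_insert ha]
    exact (hf a (Finset.mem_insert_self _ _)).add
      (ih fun i hi => hf i (Finset.mem_insert_of_mem hi))

lemma CkbBound.norm_fderiv_le {k : ℕ} {f : E → F} {K : ℝ} (hf : CkbBound (k + 1) f K) (x : E) :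
    ‖_root_.fderiv ℝ f x‖ ≤ K := hf.fderiv.norm_le x

lemma CkbBound.differentiable {k : ℕ} {f : E → F} {K : ℝ} (hf : CkbBound (k + 1) f K) :
    Differentiable ℝ f := hf.1.differentiable (by simp)

lemma CkbBound.lip {k : ℕ} {f : E → F} {K : ℝ} (hf : CkbBound (k + 1) f K) (x y : E) :
    ‖f x - f y‖ ≤ K * ‖x - y‖ :=
  Convex.norm_image_sub_le_of_norm_fderiv_le (s := univ)
    (fun z _ => hf.differentiable z) (fun z _ => hf.norm_fderiv_le z) convex_univ
    (mem_univ _) (mem_univ _)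

/-- Increments of `f` as a function of the base point and of the step: Lipschitz in both, with the
base-point difference weighted by the size of the step. -/
lemma CkbBound.diff2 {f : E → F} {K : ℝ} (hf : CkbBound 2 f K) (x x' v v' : E) :
    ‖f (x + v) - f x - (f (x' + v') - f x')‖ ≤ K * (‖x - x'‖ * ‖v‖ + ‖v - v'‖) := by
  have h1 : ‖(f (x + v) - f (x' + v)) - (f (x + 0) - f (x' + 0))‖ ≤ K * ‖x - x'‖ * ‖v - 0‖ := by
    refine Convex.norm_image_sub_le_of_norm_hasFDerivWithin_le (s := univ) (𝕜 := ℝ)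
      (f := fun w => f (x + w) - f (x' + w))
      (f' := fun w => _root_.fderiv ℝ f (x + w) - _root_.fderiv ℝ f (x' + w))
      (fun z _ => ?_) (fun z _ => ?_) convex_univ (mem_univ _) (mem_univ _)
    · have a1 := ((hf.differentiable (x + z)).hasFDerivAt).comp z ((hasFDerivAt_id z).const_add x)
      have a2 := ((hf.differentiable (x' + z)).hasFDerivAt).comp z
        ((hasFDerivAt_id z).const_add x')
      exact (a1.sub a2).hasFDerivWithinAt
    · have := (hf.fderiv).lip (k := 0) (x + z) (x' + z)
      simpa using this
  have h2 := hf.lip (k := 1) (x' + v) (x' + v')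
  have e : f (x + v) - f x - (f (x' + v') - f x') =
    ((f (x + v) - f (x' + v)) - (f (x + 0) - f (x' + 0))) + (f (x' + v) - f (x' + v')) := by
    simp only [add_zero]; abel
  rw [e]
  refine (norm_add_le _ _).trans ?_
  simp only [add_sub_add_left_eq_sub, sub_zero] at h1 h2
  simp only [add_zero] at h1 ⊢
  linarith

/-- First-order Taylor remainder of `f` at `x` in the direction `v`. -/
noncomputable def taylorRem (f : E → F) (x v : E) : F := f (x + v) - f x - fderiv ℝ f x v

lemma CkbBound.hasFDerivAt_taylorRem {k : ℕ} {f : E → F} {K : ℝ} (hf : CkbBound (k + 1) f K)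
    (x v : E) : HasFDerivAt (taylorRem f x)
      (_root_.fderiv ℝ f (x + v) - _root_.fderiv ℝ f x) v := by
  have a1 := ((hf.differentiable (x + v)).hasFDerivAt).comp v ((hasFDerivAt_id v).const_add x)
  exact (a1.sub_const (f x)).sub (_root_.fderiv ℝ f x).hasFDerivAt

lemma taylorRem_zero (f : E → F) (x : E) : taylorRem f x 0 = 0 := by simp [taylorRem]

/-- Dependence of the Taylor remainder on the step. -/
lemma CkbBound.taylorRem_sub_le {f : E → F} {K : ℝ} (hf : CkbBound 2 f K) (x v v' : E) :
    ‖taylorRem f x v - taylorRem f x v'‖ ≤ K * max ‖v‖ ‖v'‖ * ‖v - v'‖ := by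
  refine Convex.norm_image_sub_le_of_norm_hasFDerivWithin_le
    (s := closedBall (0 : E) (max ‖v‖ ‖v'‖)) (𝕜 := ℝ)
    (fun z _ => (hf.hasFDerivAt_taylorRem (k := 1) x z).hasFDerivWithinAt) (fun z hz => ?_)
    (convex_closedBall _ _) (by simp) (by simp)
  have := hf.fderiv.lip (k := 0) (x + z) x
  simp only [add_sub_cancel_left] at this
  exact this.trans (mul_le_mul_of_nonneg_left (by simpa using hz) hf.nonneg)

lemma CkbBound.norm_taylorRem_le {f : E → F} {K : ℝ} (hf : CkbBound 2 f K) (x v : E) :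
    ‖taylorRem f x v‖ ≤ K * ‖v‖ ^ 2 := by
  have := hf.taylorRem_sub_le x v 0
  simp only [taylorRem_zero, sub_zero, norm_zero, norm_nonneg, sup_of_le_left] at this
  rw [sq]; linarith

/-- Dependence of the Taylor remainder on the base point; this is where the third derivative of `f`
is needed. -/
lemma CkbBound.taylorRem_sub_le' {f : E → F} {K : ℝ} (hf : CkbBound 3 f K) (x x' v : E) :
    ‖taylorRem f x v - taylorRem f x' v‖ ≤ K * (‖x - x'‖ * ‖v‖ ^ 2) := by
  have h : ‖(taylorRem f x v - taylorRem f x' v) - (taylorRem f x 0 - taylorRem f x' 0)‖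
      ≤ K * (‖x - x'‖ * ‖v‖) * ‖v - 0‖ := by
    refine Convex.norm_image_sub_le_of_norm_hasFDerivWithin_le
      (f := fun w => taylorRem f x w - taylorRem f x' w)
      (s := closedBall (0 : E) ‖v‖) (𝕜 := ℝ)
      (fun z _ => ((hf.hasFDerivAt_taylorRem (k := 2) x z).sub
        (hf.hasFDerivAt_taylorRem (k := 2) x' z)).hasFDerivWithinAt) (fun z hz => ?_)
      (convex_closedBall _ _) (by simp) (by simp)
    have := hf.fderiv.diff2 x x' z z
    simp only [sub_self, norm_zero, add_zero] at this
    have hz' : ‖z‖ ≤ ‖v‖ := by simpa using hz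
    refine this.trans ?_
    have := hf.nonneg
    gcongr
  simp only [taylorRem_zero, sub_zero] at h
  rw [sq]; linarith

/-- Joint Lipschitz estimate of the Taylor remainder, of second order in the bound `a` of the steps. -/
lemma CkbBound.taylorRem_lip {f : E → F} {K : ℝ} (hf : CkbBound 3 f K) {x x' v v' : E} {a : ℝ}
    (hv : ‖v‖ ≤ a) (hv' : ‖v'‖ ≤ a) :
    ‖taylorRem f x v - taylorRem f x' v'‖ ≤ K * (‖x - x'‖ * a ^ 2 + a * ‖v - v'‖) := by
  have h1 := hf.taylorRem_sub_le' x x' v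
  have h2 := (hf.mono (k' := 2) (by norm_num) le_rfl).taylorRem_sub_le x' v v'
  have e : taylorRem f x v - taylorRem f x' v' = (taylorRem f x v - taylorRem f x' v) +
    (taylorRem f x' v - taylorRem f x' v') := by abel
  rw [e]
  have hK := hf.nonneg
  refine (norm_add_le _ _).trans ((add_le_add h1 h2).trans ?_)
  rw [mul_add, mul_assoc K (max _ _)]
  have := max_le hv hv'
  gcongr

end Ckb

section Step

variable {E : Type*} [NormedAddCommGroup E] [NormedSpace ℝ E] {m : ℕ}

/-- The increment `ξ(x) z + Ξ(x) A` of one step of the second-order scheme. -/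
noncomputable def fA (ξ : Fin m → E → E) (z : Fin m → ℝ) (A : Fin m → Fin m → ℝ) (x : E) : E :=
  (∑ k, z k • ξ k x) + ∑ j, ∑ k, A j k • fderiv ℝ (ξ k) x (ξ j x)

/-- The bound constant for `fA`. -/
noncomputable def fAC (m : ℕ) (K : ℝ) : ℝ := m * K + m * (m * (2 ^ 2 * (K * K)))

lemma xi2_ckb {ξ : Fin m → E → E} {K : ℝ} (hξ : ∀ k, CkbBound 3 (ξ k) K) (j k : Fin m) :
    CkbBound 2 (fun x => fderiv ℝ (ξ k) x (ξ j x)) (2 ^ 2 * (K * K)) :=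
  (hξ k).fderiv.clm_apply ((hξ j).mono (by norm_num) le_rfl)

lemma xi2sum_ckb {ξ : Fin m → E → E} {K : ℝ} (hξ : ∀ k, CkbBound 3 (ξ k) K)
    {A : Fin m → Fin m → ℝ} {a : ℝ} (hA : ∀ j k, |A j k| ≤ a) :
    CkbBound 2 (fun x => ∑ j, ∑ k, A j k • fderiv ℝ (ξ k) x (ξ j x))
      (a * (m * (m * (2 ^ 2 * (K * K))))) := by
  have := ckbBound_sum Finset.univ (fun j _ => ckbBound_sum Finset.univ
    (fun k _ => (xi2_ckb hξ j k).const_smul (A j k) (hA j k)))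
  simp only [Finset.sum_const, Finset.card_univ, Fintype.card_fin, nsmul_eq_mul] at this
  refine this.mono le_rfl (le_of_eq (by ring))

lemma fA_ckb {ξ : Fin m → E → E} {K : ℝ} (hξ : ∀ k, CkbBound 3 (ξ k) K)
    {z : Fin m → ℝ} {A : Fin m → Fin m → ℝ} {θ : ℝ} (hθ : 0 ≤ θ) (hθ1 : θ ≤ 1) (hK : 0 ≤ K)
    (hz : ∀ k, |z k| ≤ θ) (hA : ∀ j k, |A j k| ≤ θ ^ 2) :
    CkbBound 2 (fA ξ z A) (fAC m K * θ) := by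
  have h1 := ckbBound_sum Finset.univ
    (fun k _ => ((hξ k).mono (k' := 2) (by norm_num) le_rfl).const_smul (z k) (hz k))
  simp only [Finset.sum_const, Finset.card_univ, Fintype.card_fin, nsmul_eq_mul] at h1
  refine (h1.add (xi2sum_ckb hξ hA)).mono le_rfl ?_
  have h2 : θ ^ 2 ≤ θ := by nlinarith
  have h3 : 0 ≤ (m * (m * (2 ^ 2 * (K * K))) : ℝ) := by positivity
  unfold fAC
  nlinarith [mul_le_mul_of_nonneg_right h2 h3]

lemma fAC_nonneg (m : ℕ) {K : ℝ} (hK : 0 ≤ K) : 0 ≤ fAC m K := by unfold fAC; positivity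

/-- Algebraic form of the defect of the scheme under Chen's relation: every term is of third
order. -/
lemma defect_eq (ξ : Fin m → E → E) (z1 z2 : Fin m → ℝ)
    (A1 A2 : Fin m → Fin m → ℝ) (x : E) :
    fA ξ z1 A1 x + fA ξ z2 A2 (x + fA ξ z1 A1 x)
      - fA ξ (fun k => z1 k + z2 k) (fun j k => A1 j k + A2 j k + z1 j * z2 k) x
    = (∑ k, z2 k • (taylorRem (ξ k) x (fA ξ z1 A1 x)
        + fderiv ℝ (ξ k) x (∑ j, ∑ l, A1 j l • fderiv ℝ (ξ l) x (ξ j x))))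
      + ((∑ j, ∑ k, A2 j k • fderiv ℝ (ξ k) (x + fA ξ z1 A1 x) (ξ j (x + fA ξ z1 A1 x)))
        - ∑ j, ∑ k, A2 j k • fderiv ℝ (ξ k) x (ξ j x)) := by
  have h1 : ∀ k, taylorRem (ξ k) x (fA ξ z1 A1 x)
        + fderiv ℝ (ξ k) x (∑ j, ∑ l, A1 j l • fderiv ℝ (ξ l) x (ξ j x))
      = ξ k (x + fA ξ z1 A1 x) - ξ k x - ∑ j, z1 j • fderiv ℝ (ξ k) x (ξ j x) := by
    intro k
    have : fderiv ℝ (ξ k) x (fA ξ z1 A1 x) = (∑ j, z1 j • fderiv ℝ (ξ k) x (ξ j x)) +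
        fderiv ℝ (ξ k) x (∑ j, ∑ l, A1 j l • fderiv ℝ (ξ l) x (ξ j x)) := by
      rw [fA, map_add, map_sum]; simp only [map_smul]
    rw [taylorRem, this]; abel
  simp only [h1]
  have e : fA ξ z1 A1 x = (∑ k, z1 k • ξ k x) +
      ∑ j, ∑ k, A1 j k • fderiv ℝ (ξ k) x (ξ j x) := rfl
  generalize fA ξ z1 A1 x = v1 at *
  have e2 : ∑ k, z2 k • ∑ j, z1 j • fderiv ℝ (ξ k) x (ξ j x)
      = ∑ j, ∑ k, (z1 j * z2 k) • fderiv ℝ (ξ k) x (ξ j x) := by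
    rw [Finset.sum_comm]
    refine Finset.sum_congr rfl fun k _ => ?_
    rw [Finset.smul_sum]
    refine Finset.sum_congr rfl fun j _ => ?_
    rw [smul_smul, mul_comm]
  simp only [smul_sub, Finset.sum_sub_distrib, e2, fA, add_smul, Finset.sum_add_distrib]
  linear_combination (norm := abel) (1 : ℤ) • e

/-- Two consecutive steps of the scheme and the single step given by Chen's relation differ by
`O(θ³)`, as functions which are bounded and Lipschitz in the starting point. -/
lemma defect_bound (m : ℕ) {K : ℝ} (hK : 0 ≤ K) : ∃ C : ℝ, 0 ≤ C ∧
    ∀ (E : Type) [NormedAddCommGroup E] [NormedSpace ℝ E] (ξ : Fin m → E → E)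
      (_ : ∀ k, CkbBound 3 (ξ k) K) (z1 z2 : Fin m → ℝ)
      (A1 A2 : Fin m → Fin m → ℝ) (θ : ℝ), 0 ≤ θ → θ ≤ 1 →
      (∀ k, |z1 k| ≤ θ) → (∀ k, |z2 k| ≤ θ) →
      (∀ j k, |A1 j k| ≤ θ ^ 2) → (∀ j k, |A2 j k| ≤ θ ^ 2) →
      ∀ N : E → E, (∀ x, N x = fA ξ z1 A1 x + fA ξ z2 A2 (x + fA ξ z1 A1 x)
        - fA ξ (fun k => z1 k + z2 k) (fun j k => A1 j k + A2 j k + z1 j * z2 k) x) →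
      (∀ x, ‖N x‖ ≤ C * θ ^ 3) ∧ ∀ x x', ‖N x - N x'‖ ≤ C * θ ^ 3 * ‖x - x'‖ := by
  set F := fAC m K with hF
  have hF0 : 0 ≤ F := fAC_nonneg m hK
  set X := (m * (m * (2 ^ 2 * (K * K))) : ℝ) with hX
  have hX0 : 0 ≤ X := by positivity
  set C1 := m * (K * F ^ 2 + 2 ^ 2 * (K * X)) + X * F with hC1
  set C2 := m * (K * (F ^ 2 + F * F) + 2 ^ 2 * (K * X)) + (X * (F + F)) with hC2
  have hC10 : 0 ≤ C1 := by positivity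
  have hC20 : 0 ≤ C2 := by positivity
  refine ⟨C1 + C2, by positivity, fun E _ _ ξ hξ z1 z2 A1 A2 θ hθ hθ1 hz1 hz2 hA1 hA2 N hN => ?_⟩
  have hf1 := fA_ckb hξ hθ hθ1 hK hz1 hA1
  have hq1 := xi2sum_ckb hξ hA1
  have hq2 := xi2sum_ckb hξ hA2
  have hg : ∀ k, CkbBound 2 (fun x => fderiv ℝ (ξ k) x
      (∑ j, ∑ l, A1 j l • fderiv ℝ (ξ l) x (ξ j x))) (2 ^ 2 * (K * (θ ^ 2 * X))) :=
    fun k => (hξ k).fderiv.clm_apply hq1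
  have hθ3 : 0 ≤ θ ^ 3 := by positivity
  simp only [defect_eq] at hN
  set f1 := fA ξ z1 A1 with hf1d
  set Q2 : E → E := fun x => ∑ j, ∑ k, A2 j k • fderiv ℝ (ξ k) x (ξ j x) with hQ2
  set G : Fin m → E → E := fun k x => fderiv ℝ (ξ k) x
      (∑ j, ∑ l, A1 j l • fderiv ℝ (ξ l) x (ξ j x)) with hG
  have hN' : ∀ x, N x = (∑ k, z2 k • (taylorRem (ξ k) x (f1 x) + G k x))
      + (Q2 (x + f1 x) - Q2 x) := hN
  have hv : ∀ x, ‖f1 x‖ ≤ F * θ := hf1.norm_le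
  constructor
  · intro x
    have h1 : ∀ k, ‖z2 k • (taylorRem (ξ k) x (f1 x) + G k x)‖
        ≤ θ * (K * (F * θ) ^ 2 + 2 ^ 2 * (K * (θ ^ 2 * X))) := by
      intro k
      rw [norm_smul]
      refine mul_le_mul (hz2 k) ((norm_add_le _ _).trans (add_le_add ?_ ((hg k).norm_le x)))
        (norm_nonneg _) hθ
      exact (((hξ k).mono (k' := 2) (by norm_num) le_rfl).norm_taylorRem_le x _).trans
        (by gcongr; exact hv x)
    have h2 := norm_sum_le_of_le Finset.univ (fun k _ => h1 k)
    have h3 := hq2.lip (k := 1) (x + f1 x) x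
    rw [add_sub_cancel_left] at h3
    have h4 : θ ^ 2 * X * ‖f1 x‖ ≤ θ ^ 2 * X * (F * θ) := by gcongr; exact hv x
    simp only [Finset.sum_const, Finset.card_univ, Fintype.card_fin, nsmul_eq_mul] at h2
    rw [hN']
    have h5 := norm_add_le (∑ k, z2 k • (taylorRem (ξ k) x (f1 x) + G k x)) (Q2 (x + f1 x) - Q2 x)
    have h6 : 0 ≤ C2 * θ ^ 3 := by positivity
    have h7 : C1 * θ ^ 3 = m * (θ * (K * (F * θ) ^ 2 + 2 ^ 2 * (K * (θ ^ 2 * X)))) +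
      θ ^ 2 * X * (F * θ) := by rw [hC1]; ring
    linarith
  · intro x x'
    have hfl := hf1.lip (k := 1) x x'
    have h1 : ∀ k, ‖z2 k • (taylorRem (ξ k) x (f1 x) + G k x)
        - z2 k • (taylorRem (ξ k) x' (f1 x') + G k x')‖
        ≤ θ * (K * (‖x - x'‖ * (F * θ) ^ 2 + (F * θ) * (F * θ * ‖x - x'‖))
          + 2 ^ 2 * (K * (θ ^ 2 * X)) * ‖x - x'‖) := by
      intro k
      rw [← smul_sub, norm_smul, add_sub_add_comm]
      refine mul_le_mul (hz2 k) ((norm_add_le _ _).trans (add_le_add ?_ ((hg k).lip (k := 1) x x')))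
        (norm_nonneg _) hθ
      exact ((hξ k).taylorRem_lip (hv x) (hv x')).trans (by gcongr)
    have h2 := norm_sum_le_of_le Finset.univ (fun k _ => h1 k)
    have h3 := hq2.diff2 x x' (f1 x) (f1 x')
    have h4 : θ ^ 2 * X * (‖x - x'‖ * ‖f1 x‖ + ‖f1 x - f1 x'‖)
        ≤ θ ^ 2 * X * (‖x - x'‖ * (F * θ) + F * θ * ‖x - x'‖) := by gcongr; exact hv x
    simp only [Finset.sum_const, Finset.card_univ, Fintype.card_fin, nsmul_eq_mul] at h2
    rw [hN', hN', add_sub_add_comm, ← Finset.sum_sub_distrib]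
    have h5 := norm_add_le (∑ k, (z2 k • (taylorRem (ξ k) x (f1 x) + G k x)
        - z2 k • (taylorRem (ξ k) x' (f1 x') + G k x')))
      (Q2 (x + f1 x) - Q2 x - (Q2 (x' + f1 x') - Q2 x'))
    have h6 : 0 ≤ C1 * θ ^ 3 * ‖x - x'‖ := by positivity
    have h7 : C2 * θ ^ 3 * ‖x - x'‖ =
      m * (θ * (K * (‖x - x'‖ * (F * θ) ^ 2 + (F * θ) * (F * θ * ‖x - x'‖))
          + 2 ^ 2 * (K * (θ ^ 2 * X)) * ‖x - x'‖)) +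
      θ ^ 2 * X * (‖x - x'‖ * (F * θ) + F * θ * ‖x - x'‖) := by rw [hC2]; ring
    linarith

end Step

/-! ### Discrete controls and a discrete sewing lemma -/

section Chains

/-- `Chain F i j v`: `v` is the sum of `F` along some strictly increasing chain from `i` to `j`. -/
inductive Chain (F : ℕ → ℕ → ℝ) (i : ℕ) : ℕ → ℝ → Prop
  | refl : Chain F i i 0
  | snoc {j k : ℕ} {v : ℝ} : Chain F i j v → j < k → Chain F i k (v + F j k)

variable {F : ℕ → ℕ → ℝ}

lemma Chain.le {i j : ℕ} {v : ℝ} (h : Chain F i j v) : i ≤ j := by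
  induction h with
  | refl => exact le_rfl
  | snoc _ hlt ih => omega

lemma Chain.trans {i j k : ℕ} {v w : ℝ} (h : Chain F i j v) (h' : Chain F j k w) :
    Chain F i k (v + w) := by
  induction h' with
  | refl => simpa using h
  | snoc _ hlt ih => rw [← add_assoc]; exact ih.snoc hlt

lemma Chain.single {i j : ℕ} (h : i < j) : Chain F i j (F i j) := by
  have := (Chain.refl (F := F) (i := i)).snoc h
  simpa using this

lemma Chain.self {i j : ℕ} {v : ℝ} (h : Chain F i j v) (hij : j = i) : v = 0 := by
  cases h with
  | refl => rfl
  | snoc h1 h2 => have := h1.le; omega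

lemma Chain.succ {i j : ℕ} {v : ℝ} (h : Chain F i j v) (hij : j = i + 1) : v = F i (i + 1) := by
  cases h with
  | refl => omega
  | @snoc j' _ v h1 h2 =>
    have := h1.le
    have e : j' = i := by omega
    rw [h1.self e, e, hij, zero_add]

lemma Chain.exists_seq {i j : ℕ} {v : ℝ} (h : Chain F i j v) :
    ∃ n : ℕ, ∃ u : ℕ → ℕ, Monotone u ∧ u 0 = i ∧ u n = j ∧
      v = ∑ l ∈ Finset.range n, F (u l) (u (l + 1)) := by
  suffices H : ∃ n : ℕ, ∃ u : ℕ → ℕ, Monotone u ∧ u 0 = i ∧ u n = j ∧ (∀ l, u l ≤ j) ∧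
      v = ∑ l ∈ Finset.range n, F (u l) (u (l + 1)) by
    obtain ⟨n, u, h1, h2, h3, -, h4⟩ := H
    exact ⟨n, u, h1, h2, h3, h4⟩
  induction h with
  | refl => exact ⟨0, fun _ => i, monotone_const, rfl, rfl, fun _ => le_rfl, by simp⟩
  | @snoc j k v h1 h2 ih =>
    obtain ⟨n, u, hu, h0, hn, hle, hv⟩ := ih
    refine ⟨n + 1, fun l => if l ≤ n then u l else k, ?_, by simpa using h0, by simp, ?_, ?_⟩
    · intro a b hab
      dsimp only
      split_ifs with ha hb
      · exact hu hab
      · exact (hle a).trans h2.le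
      · omega
      · exact le_rfl
    · intro l
      dsimp only
      split_ifs
      · exact (hle l).trans h2.le
      · exact le_rfl
    · rw [Finset.sum_range_succ]
      have : ∑ l ∈ Finset.range n, F (if l ≤ n then u l else k) (if l + 1 ≤ n then u (l + 1) else k)
          = ∑ l ∈ Finset.range n, F (u l) (u (l + 1)) := by
        refine Finset.sum_congr rfl fun l hl => ?_
        have := Finset.mem_range.1 hl
        rw [if_pos (by omega), if_pos (by omega)]
      rw [this, ← hv]
      simp [hn]

/-- A discrete control: nonnegative, zero on the diagonal and superadditive. -/
structure DControl (W : ℕ → ℕ → ℝ) : Prop where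
  diag : ∀ i, W i i = 0
  nonneg : ∀ i j, i ≤ j → 0 ≤ W i j
  super : ∀ i j k, i ≤ j → j ≤ k → W i j + W j k ≤ W i k

lemma DControl.mono {W : ℕ → ℕ → ℝ} (hW : DControl W) {i i' j j' : ℕ} (h1 : i ≤ i') (h2 : i' ≤ j')
    (h3 : j' ≤ j) : W i' j' ≤ W i j := by
  have a := hW.super i i' j h1 (h2.trans h3)
  have b := hW.super i' j' j h2 h3
  have c := hW.nonneg i i' h1
  have d := hW.nonneg j' j h3
  linarith

/-- The supremum of the sums of `F` along chains is a superadditive majorant of `F`. -/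
lemma exists_dcontrol (hF : ∀ i j, i ≤ j → 0 ≤ F i j) (hF0 : ∀ i, F i i = 0) {B : ℝ}
    (hB : ∀ i j v, Chain F i j v → v ≤ B) :
    ∃ W : ℕ → ℕ → ℝ, DControl W ∧ (∀ i j, i ≤ j → F i j ≤ W i j) ∧
      (∀ i, W i (i + 1) = F i (i + 1)) ∧ ∀ i j, i ≤ j → W i j ≤ B := by
  have hbdd : ∀ i j, BddAbove {v | Chain F i j v} := fun i j => ⟨B, fun v hv => hB i j v hv⟩
  have hex : ∀ i j, i ≤ j → Chain F i j (F i j) := by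
    intro i j hij
    rcases hij.eq_or_lt with rfl | h
    · rw [hF0]; exact Chain.refl
    · exact Chain.single h
  have hle : ∀ i j, i ≤ j → F i j ≤ sSup {v | Chain F i j v} := fun i j hij =>
    le_csSup (hbdd i j) (hex i j hij)
  refine ⟨fun i j => sSup {v | Chain F i j v}, ⟨fun i => ?_, fun i j hij => ?_, ?_⟩, hle,
    fun i => ?_, fun i j hij => csSup_le ⟨_, hex i j hij⟩ (fun v hv => hB i j v hv)⟩
  · have : {v | Chain F i i v} = {0} := by
      ext v; exact ⟨fun h => Chain.self h rfl, fun h => by rw [h]; exact Chain.refl⟩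
    simp [this]
  · exact (hF i j hij).trans (hle i j hij)
  · intro i j k hij hjk
    rw [← le_sub_iff_add_le]
    refine csSup_le ⟨_, hex i j hij⟩ fun v hv => ?_
    rw [le_sub_comm]
    refine csSup_le ⟨_, hex j k hjk⟩ fun w hw => ?_
    rw [le_sub_iff_add_le, add_comm]
    exact le_csSup (hbdd i k) (Chain.trans hv hw)
  · have : {v | Chain F i (i + 1) v} = {F i (i + 1)} := by
      ext v; exact ⟨fun h => Chain.succ h rfl, fun h => by rw [h]; exact Chain.single (by omega)⟩
    simp [this]

end Chains

section Sewing

variable {F : Type*} [NormedAddCommGroup F]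

lemma rpow_half_mul {α W : ℝ} (hW : 0 ≤ W) : (W / 2) ^ α = (1 / 2 : ℝ) ^ α * W ^ α := by
  rw [← Real.mul_rpow (by norm_num) hW]; congr 1; ring

/-- Discrete sewing lemma. The pair `(A, δ)` has to satisfy a smallness condition; the proof
splits `[i, j]` at the last index where half of the control has not been used yet. -/
lemma sewing {Γ : ℕ → ℕ → F} {W X : ℕ → ℕ → ℝ} {α C A δ : ℝ} {a b : ℕ} (hα : 0 < α)
    (hC : 0 ≤ C) (hA : 0 ≤ A)
    (hcond : A * (1 / 2 : ℝ) ^ α + C * (A * δ ^ α + 2) ≤ A)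
    (hW : DControl W) (hX : DControl X) (hδ : W a b ≤ δ)
    (h0 : ∀ i, Γ i i = 0) (h1 : ∀ i, Γ i (i + 1) = 0)
    (hΓ : ∀ i j k, a ≤ i → i ≤ j → j ≤ k → k ≤ b →
      ‖Γ i k - Γ i j - Γ j k‖ ≤ C * W i k ^ α * (‖Γ i j‖ + X i k)) :
    ∀ n i j, a ≤ i → i ≤ j → j ≤ b → j - i ≤ n → ‖Γ i j‖ ≤ A * X i j * W i j ^ α := by
  intro n
  induction n with
  | zero =>
    intro i j _ hij _ hn
    have : i = j := by omega
    subst this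
    rw [h0, hX.diag]; simp
  | succ n ih =>
    intro i j hi hij hj hn
    rcases hij.eq_or_lt with rfl | hlt
    · rw [h0, hX.diag]; simp
    have hw0 := hW.nonneg i j hij
    have hx0 := hX.nonneg i j hij
    classical
    -- the last index before `j` where at most half of the control is used
    obtain ⟨l, hil, hlj, hWl, hWr⟩ : ∃ l, i ≤ l ∧ l < j ∧ W i l ≤ W i j / 2 ∧
        W (l + 1) j ≤ W i j / 2 := by
      set P : ℕ → Prop := fun l => i ≤ l ∧ W i l ≤ W i j / 2
      have hPi : P i := ⟨le_rfl, by rw [hW.diag]; linarith⟩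
      set l := Nat.findGreatest P (j - 1) with hl
      have hPl : P l := Nat.findGreatest_spec (P := P) (m := i) (by omega) hPi
      have hlj : l ≤ j - 1 := Nat.findGreatest_le _
      refine ⟨l, hPl.1, by omega, hPl.2, ?_⟩
      by_cases hlast : l + 1 = j
      · rw [hlast, hW.diag]; linarith
      · have hnP : ¬ P (l + 1) := Nat.findGreatest_is_greatest (P := P) (n := j - 1)
          (by omega) (by omega)
        have : W i j / 2 < W i (l + 1) := by
          by_contra hcon
          exact hnP ⟨by have := hPl.1; omega, not_lt.1 hcon⟩
        have := hW.super i (l + 1) j (by have := hPl.1; omega) (by omega)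
        linarith
    have e1 : Γ i j = Γ i l + Γ (l + 1) j + (Γ i j - Γ i l - Γ l j)
        + (Γ l j - Γ l (l + 1) - Γ (l + 1) j) := by rw [h1]; abel
    set H := (1 / 2 : ℝ) ^ α with hH
    have hH0 : 0 ≤ H := by positivity
    have hwα : 0 ≤ W i j ^ α := by positivity
    have hxl := hX.nonneg i l hil
    have hxr := hX.nonneg (l + 1) j (by omega)
    have hxlr : X i l + X (l + 1) j ≤ X i j := by
      have := hX.super i l j hil hlj.le
      have := hX.mono (i := l) (i' := l + 1) (j' := j) (j := j) (by omega) (by omega) le_rfl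
      linarith
    have b1 : ‖Γ i l‖ ≤ A * X i l * (H * W i j ^ α) := by
      refine (ih i l hi hil (by omega) (by omega)).trans ?_
      rw [← rpow_half_mul hw0]
      have := hW.nonneg i l hil
      gcongr
    have b2 : ‖Γ (l + 1) j‖ ≤ A * X (l + 1) j * (H * W i j ^ α) := by
      refine (ih (l + 1) j (by omega) (by omega) hj (by omega)).trans ?_
      rw [← rpow_half_mul hw0]
      have := hW.nonneg (l + 1) j (by omega)
      gcongr
    have hWδ : W i j ^ α ≤ δ ^ α := by
      have : W i j ≤ δ := (hW.mono hi hij hj).trans hδ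
      gcongr
    have b1' : ‖Γ i l‖ ≤ A * X i j * δ ^ α := by
      refine (ih i l hi hil (by omega) (by omega)).trans ?_
      have h1 : W i l ^ α ≤ δ ^ α := by
        have : W i l ≤ δ := (hW.mono hi hil (by omega)).trans hδ
        have := hW.nonneg i l hil
        gcongr
      have h2 : X i l ≤ X i j := by linarith
      have h3 : 0 ≤ W i l ^ α := Real.rpow_nonneg (hW.nonneg i l hil) _
      gcongr
    have b3 : ‖Γ i j - Γ i l - Γ l j‖ ≤ C * W i j ^ α * (A * X i j * δ ^ α + X i j) :=
      (hΓ i l j hi hil hlj.le hj).trans (by gcongr)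
    have b4 : ‖Γ l j - Γ l (l + 1) - Γ (l + 1) j‖ ≤ C * W i j ^ α * X i j := by
      refine (hΓ l (l + 1) j (by omega) (by omega) (by omega) hj).trans ?_
      rw [h1, norm_zero, zero_add]
      have h2 : W l j ≤ W i j := hW.mono hil hlj.le le_rfl
      have h3 : X l j ≤ X i j := hX.mono hil hlj.le le_rfl
      have h4 := hW.nonneg l j hlj.le
      have h5 := hX.nonneg l j hlj.le
      gcongr
    have hxw : 0 ≤ X i j * W i j ^ α := by positivity
    have key : A * (X i l + X (l + 1) j) * (H * W i j ^ α) ≤ A * X i j * (H * W i j ^ α) := by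
      gcongr
    have hc2 := mul_le_mul_of_nonneg_right hcond hxw
    rw [e1]
    have t1 := norm_add₃_le (a := Γ i l + Γ (l + 1) j) (b := Γ i j - Γ i l - Γ l j)
      (c := Γ l j - Γ l (l + 1) - Γ (l + 1) j)
    have t2 := norm_add_le (Γ i l) (Γ (l + 1) j)
    linarith

lemma small_rpow {α : ℝ} (hα : 0 < α) (M : ℝ) {ε : ℝ} (hε : 0 < ε) :
    ∃ δ : ℝ, 0 < δ ∧ ∀ x, 0 ≤ x → x ≤ δ → M * x ^ α ≤ ε := by
  have h : Tendsto (fun x : ℝ => M * x ^ α) (𝓝 0) (𝓝 (M * 0 ^ α)) :=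
    ((Real.continuousAt_rpow_const 0 α (Or.inr hα.le)).tendsto).const_mul M
  rw [Real.zero_rpow hα.ne', mul_zero] at h
  obtain ⟨δ, hδ, h⟩ := Metric.eventually_nhds_iff.1 (h.eventually (gt_mem_nhds hε))
  refine ⟨δ / 2, by positivity, fun x hx hxd => (h ?_).le⟩
  rw [Real.dist_eq, sub_zero, abs_of_nonneg hx]; linarith

/-- Constants for which the smallness condition of `sewing` holds. They exist because `2⁻ᵅ < 1`. -/
lemma sewing_const {α C : ℝ} (hα : 0 < α) (hC : 0 ≤ C) : ∃ A δ : ℝ, 0 ≤ A ∧ 0 < δ ∧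
    ∀ δ' : ℝ, 0 ≤ δ' → δ' ≤ δ → A * (1 / 2 : ℝ) ^ α + C * (A * δ' ^ α + 2) ≤ A := by
  set H := (1 / 2 : ℝ) ^ α with hH
  have hH1 : H < 1 := Real.rpow_lt_one (by norm_num) (by norm_num) hα
  have hp : 0 < 1 - H := by linarith
  obtain ⟨δ, hδ, h⟩ := small_rpow hα (4 * C / (1 - H)) one_pos
  refine ⟨4 * C / (1 - H), δ, by positivity, hδ, fun x hx hxd => ?_⟩
  have h1 := h x hx hxd
  have h2 : 4 * C / (1 - H) * (1 - H) = 4 * C := by field_simp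
  have := mul_le_mul_of_nonneg_left h1 hC
  nlinarith

end Sewing

/-! ### Stability of the discrete scheme -/

section Stability

/-- Two-parameter family of increments `f i j`, controlled by `W`, which is almost a flow:
the defect of the flow property is of order `W ^ (3 / p) `. -/
structure AlmostFlow {E : Type*} [NormedAddCommGroup E] [NormedSpace ℝ E]
    (p c C : ℝ) (f : ℕ → ℕ → E → E) (W : ℕ → ℕ → ℝ) : Prop where
  ctrl : DControl W
  ckb : ∀ i j, i ≤ j → W i j ≤ 1 → CkbBound 2 (f i j) (c * W i j ^ (1 / p))
  defect : ∀ i j k, i ≤ j → j ≤ k → W i k ≤ 1 → ∀ x,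
    ‖f i j x + f j k (x + f i j x) - f i k x‖ ≤ C * W i k ^ (3 / p)
  defect_lip : ∀ i j k, i ≤ j → j ≤ k → W i k ≤ 1 → ∀ x x',
    ‖(f i j x + f j k (x + f i j x) - f i k x) - (f i j x' + f j k (x' + f i j x') - f i k x')‖
      ≤ C * W i k ^ (3 / p) * ‖x - x'‖

/-- Sums of nonnegative weights are additive, hence a control. -/
lemma dcontrol_sum {v : ℕ → ℝ} (hv : ∀ l, 0 ≤ v l) :
    DControl (fun i j => ∑ l ∈ Finset.Ico i j, v l) where
  diag i := by simp
  nonneg i j _ := Finset.sum_nonneg fun l _ => hv l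
  super i j k h1 h2 := (Finset.sum_Ico_consecutive v h1 h2).le

/-- Propagation of a local estimate, valid on windows of control at most `δ`, to all windows of
control at most `n δ`. One step between two windows may cost as much as a window, whence `16 = 4²`. -/
lemma window {W : ℕ → ℕ → ℝ} (hW : DControl W) {δ k : ℝ} (hδ : 0 ≤ δ) (hk : 0 ≤ k)
    (hstep : ∀ i, W i (i + 1) ≤ δ) {a : ℕ → ℝ} (ha0 : ∀ i, 0 ≤ a i)
    (ha : ∀ i j, i ≤ j → W i j ≤ δ → a j ≤ 4 * a i + k) (N : ℕ) :
    ∀ n : ℕ, ∀ i, i ≤ N → W i N ≤ n * δ → a N ≤ 16 ^ (n + 1) * (a i + k) := by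
  intro n
  induction n with
  | zero =>
    intro i hi hn
    have := ha i N hi (by simp at hn; linarith)
    have := ha0 i
    norm_num; linarith
  | succ n ih =>
    intro i hi hn
    classical
    set P : ℕ → Prop := fun l => i ≤ l ∧ W i l ≤ δ
    have hPi : P i := ⟨le_rfl, by rw [hW.diag]; exact hδ⟩
    set l := Nat.findGreatest P N with hl
    have hPl : P l := Nat.findGreatest_spec (P := P) (m := i) hi hPi
    have hlN : l ≤ N := Nat.findGreatest_le _
    have h1 := ha i l hPl.1 hPl.2
    have hai := ha0 i
    have hp : (1 : ℝ) ≤ 16 ^ (n + 1) := one_le_pow₀ (by norm_num)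
    rcases hlN.eq_or_lt with h | h
    · rw [h] at h1
      have : (1 : ℝ) ≤ 16 ^ (n + 1) := hp
      rw [pow_succ]; nlinarith
    · have hnP : ¬ P (l + 1) := Nat.findGreatest_is_greatest (P := P) (n := N) (by omega) (by omega)
      have hgt : δ < W i (l + 1) := by
        by_contra hcon
        exact hnP ⟨by have := hPl.1; omega, not_lt.1 hcon⟩
      have := hW.super i (l + 1) N (by have := hPl.1; omega) h
      push_cast at hn
      have h2 := ih (l + 1) h (by linarith)
      have h3 := ha l (l + 1) (by omega) (hstep l)
      have h4 : a (l + 1) + k ≤ 16 * (a i + k) := by linarith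
      calc a N ≤ 16 ^ (n + 1) * (a (l + 1) + k) := h2
        _ ≤ 16 ^ (n + 1) * (16 * (a i + k)) := by gcongr
        _ = _ := by ring

/-- Local stability of perturbed orbits of an almost flow. Sewing the germ
`Y j - Y i - f i j (Y i)` bounds the displacement of an orbit, and sewing the difference of two such
germs bounds the distance of two orbits by the initial distance and the difference of the
perturbations. -/
lemma stability {p : ℝ} (hp2 : 2 ≤ p) (hp3 : p < 3) {c C : ℝ} (hc : 0 ≤ c) (hC : 0 ≤ C) :
    ∃ M δ : ℝ, 0 ≤ M ∧ 0 < δ ∧ δ ≤ 1 ∧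
    ∀ (E : Type) [NormedAddCommGroup E] [NormedSpace ℝ E] (f : ℕ → ℕ → E → E) (W : ℕ → ℕ → ℝ),
      AlmostFlow p c C f W → ∀ (Y v : ℕ → E), (∀ j, Y (j + 1) = Y j + f j (j + 1) (Y j) + v j) →
      (∀ i j, i ≤ j → ∑ l ∈ Finset.Ico i j, ‖v l‖ ≤ W i j) →
      (∀ i j, i ≤ j → W i j ≤ δ → ‖Y j - Y i‖ ≤ M) ∧
      ∀ (y u : ℕ → E), (∀ j, y (j + 1) = y j + f j (j + 1) (y j) + u j) →
        ∀ i j, i ≤ j → W i j ≤ δ → ‖Y j - y j‖ ≤ 4 * ‖Y i - y i‖ +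
          4 * ∑ l ∈ Finset.Ico i j, ‖v l - u l‖ := by
  have hp0 : 0 < p := by linarith
  set α := 3 / p - 1 with hα
  have hα0 : 0 < α := by rw [hα, sub_pos, lt_div_iff₀ hp0]; linarith
  have hα1 : α ≤ 1 / p := by
    rw [hα, sub_le_iff_le_add, div_add_one hp0.ne']
    gcongr; linarith
  obtain ⟨A, δ1, hA, hδ1, hcond1⟩ := sewing_const (α := α) (C := c + C) hα0 (by positivity)
  set C2 := c * ((1 + c) * 2) + c + C with hC2
  have hC20 : 0 ≤ C2 := by positivity
  obtain ⟨A2, δ2, hA2, hδ2, hcond2⟩ := sewing_const (α := α) (C := C2) hα0 hC20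
  obtain ⟨δ3, hδ3, hs3⟩ := small_rpow hα0 A one_pos
  obtain ⟨δ4, hδ4, hs4⟩ := small_rpow hα0 A2 (ε := 1 / 4) (by norm_num)
  obtain ⟨δ5, hδ5, hs5⟩ := small_rpow (α := 1 / p) (by positivity) c (ε := 1 / 4) (by norm_num)
  set δ := min 1 (min δ1 (min δ2 (min δ3 (min δ4 δ5)))) with hδ
  have hδ0 : 0 < δ := by positivity
  have hδle1 : δ ≤ 1 := min_le_left _ _
  have hδa : δ ≤ δ1 := (min_le_right _ _).trans (min_le_left _ _)
  have hδb : δ ≤ δ2 := (min_le_right _ _).trans ((min_le_right _ _).trans (min_le_left _ _))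
  have hδc : δ ≤ δ3 := (min_le_right _ _).trans ((min_le_right _ _).trans
    ((min_le_right _ _).trans (min_le_left _ _)))
  have hδd : δ ≤ δ4 := (min_le_right _ _).trans ((min_le_right _ _).trans
    ((min_le_right _ _).trans ((min_le_right _ _).trans (min_le_left _ _))))
  have hδe : δ ≤ δ5 := (min_le_right _ _).trans ((min_le_right _ _).trans
    ((min_le_right _ _).trans ((min_le_right _ _).trans (min_le_right _ _))))
  clear_value δ
  refine ⟨3, δ, by norm_num, hδ0, hδle1, fun E _ _ f W hf Y v hY hv => ?_⟩
  have hW := hf.ctrl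
  have hfdiag : ∀ i x, f i i x = 0 := by
    intro i x
    have := (hf.ckb i i le_rfl (by rw [hW.diag]; norm_num)).norm_le x
    rw [hW.diag, Real.zero_rpow (by positivity), mul_zero] at this
    exact norm_le_zero_iff.1 this
  -- elementary comparisons of powers of the control
  have hpw : ∀ w : ℝ, 0 ≤ w → w ≤ 1 → w ^ (1 / p) ≤ w ^ α := by
    intro w h0 h1
    rcases h0.eq_or_lt with rfl | h
    · rw [Real.zero_rpow (by positivity), Real.zero_rpow hα0.ne']
    · exact Real.rpow_le_rpow_of_exponent_ge h h1 hα1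
  have hpw3 : ∀ w : ℝ, 0 ≤ w → w ^ (3 / p) = w ^ α * w := by
    intro w h0
    rcases h0.eq_or_lt with rfl | h
    · rw [Real.zero_rpow (by positivity), mul_zero]
    · rw [hα, Real.rpow_sub_one h.ne']; field_simp
  have hθ : ∀ i j k, i ≤ j → j ≤ k → W i k ≤ 1 → W j k ^ (1 / p) ≤ W i k ^ α := by
    intro i j k h1 h2 h3
    have h4 := hW.mono h1 h2 le_rfl
    have h5 := hW.nonneg j k h2
    refine (hpw _ h5 (h4.trans h3)).trans ?_
    gcongr
  -- expansion of the perturbed orbit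
  have hexp : ∀ i j, i ≤ j → W i j ≤ δ → ‖Y j - (Y i + f i j (Y i))‖ ≤ 2 * W i j := by
    intro i j hij hwij
    set Γ : ℕ → ℕ → E := fun i j => Y j - Y i - f i j (Y i) - ∑ l ∈ Finset.Ico i j, v l with hΓ
    have hsw := sewing (Γ := Γ) (W := W) (X := W) (α := α) (C := c + C) (A := A) (δ := δ)
      (a := i) (b := j) hα0 (by positivity) hA (hcond1 δ hδ0.le hδa) hW hW hwij
      (fun i => by simp [hΓ, hfdiag]) (fun i => by simp [hΓ, hY i]; abel) ?_ (j - i) i j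
      le_rfl hij le_rfl le_rfl
    · have e : Y j - (Y i + f i j (Y i)) = Γ i j + ∑ l ∈ Finset.Ico i j, v l := by
        simp only [hΓ]; abel
      rw [e]
      have h1 := norm_add_le (Γ i j) (∑ l ∈ Finset.Ico i j, v l)
      have h2 := (norm_sum_le (Finset.Ico i j) v).trans (hv i j hij)
      have h3 := hW.nonneg i j hij
      have h4 := hs3 (W i j) h3 (hwij.trans hδc)
      have h5 := mul_le_mul_of_nonneg_right h4 h3
      linarith
    · intro i' j' k' h1 h2 h3 h4
      have hw1 : W i' k' ≤ 1 := (hW.mono h1 (h2.trans h3) h4).trans (hwij.trans hδle1)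
      have hw0 := hW.nonneg i' k' (h2.trans h3)
      have hwj := hW.mono (i := i') (i' := j') (j' := k') (j := k') h2 h3 le_rfl
      have hwj2 := hW.mono (i := i') (i' := i') (j' := j') (j := k') le_rfl h2 h3
      have e : Γ i' k' - Γ i' j' - Γ j' k' =
          (f j' k' (Y j') - f j' k' (Y i' + f i' j' (Y i')))
          + (f i' j' (Y i') + f j' k' (Y i' + f i' j' (Y i')) - f i' k' (Y i')) := by
        simp only [hΓ, ← Finset.sum_Ico_consecutive v h2 h3]; abel
      have e2 : Y j' - (Y i' + f i' j' (Y i')) = Γ i' j' + ∑ l ∈ Finset.Ico i' j', v l := by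
        simp only [hΓ]; abel
      have b1 := (hf.ckb j' k' h3 (hwj.trans hw1)).lip (k := 1) (Y j') (Y i' + f i' j' (Y i'))
      have b2 := hf.defect i' j' k' h2 h3 hw1 (Y i')
      rw [e2] at b1
      have b3 : ‖Γ i' j' + ∑ l ∈ Finset.Ico i' j', v l‖ ≤ ‖Γ i' j'‖ + W i' k' :=
        (norm_add_le _ _).trans (add_le_add le_rfl
          (((norm_sum_le _ _).trans (hv i' j' h2)).trans hwj2))
      rw [hpw3 _ hw0] at b2
      rw [e]
      refine (norm_add_le _ _).trans ((add_le_add b1 b2).trans ?_)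
      have b4 := hθ i' j' k' h2 h3 hw1
      have hwα : 0 ≤ W i' k' ^ α := by positivity
      calc c * W j' k' ^ (1 / p) * ‖Γ i' j' + ∑ l ∈ Finset.Ico i' j', v l‖
            + C * (W i' k' ^ α * W i' k')
          ≤ c * W i' k' ^ α * (‖Γ i' j'‖ + W i' k') + C * (W i' k' ^ α * (‖Γ i' j'‖ + W i' k')) := by
            have := norm_nonneg (Γ i' j')
            gcongr
            linarith
        _ = _ := by ring
  refine ⟨fun i j hij hwij => ?_, fun y u hy => ?_⟩
  · have h1 := hexp i j hij hwij
    have hw0 := hW.nonneg i j hij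
    have h2 := (hf.ckb i j hij (hwij.trans hδle1)).norm_le (Y i)
    have h3 := hs3 (W i j) hw0 (hwij.trans hδc)
    have e : Y j - Y i = (Y j - (Y i + f i j (Y i))) + f i j (Y i) := by abel
    have h4 := norm_add_le (Y j - (Y i + f i j (Y i))) (f i j (Y i))
    rw [← e] at h4
    have h5 := hs5 (W i j) hw0 (hwij.trans hδe)
    linarith
  · intro a b hab hwab
    obtain ⟨i0, hi0, hmax⟩ := Finset.exists_max_image (Finset.Icc a b) (fun i => ‖Y i - y i‖)
      ⟨a, Finset.mem_Icc.2 ⟨le_rfl, hab⟩⟩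
    rw [Finset.mem_Icc] at hi0
    set M := ‖Y i0 - y i0‖ with hM
    have hM0 : 0 ≤ M := norm_nonneg _
    have hmax' : ∀ i, a ≤ i → i ≤ b → ‖Y i - y i‖ ≤ M := fun i h1 h2 =>
      hmax i (Finset.mem_Icc.2 ⟨h1, h2⟩)
    set κ : ℕ → ℕ → ℝ := fun i j => ∑ l ∈ Finset.Ico i j, ‖v l - u l‖ with hκ
    have hκc : DControl κ := dcontrol_sum fun l => norm_nonneg _
    set X : ℕ → ℕ → ℝ := fun i j => κ i j + M * W i j with hX
    have hXc : DControl X := by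
      refine ⟨fun i => by simp [hX, hκc.diag, hW.diag], fun i j h => ?_, fun i j k h1 h2 => ?_⟩
      · have := hκc.nonneg i j h
        have := hW.nonneg i j h
        positivity
      · have h3 := hκc.super i j k h1 h2
        have h4 := mul_le_mul_of_nonneg_left (hW.super i j k h1 h2) hM0
        simp only [hX]; linarith
    set Γ : ℕ → ℕ → E := fun i j => (Y j - y j) - ((Y i + f i j (Y i)) - (y i + f i j (y i)))
      - ∑ l ∈ Finset.Ico i j, (v l - u l) with hΓ
    have hsw := sewing (Γ := Γ) (W := W) (X := X) (α := α) (C := C2) (A := A2) (δ := δ)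
      (a := a) (b := b) hα0 hC20 hA2 (hcond2 δ hδ0.le hδb) hW hXc hwab
      (fun i => by simp [hΓ, hfdiag]) (fun i => by simp [hΓ, hY i, hy i]; abel) ?_ (b - a)
    · have hest : ∀ j, a ≤ j → j ≤ b → ‖Y j - y j‖ ≤ 5 / 4 * ‖Y a - y a‖
          + 5 / 4 * κ a b + 1 / 4 * M := by
        intro j haj hjb
        have g1 := hsw a j le_rfl haj hjb (by omega)
        have hwj : W a j ≤ δ := (hW.mono le_rfl haj hjb).trans hwab
        have hw0 := hW.nonneg a j haj
        have g2 := hs4 (W a j) hw0 (hwj.trans hδd)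
        have g3 := hs5 (W a j) hw0 (hwj.trans hδe)
        have g4 := (hf.ckb a j haj (hwj.trans hδle1)).lip (k := 1) (Y a) (y a)
        have e : Y j - y j = Γ a j + ((Y a - y a) + (f a j (Y a) - f a j (y a)))
            + ∑ l ∈ Finset.Ico a j, (v l - u l) := by simp only [hΓ]; abel
        have g5 := norm_add₃_le (a := Γ a j) (b := (Y a - y a) + (f a j (Y a) - f a j (y a)))
          (c := ∑ l ∈ Finset.Ico a j, (v l - u l))
        rw [← e] at g5
        have g6 := norm_add_le (Y a - y a) (f a j (Y a) - f a j (y a))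
        have g7 : ‖∑ l ∈ Finset.Ico a j, (v l - u l)‖ ≤ κ a j := norm_sum_le _ _
        have g8 : κ a j ≤ κ a b := hκc.mono le_rfl haj hjb
        have g9 := hXc.nonneg a j haj
        have g10 : A2 * X a j * W a j ^ α ≤ 1 / 4 * X a j := by
          calc A2 * X a j * W a j ^ α = A2 * W a j ^ α * X a j := by ring
            _ ≤ _ := by gcongr
        have g11 : X a j ≤ κ a b + M := by
          have : M * W a j ≤ M * 1 := by gcongr; exact hwj.trans hδle1
          simp only [hX]; linarith
        have g12 := mul_le_mul_of_nonneg_right g3 (norm_nonneg (Y a - y a))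
        linarith
      have g1 := hest i0 hi0.1 hi0.2
      have g2 := hest b hab le_rfl
      have g3 := hκc.nonneg a b hab
      have g4 := norm_nonneg (Y a - y a)
      rw [← hM] at g1
      have e : ∑ l ∈ Finset.Ico a b, ‖v l - u l‖ = κ a b := rfl
      rw [e]
      linarith
    · intro i j k h1 h2 h3 h4
      have hw1 : W i k ≤ 1 := (hW.mono h1 (h2.trans h3) h4).trans (hwab.trans hδle1)
      have hw0 := hW.nonneg i k (h2.trans h3)
      have hwj := hW.mono (i := i) (i' := j) (j' := k) (j := k) h2 h3 le_rfl
      have hwj2 := hW.mono (i := i) (i' := i) (j' := j) (j := k) le_rfl h2 h3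
      have hwδ : W i j ≤ δ := (hW.mono h1 h2 (h3.trans h4)).trans hwab
      have hwij0 := hW.nonneg i j h2
      set P := Y i + f i j (Y i) with hP
      set Q := y i + f i j (y i) with hQ
      have e : Γ i k - Γ i j - Γ j k =
          (f j k (P + (Y j - P)) - f j k P - (f j k (Q + (y j - Q)) - f j k Q))
          + ((f i j (Y i) + f j k P - f i k (Y i)) - (f i j (y i) + f j k Q - f i k (y i))) := by
        simp only [hΓ, ← Finset.sum_Ico_consecutive (fun l => v l - u l) h2 h3,
          add_sub_cancel, hP, hQ]; abel
      have e2 : (Y j - P) - (y j - Q) = Γ i j + ∑ l ∈ Finset.Ico i j, (v l - u l) := by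
        simp only [hΓ, hP, hQ]; abel
      have b1 := (hf.ckb j k h3 (hwj.trans hw1)).diff2 P Q (Y j - P) (y j - Q)
      have b2 := hf.defect_lip i j k h2 h3 hw1 (Y i) (y i)
      rw [e2] at b1
      have b3 : ‖Γ i j + ∑ l ∈ Finset.Ico i j, (v l - u l)‖ ≤ ‖Γ i j‖ + κ i k :=
        (norm_add_le _ _).trans (add_le_add le_rfl
          ((norm_sum_le _ _).trans (hκc.mono le_rfl h2 h3)))
      have b4 := hθ i j k h2 h3 hw1
      have b5 : ‖Y j - P‖ ≤ 2 * W i k := (hexp i j h2 hwδ).trans (by linarith)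
      have b6 : ‖P - Q‖ ≤ (1 + c) * M := by
        have g1 := (hf.ckb i j h2 (hwδ.trans hδle1)).lip (k := 1) (Y i) (y i)
        have g2 : W i j ^ (1 / p) ≤ 1 := Real.rpow_le_one hwij0 (hwδ.trans hδle1) (by positivity)
        have e3 : P - Q = (Y i - y i) + (f i j (Y i) - f i j (y i)) := by
          simp only [hP, hQ]; abel
        have g3 := norm_add_le (Y i - y i) (f i j (Y i) - f i j (y i))
        rw [← e3] at g3
        have g4 := hmax' i h1 (h2.trans (h3.trans h4))
        have g5 : c * W i j ^ (1 / p) * ‖Y i - y i‖ ≤ c * 1 * M := by gcongr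
        linarith
      have b7 := hmax' i h1 (h2.trans (h3.trans h4))
      rw [hpw3 _ hw0] at b2
      rw [e]
      refine (norm_add_le _ _).trans ((add_le_add b1 b2).trans ?_)
      have hwα : 0 ≤ W i k ^ α := by positivity
      have hκ0 := hκc.nonneg i k (h2.trans h3)
      have hΓ0 := norm_nonneg (Γ i j)
      calc c * W j k ^ (1 / p) * (‖P - Q‖ * ‖Y j - P‖
            + ‖Γ i j + ∑ l ∈ Finset.Ico i j, (v l - u l)‖)
            + C * (W i k ^ α * W i k) * ‖Y i - y i‖
          ≤ c * W i k ^ α * (((1 + c) * M) * (2 * W i k) + (‖Γ i j‖ + κ i k))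
            + C * (W i k ^ α * W i k) * M := by gcongr
        _ = W i k ^ α * (c * ((1 + c) * 2) * (M * W i k) + c * (‖Γ i j‖ + κ i k)
            + C * (M * W i k)) := by ring
        _ ≤ W i k ^ α * (c * ((1 + c) * 2) * (‖Γ i j‖ + (κ i k + M * W i k))
            + c * (‖Γ i j‖ + (κ i k + M * W i k))
            + C * (‖Γ i j‖ + (κ i k + M * W i k))) := by
          have : 0 ≤ M * W i k := by positivity
          gcongr <;> linarith
        _ = _ := by simp only [hC2, hX]; ring

/-- Global form of the stability estimate: the constant depends only on the total control. -/
lemma stability_global {p : ℝ} (hp2 : 2 ≤ p) (hp3 : p < 3) {c C : ℝ} (hc : 0 ≤ c) (hC : 0 ≤ C)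
    (B : ℝ) :
    ∃ L δ : ℝ, 0 ≤ L ∧ 0 < δ ∧ δ ≤ 1 ∧
    ∀ (E : Type) [NormedAddCommGroup E] [NormedSpace ℝ E] (f : ℕ → ℕ → E → E) (W : ℕ → ℕ → ℝ),
      AlmostFlow p c C f W → (∀ i, W i (i + 1) ≤ δ) → (∀ j, W 0 j ≤ B) →
      ∀ (Y v : ℕ → E), (∀ j, Y (j + 1) = Y j + f j (j + 1) (Y j) + v j) →
      (∀ i j, i ≤ j → ∑ l ∈ Finset.Ico i j, ‖v l‖ ≤ W i j) →
      (∀ j, ‖Y j - Y 0‖ ≤ L) ∧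
      ∀ (y u : ℕ → E), (∀ j, y (j + 1) = y j + f j (j + 1) (y j) + u j) →
        ∀ j, ‖Y j - y j‖ ≤ L * (‖Y 0 - y 0‖ + ∑ l ∈ Finset.range j, ‖v l - u l‖) := by
  obtain ⟨M, δ, hM, hδ, hδ1, h⟩ := stability hp2 hp3 hc hC
  obtain ⟨n, hn⟩ := exists_nat_ge (B / δ)
  rw [div_le_iff₀ hδ] at hn
  refine ⟨16 ^ (n + 1) * (M + 4), δ, by positivity, hδ, hδ1,
    fun E _ _ f W hf hstep hB Y v hY hv => ?_⟩
  obtain ⟨h1, h2⟩ := h E f W hf Y v hY hv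
  have h16 : (0 : ℝ) < 16 ^ (n + 1) := by positivity
  refine ⟨fun j => ?_, fun y u hy j => ?_⟩
  · have := window hf.ctrl hδ.le hM hstep (a := fun j => ‖Y j - Y 0‖) (fun _ => norm_nonneg _)
      (fun i j hij hw => by
        have g1 := h1 i j hij hw
        have g2 := norm_sub_le_norm_sub_add_norm_sub (Y j) (Y i) (Y 0)
        have g3 := norm_nonneg (Y i - Y 0)
        linarith) j n 0 (Nat.zero_le _) ((hB j).trans hn)
    simp only [sub_self, norm_zero, zero_add] at this
    nlinarith
  · have hk : 0 ≤ ∑ l ∈ Finset.range j, ‖v l - u l‖ := Finset.sum_nonneg fun _ _ => norm_nonneg _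
    -- past the index `j` the error is frozen, so that `window` only sees indices up to `j`
    have := window hf.ctrl hδ.le (k := 4 * ∑ l ∈ Finset.range j, ‖v l - u l‖) (by positivity) hstep
      (a := fun i => if i ≤ j then ‖Y i - y i‖ else 0)
      (fun i => by split_ifs <;> positivity)
      (fun i i' hij hw => by
        by_cases hi' : i' ≤ j
        · rw [if_pos hi', if_pos (hij.trans hi')]
          have g1 := h2 y u hy i i' hij hw
          have g2 : ∑ l ∈ Finset.Ico i i', ‖v l - u l‖ ≤ ∑ l ∈ Finset.range j, ‖v l - u l‖ := by
            refine Finset.sum_le_sum_of_subset_of_nonneg (fun l hl => ?_)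
              (fun _ _ _ => norm_nonneg _)
            rw [Finset.mem_Ico] at hl; rw [Finset.mem_range]; omega
          linarith
        · rw [if_neg hi']
          split_ifs <;> positivity) j n 0 (Nat.zero_le _) ((hB j).trans hn)
    simp only [le_refl, if_true, Nat.zero_le] at this
    have g3 := norm_nonneg (Y 0 - y 0)
    refine this.trans ?_
    rw [mul_assoc]
    gcongr
    nlinarith

end Stability

/-! ### A discrete Osgood lemma -/

section OsgoodLemma

lemma OsgoodModulus.pos {h : ℝ → ℝ} (hh : OsgoodModulus h) {r : ℝ} (hr : 0 < r) : 0 < h r := by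
  have := hh.2.1 (self_mem_Ici) (mem_Ici.2 hr.le) hr
  rwa [hh.2.2.1] at this

lemma OsgoodModulus.nonneg {h : ℝ → ℝ} (hh : OsgoodModulus h) {r : ℝ} (hr : 0 ≤ r) : 0 ≤ h r := by
  rcases hr.eq_or_lt with rfl | hr
  · rw [hh.2.2.1]
  · exact (hh.pos hr).le

lemma OsgoodModulus.mono {h : ℝ → ℝ} (hh : OsgoodModulus h) {r s : ℝ} (hr : 0 ≤ r) (hrs : r ≤ s) :
    h r ≤ h s :=
  hh.2.1.monotoneOn (mem_Ici.2 hr) (mem_Ici.2 (hr.trans hrs)) hrs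

/-- The Osgood condition in the form used below: `∫ₐᶜ dr / h(r)` exceeds any bound for small `a`. -/
lemma OsgoodModulus.exists_lintegral_gt {h : ℝ → ℝ} (hh : OsgoodModulus h) {c B : ℝ} (hc : 0 < c) :
    ∃ a, 0 < a ∧ a < c ∧
      ENNReal.ofReal B < ∫⁻ r in Ioo a c, ENNReal.ofReal (h r)⁻¹ := by
  by_contra! hcon
  set s : ℕ → Set ℝ := fun n => Ioo (c / (n + 2)) c with hs
  have hU : ⋃ n, s n = Ioo 0 c := by
    ext x
    simp only [hs, mem_iUnion, mem_Ioo]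
    constructor
    · rintro ⟨n, h1, h2⟩
      exact ⟨lt_trans (by positivity) h1, h2⟩
    · rintro ⟨h1, h2⟩
      obtain ⟨n, hn⟩ := exists_nat_gt (c / x)
      refine ⟨n, ?_, h2⟩
      rw [div_lt_iff₀ h1] at hn
      rw [div_lt_iff₀ (by positivity)]
      nlinarith
  have hmono : Monotone s := by
    intro n k hnk
    refine Ioo_subset_Ioo_left ?_
    gcongr
  have hle : ∀ n, ∫⁻ r in s n, ENNReal.ofReal (h r)⁻¹ ≤ ENNReal.ofReal B := by
    intro n
    refine hcon _ (by positivity) ?_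
    rw [div_lt_iff₀ (by positivity)]
    have : (0 : ℝ) ≤ n := Nat.cast_nonneg n
    nlinarith
  have h1 := setLIntegral_iUnion_of_directed (μ := volume) (fun r => ENNReal.ofReal (h r)⁻¹)
    (hmono.directed_le)
  rw [hU, hh.2.2.2.2 c hc] at h1
  have h2 : (⊤ : ℝ≥0∞) ≤ ENNReal.ofReal B := by
    rw [h1]; exact iSup_le hle
  exact absurd h2 (by simp)

/-- Discrete version of the Osgood–Bihari lemma: a quantity which satisfies the discrete integral
inequality with a small source remains small. -/
lemma OsgoodModulus.discrete {h : ℝ → ℝ} (hh : OsgoodModulus h) {c B : ℝ} (hc : 0 < c) :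
    ∃ a0, 0 < a0 ∧ ∀ (e γ : ℕ → ℝ) (a : ℝ), 0 < a → a ≤ a0 → (∀ n, 0 ≤ e n) → (∀ n, 0 ≤ γ n) →
      (∀ n, ∑ l ∈ Finset.range n, γ l ≤ B) →
      (∀ n, e n ≤ a + ∑ l ∈ Finset.range n, γ l * h (e l)) → ∀ n, e n ≤ c := by
  obtain ⟨a0, ha0, hac, hint⟩ := hh.exists_lintegral_gt (B := B) hc
  refine ⟨a0, ha0, fun e γ a ha haa he hγ hB hrec => ?_⟩
  set A : ℕ → ℝ := fun n => Nat.rec a (fun k x => x + γ k * h x) n with hA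
  have hA0 : A 0 = a := rfl
  have hAs : ∀ k, A (k + 1) = A k + γ k * h (A k) := fun k => rfl
  have hApos : ∀ k, 0 < A k := by
    intro k
    induction k with
    | zero => exact ha
    | succ k ih => rw [hAs]; have := mul_nonneg (hγ k) (hh.pos ih).le; linarith
  have hAm : ∀ k, A k ≤ A (k + 1) := by
    intro k; rw [hAs]; have := mul_nonneg (hγ k) (hh.pos (hApos k)).le; linarith
  have hAsum : ∀ n, A n = a + ∑ l ∈ Finset.range n, γ l * h (A l) := by
    intro n
    induction n with
    | zero => simp [hA0]
    | succ n ih => rw [hAs, Finset.sum_range_succ, ← add_assoc, ← ih]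
  have heA : ∀ n, e n ≤ A n := by
    intro n
    induction n using Nat.strong_induction_on with
    | _ n ih =>
      refine (hrec n).trans ?_
      rw [hAsum n]
      gcongr with l hl
      · exact hγ l
      · exact hh.mono (he l) (ih l (Finset.mem_range.1 hl))
  have hI : ∀ n, ∫⁻ r in Ioc a (A n), ENNReal.ofReal (h r)⁻¹
      ≤ ENNReal.ofReal (∑ l ∈ Finset.range n, γ l) := by
    intro n
    induction n with
    | zero => simp [hA0]
    | succ n ih =>
      have hsub : Ioc a (A (n + 1)) ⊆ Ioc a (A n) ∪ Ioc (A n) (A (n + 1)) := Ioc_subset_Ioc_union_Ioc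
      refine (lintegral_mono_set hsub).trans ((lintegral_union_le _ _ _).trans ?_)
      rw [Finset.sum_range_succ, ENNReal.ofReal_add (Finset.sum_nonneg fun l _ => hγ l) (hγ n)]
      refine add_le_add ih ?_
      have hp := hh.pos (hApos n)
      calc ∫⁻ r in Ioc (A n) (A (n + 1)), ENNReal.ofReal (h r)⁻¹
          ≤ ∫⁻ r in Ioc (A n) (A (n + 1)), ENNReal.ofReal (h (A n))⁻¹ := by
            refine setLIntegral_mono measurable_const fun r hr => ?_
            gcongr
            exact hh.mono (hApos n).le hr.1.le
        _ = ENNReal.ofReal (h (A n))⁻¹ * ENNReal.ofReal (γ n * h (A n)) := by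
            rw [setLIntegral_const, Real.volume_Ioc, hAs, add_sub_cancel_left]
        _ = ENNReal.ofReal (γ n) := by
            rw [← ENNReal.ofReal_mul (by positivity)]
            congr 1; field_simp
  intro n
  refine (heA n).trans ?_
  by_contra! hgt
  have h1 : Ioo a0 c ⊆ Ioc a (A n) := fun x hx => ⟨haa.trans_lt hx.1, (hx.2.trans hgt).le⟩
  have h2 := (lintegral_mono_set (μ := volume)
    (f := fun r => ENNReal.ofReal (h r)⁻¹) h1).trans (hI n)
  exact absurd (hint.trans_le h2) (not_lt.2 (ENNReal.ofReal_le_ofReal (hB n)))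

end OsgoodLemma

/-! ### Mollification -/

section Mollify

open ContinuousLinearMap in
/-- Mollification at scale `ε` of a bounded continuous field `β`: the size is preserved, the
derivative is bounded by a constant depending on `ε`, and the error is the oscillation of `β` at
scale `ε`. The kernel is common to all fields `β`. -/
lemma exists_mollifier {E : Type*} [NormedAddCommGroup E] [InnerProductSpace ℝ E]
    [FiniteDimensional ℝ E] [MeasurableSpace E] [BorelSpace E] (μ : Measure E) [μ.IsAddHaarMeasure]
    {ε : ℝ} (hε : 0 < ε) :
    ∃ (η : E → ℝ) (C : ℝ), 0 ≤ C ∧ (∀ n : ℕ, ContDiff ℝ n η) ∧ HasCompactSupport η ∧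
      (∀ x, 0 ≤ η x) ∧ (∫ x, η x ∂μ = 1) ∧
      ∀ (β : E → E), Continuous β → ∀ G : ℝ, (∀ x, ‖β x‖ ≤ G) →
        ∃ B : E → E, Differentiable ℝ B ∧ (∀ x, ‖B x‖ ≤ G) ∧ (∀ x, ‖fderiv ℝ B x‖ ≤ C * G) ∧
          (∀ x v, fderiv ℝ B x v = ∫ y, (fderiv ℝ η y v) • β (x - y) ∂μ) ∧
          ∀ ω : ℝ, (∀ x x', ‖x - x'‖ ≤ ε → ‖β x - β x'‖ ≤ ω) → ∀ x, ‖B x - β x‖ ≤ ω := by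
  let φ : ContDiffBump (0 : E) := ⟨ε / 2, ε, by positivity, by linarith⟩
  have hφ : φ.rOut = ε := rfl
  set η : E → ℝ := φ.normed μ with hη
  have hsm : ∀ n : ℕ, ContDiff ℝ n η := fun n => φ.contDiff_normed (n := n)
  have hcs : HasCompactSupport η := φ.hasCompactSupport_normed
  have hDc : Continuous (fderiv ℝ η) := (hsm 1).continuous_fderiv (by simp)
  have hDcs : HasCompactSupport (fderiv ℝ η) := hcs.fderiv (𝕜 := ℝ)
  have hDi : Integrable (fderiv ℝ η) μ := hDc.integrable_of_hasCompactSupport hDcs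
  refine ⟨η, ∫ y, ‖fderiv ℝ η y‖ ∂μ, integral_nonneg fun _ => norm_nonneg _, hsm, hcs,
    fun x => φ.nonneg_normed x, φ.integral_normed, fun β hβ G hG => ?_⟩
  have hloc : LocallyIntegrable β μ := hβ.locallyIntegrable
  have hder := fun x => hcs.hasFDerivAt_convolution_left (lsmul ℝ ℝ : ℝ →L[ℝ] E →L[ℝ] E)
    (hsm 1) hloc x
  have hint : ∀ x, Integrable (fun y => (precompL E (lsmul ℝ ℝ : ℝ →L[ℝ] E →L[ℝ] E)) (fderiv ℝ η y)
      (β (x - y))) μ := fun x =>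
    (hDcs.convolutionExists_left (precompL E (lsmul ℝ ℝ : ℝ →L[ℝ] E →L[ℝ] E)) hDc hloc) x
  refine ⟨convolution η β (lsmul ℝ ℝ) μ, fun x => (hder x).differentiableAt, fun x => ?_,
    fun x => ?_, fun x v => ?_, fun ω hω x => ?_⟩
  · refine (norm_integral_le_of_norm_le (φ.integrable_normed.mul_const G) (ae_of_all _ fun y => ?_)).trans
      (le_of_eq ?_)
    · rw [lsmul_apply, norm_smul, Real.norm_of_nonneg (φ.nonneg_normed y)]
      exact mul_le_mul_of_nonneg_left (hG _) (φ.nonneg_normed y)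
    · rw [integral_mul_const, φ.integral_normed, one_mul]
  · rw [(hder x).fderiv]
    refine (norm_integral_le_of_norm_le (hDi.norm.mul_const G) (ae_of_all _ fun y => ?_)).trans
      (le_of_eq (integral_mul_const _ _))
    refine ContinuousLinearMap.opNorm_le_bound _ (by have := (norm_nonneg _).trans (hG 0); positivity) fun v => ?_
    rw [precompL_apply, lsmul_apply, norm_smul]
    calc ‖fderiv ℝ η y v‖ * ‖β (x - y)‖ ≤ (‖fderiv ℝ η y‖ * ‖v‖) * G := by
          gcongr
          · exact le_opNorm _ _
          · exact hG _
      _ = _ := by ring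
  · rw [(hder x).fderiv]
    unfold convolution
    rw [ContinuousLinearMap.integral_apply (hint x)]
    rfl
  · have := φ.dist_normed_convolution_le (μ := μ) (g := β) (x₀ := x) (ε := ω)
      hβ.aestronglyMeasurable (fun z hz => by
        rw [dist_eq_norm]
        exact hω _ _ (by rw [← dist_eq_norm]; exact (mem_ball.1 hz).le))
    rwa [dist_eq_norm] at this

end Mollify

/-! ### The averaged drift and its mollification -/

section Drift

variable {d : ℕ}

lemma OsgoodDrift.g_nonneg {g h : ℝ → ℝ} {b : ℝ → Ed d → Ed d} (hb : OsgoodDrift g h b) (t : ℝ) :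
    0 ≤ g t := (norm_nonneg _).trans (hb.2.1 t 0)

lemma OsgoodDrift.g_int {g h : ℝ → ℝ} {b : ℝ → Ed d → Ed d} (hb : OsgoodDrift g h b) {s t : ℝ}
    (hs : 0 ≤ s) (hst : s ≤ t) : IntervalIntegrable g volume s t := by
  rw [intervalIntegrable_iff_integrableOn_Ioc_of_le hst]
  refine (hb.1 (t + 1) (by linarith)).mono_set fun x hx => ⟨by linarith [hx.1], by linarith [hx.2]⟩

lemma OsgoodDrift.continuous {g h : ℝ → ℝ} {b : ℝ → Ed d → Ed d} (hb : OsgoodDrift g h b)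
    (hh : OsgoodModulus h) (t : ℝ) : Continuous (b t) := by
  rw [continuous_iff_continuousAt]
  intro x
  rw [ContinuousAt, tendsto_iff_norm_sub_tendsto_zero]
  have h1 : Tendsto (fun y => g t * h ‖y - x‖) (𝓝 x) (𝓝 (g t * h 0)) := by
    refine Tendsto.const_mul _ ?_
    have h2 := (hh.1 0 (by simp)).tendsto
    refine h2.comp (tendsto_nhdsWithin_iff.2 ⟨?_, Eventually.of_forall fun y => norm_nonneg _⟩)
    have : Continuous fun y : Ed d => ‖y - x‖ := by fun_prop
    simpa using this.tendsto x
  rw [hh.2.2.1, mul_zero] at h1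
  exact squeeze_zero (fun _ => norm_nonneg _) (fun y => hb.2.2 t y x) h1

lemma OsgoodDrift.b_int {g h : ℝ → ℝ} {b : ℝ → Ed d → Ed d} (hb : OsgoodDrift g h b)
    (hbm : Measurable (fun q : ℝ × Ed d => b q.1 q.2)) {s t : ℝ}
    (hs : 0 ≤ s) (hst : s ≤ t) (x : Ed d) : IntervalIntegrable (fun r => b r x) volume s t := by
  refine (hb.g_int hs hst).mono_fun ?_ (ae_of_all _ fun r => ?_)
  · exact (hbm.comp (measurable_id.prodMk measurable_const)).aestronglyMeasurable
  · dsimp only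
    rw [Real.norm_of_nonneg (hb.g_nonneg r)]
    exact hb.2.1 r x

lemma OsgoodDrift.norm_int_le {g h : ℝ → ℝ} {b : ℝ → Ed d → Ed d} (hb : OsgoodDrift g h b)
    {s t : ℝ} (hs : 0 ≤ s) (hst : s ≤ t) (x : Ed d) :
    ‖∫ r in s..t, b r x‖ ≤ ∫ r in s..t, g r :=
  intervalIntegral.norm_integral_le_of_norm_le hst (ae_of_all _ fun r _ => hb.2.1 r x)
    (hb.g_int hs hst)

lemma OsgoodDrift.norm_int_sub_le {g h : ℝ → ℝ} {b : ℝ → Ed d → Ed d} (hb : OsgoodDrift g h b)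
    (hbm : Measurable (fun q : ℝ × Ed d => b q.1 q.2))
    {s t : ℝ} (hs : 0 ≤ s) (hst : s ≤ t) (x x' : Ed d) :
    ‖(∫ r in s..t, b r x) - ∫ r in s..t, b r x'‖ ≤ (∫ r in s..t, g r) * h ‖x - x'‖ := by
  rw [← intervalIntegral.integral_sub (hb.b_int hbm hs hst x) (hb.b_int hbm hs hst x'),
    ← intervalIntegral.integral_mul_const]
  exact intervalIntegral.norm_integral_le_of_norm_le hst (ae_of_all _ fun r _ => hb.2.2 r x x')
    ((hb.g_int hs hst).mul_const _)

lemma OsgoodDrift.continuous_int {g h : ℝ → ℝ} {b : ℝ → Ed d → Ed d} (hb : OsgoodDrift g h b)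
    (hh : OsgoodModulus h) (hbm : Measurable (fun q : ℝ × Ed d => b q.1 q.2))
    {s t : ℝ} (hs : 0 ≤ s) (hst : s ≤ t) : Continuous fun x => ∫ r in s..t, b r x := by
  refine intervalIntegral.continuous_of_dominated_interval (bound := g) (fun x => ?_)
    (fun x => ae_of_all _ fun r _ => hb.2.1 r x) (hb.g_int hs hst)
    (ae_of_all _ fun r _ => hb.continuous hh r)
  exact (hbm.comp (measurable_id.prodMk measurable_const)).aestronglyMeasurable

lemma divg_eq_ctr (v : Ed d → Ed d) (x : Ed d) : divg v x = ctr (fderiv ℝ v x) := by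
  unfold divg ctr
  rw [LinearMap.trace_eq_matrix_trace ℝ (EuclideanSpace.basisFun (Fin d) ℝ).toBasis, Matrix.trace]
  refine Finset.sum_congr rfl fun i _ => ?_
  simp [Matrix.diag, LinearMap.toMatrix_apply]

/-- Testing the weak divergence of `b_r` against the shifted mollifier bounds the pairing of `b_r`
with `Dη`. -/
lemma abs_pairing_le {T : ℝ} {b : ℝ → Ed d → Ed d} {divb : ℝ → Ed d → ℝ}
    (hdivb : ∀ t ∈ Icc (0 : ℝ) T, ∀ φ : Ed d → ℝ, IsSmoothFn φ → HasCompactSupport φ →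
      (∫ x, ⟪b t x, gradient φ x⟫) = -∫ x, divb t x * φ x)
    {D : ℝ → ℝ} (hDbd : ∀ t ∈ Icc (0 : ℝ) T, ∀ᵐ x : Ed d, |divb t x| ≤ D t)
    {η : Ed d → ℝ} (hη : ∀ n : ℕ, ContDiff ℝ n η) (hηc : HasCompactSupport η)
    (hη0 : ∀ x, 0 ≤ η x) (hη1 : ∫ x, η x = 1) (x : Ed d) {r : ℝ} (hr : r ∈ Icc (0 : ℝ) T) :
    |∫ z, fderiv ℝ η (x - z) (b r z)| ≤ D r := by
  set φ : Ed d → ℝ := fun z => η (x - z) with hφ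
  have hφs : IsSmoothFn φ := fun k => (hη k).comp (contDiff_const.sub contDiff_id)
  have hφc : HasCompactSupport φ := hηc.comp_homeomorph (Homeomorph.subLeft x)
  have hgrad : ∀ z, ⟪b r z, gradient φ z⟫ = -(fderiv ℝ η (x - z) (b r z)) := by
    intro z
    have h1 : HasFDerivAt φ ((fderiv ℝ η (x - z)).comp (-(ContinuousLinearMap.id ℝ (Ed d)))) z := by
      have h2 : HasFDerivAt (fun z : Ed d => x - z) (-(ContinuousLinearMap.id ℝ (Ed d))) z :=
        (hasFDerivAt_id z).const_sub x
      exact (((hη 1).differentiable (by simp)) (x - z)).hasFDerivAt.comp z h2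
    rw [real_inner_comm, ← InnerProductSpace.toDual_apply_apply (𝕜 := ℝ), gradient,
      LinearIsometryEquiv.apply_symm_apply, h1.fderiv]
    simp
  have h1 := hdivb r hr φ hφs hφc
  simp_rw [hgrad] at h1
  rw [integral_neg, neg_inj] at h1
  rw [h1]
  have hηi : Integrable η := (hη 0).continuous.integrable_of_hasCompactSupport hηc
  have hφi : Integrable φ := hηi.comp_sub_left x
  have h3 : ‖∫ z, divb r z * φ z‖ ≤ ∫ z, D r * φ z := by
    refine norm_integral_le_of_norm_le (hφi.const_mul _) ?_
    filter_upwards [hDbd r hr] with z hz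
    rw [norm_mul, Real.norm_of_nonneg (hη0 (x - z) : 0 ≤ φ z)]
    exact mul_le_mul_of_nonneg_right hz (hη0 _)
  rw [integral_const_mul] at h3
  have h4 : ∫ z, φ z = 1 := by rw [← hη1]; exact integral_sub_left_eq_self η volume x
  rwa [h4, mul_one] at h3

/-- The mollified averaged drift has divergence bounded by `∫ₛᵗ D`: by Fubini its divergence is the
time integral of pairings of `b_r` with `Dη`. -/
lemma divg_mollified_le {T : ℝ} {b : ℝ → Ed d → Ed d}
    (hbm : Measurable (fun q : ℝ × Ed d => b q.1 q.2))
    {g h : ℝ → ℝ} (hh : OsgoodModulus h) (hb : OsgoodDrift g h b) {divb : ℝ → Ed d → ℝ}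
    (hdivb : ∀ t ∈ Icc (0 : ℝ) T, ∀ φ : Ed d → ℝ, IsSmoothFn φ → HasCompactSupport φ →
      (∫ x, ⟪b t x, gradient φ x⟫) = -∫ x, divb t x * φ x)
    {D : ℝ → ℝ} (hDint : IntegrableOn D (Icc 0 T) volume)
    (hDbd : ∀ t ∈ Icc (0 : ℝ) T, ∀ᵐ x : Ed d, |divb t x| ≤ D t)
    {η : Ed d → ℝ} (hη : ∀ n : ℕ, ContDiff ℝ n η) (hηc : HasCompactSupport η)
    (hη0 : ∀ x, 0 ≤ η x) (hη1 : ∫ x, η x = 1)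
    {s t : ℝ} (hs : 0 ≤ s) (hst : s ≤ t) (ht : t ≤ T) {B : Ed d → Ed d}
    (hB : ∀ x v, fderiv ℝ B x v = ∫ y, (fderiv ℝ η y v) • ∫ r in s..t, b r (x - y)) (x : Ed d) :
    |divg B x| ≤ ∫ r in s..t, D r := by
  have hβc := hb.continuous_int hh hbm hs hst
  have hDη : Continuous (fderiv ℝ η) := (hη 1).continuous_fderiv (by simp)
  have hDηc : HasCompactSupport (fderiv ℝ η) := hηc.fderiv (𝕜 := ℝ)
  have hDηi : Integrable (fderiv ℝ η) := hDη.integrable_of_hasCompactSupport hDηc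
  have hDηi' : Integrable (fun z => ‖fderiv ℝ η (x - z)‖) := (hDηi.norm).comp_sub_left x
  -- the divergence is the integral of `Dη` against the field
  have h1 : divg B x = ∫ y, fderiv ℝ η y (∫ r in s..t, b r (x - y)) := by
    have hi : ∀ i : Fin d, Integrable (fun y => fderiv ℝ η y (EuclideanSpace.single i (1 : ℝ)) •
        ∫ r in s..t, b r (x - y)) := fun i => by
      refine Continuous.integrable_of_hasCompactSupport ?_ ?_
      · exact (hDη.clm_apply continuous_const).smul (hβc.comp (continuous_const.sub continuous_id))
      · refine hDηc.mono fun y hy => ?_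
        contrapose! hy
        simp only [Function.mem_support, not_not] at hy ⊢
        simp [hy]
    have h2 : divg B x = ∑ i, ∫ y, fderiv ℝ η y (EuclideanSpace.single i (1 : ℝ)) *
        (∫ r in s..t, b r (x - y)) i := by
      unfold divg
      refine Finset.sum_congr rfl fun i _ => ?_
      rw [hB]
      have := (EuclideanSpace.proj i : Ed d →L[ℝ] ℝ).integral_comp_comm (hi i)
      simpa using this.symm
    rw [h2, ← integral_finsetSum _ fun i _ => ?_]
    · refine integral_congr_ae (ae_of_all _ fun y => ?_)
      dsimp only
      have h3 : ∀ w : Ed d, w = ∑ i, w i • EuclideanSpace.single i (1 : ℝ) := fun w => by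
        have := (EuclideanSpace.basisFun (Fin d) ℝ).sum_repr w
        simpa using this.symm
      conv_rhs => rw [h3 (∫ r in s..t, b r (x - y))]
      rw [map_sum]
      refine Finset.sum_congr rfl fun i _ => ?_
      rw [map_smul, smul_eq_mul, mul_comm]
    · have := (EuclideanSpace.proj i : Ed d →L[ℝ] ℝ).integrable_comp (hi i)
      simpa using this
  have h2 : divg B x = ∫ z, ∫ r in s..t, fderiv ℝ η (x - z) (b r z) := by
    rw [h1, ← integral_sub_left_eq_self _ volume x]
    refine integral_congr_ae (ae_of_all _ fun z => ?_)
    dsimp only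
    rw [sub_sub_cancel]
    exact (ContinuousLinearMap.intervalIntegral_comp_comm _ (hb.b_int hbm hs hst z)).symm
  rw [h2]
  have hint : Integrable (Function.uncurry fun (z : Ed d) (r : ℝ) => fderiv ℝ η (x - z) (b r z))
      (volume.prod (volume.restrict (Ioc s t))) := by
    have hg : Integrable g (volume.restrict (Ioc s t)) :=
      (intervalIntegrable_iff_integrableOn_Ioc_of_le hst).1 (hb.g_int hs hst)
    refine (hDηi'.mul_prod hg).mono' ?_ (ae_of_all _ fun q => ?_)
    · refine Measurable.aestronglyMeasurable ?_
      have hc : Continuous fun q : (Ed d →L[ℝ] ℝ) × Ed d => q.1 q.2 :=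
        continuous_fst.clm_apply continuous_snd
      have hm1 : Measurable fun q : Ed d × ℝ => fderiv ℝ η (x - q.1) :=
        (hDη.comp (continuous_const.sub continuous_fst)).measurable
      have hm2 : Measurable fun q : Ed d × ℝ => b q.2 q.1 := hbm.comp measurable_swap
      exact hc.measurable.comp (hm1.prodMk hm2)
    · refine (ContinuousLinearMap.le_opNorm _ _).trans ?_
      exact mul_le_mul_of_nonneg_left (hb.2.1 _ _) (norm_nonneg _)
  have h3 : (∫ z, ∫ r in s..t, fderiv ℝ η (x - z) (b r z)) =
      ∫ r in s..t, ∫ z, fderiv ℝ η (x - z) (b r z) := by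
    simp only [intervalIntegral.integral_of_le hst]
    exact integral_integral_swap hint
  rw [h3, ← Real.norm_eq_abs]
  refine intervalIntegral.norm_integral_le_of_norm_le hst (ae_of_all _ fun r hr => ?_) ?_
  · exact abs_pairing_le hdivb hDbd hη hηc hη0 hη1 x ⟨by linarith [hr.1], by linarith [hr.2]⟩
  · rw [intervalIntegrable_iff_integrableOn_Ioc_of_le hst]
    exact hDint.mono_set fun r hr => ⟨by linarith [hr.1], by linarith [hr.2]⟩

/-- At mollification scale `ε` the averaged drift `∫ₛᵗ b_r dr` is replaced by a differentiable
field `B` whose divergence is still bounded by `∫ₛᵗ D`. -/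
lemma drift_approx {T : ℝ} {b : ℝ → Ed d → Ed d}
    (hbm : Measurable (fun q : ℝ × Ed d => b q.1 q.2))
    {g h : ℝ → ℝ} (hh : OsgoodModulus h) (hb : OsgoodDrift g h b) {divb : ℝ → Ed d → ℝ}
    (hdivb : ∀ t ∈ Icc (0 : ℝ) T, ∀ φ : Ed d → ℝ, IsSmoothFn φ → HasCompactSupport φ →
      (∫ x, ⟪b t x, gradient φ x⟫) = -∫ x, divb t x * φ x)
    {D : ℝ → ℝ} (hDint : IntegrableOn D (Icc 0 T) volume)
    (hDbd : ∀ t ∈ Icc (0 : ℝ) T, ∀ᵐ x : Ed d, |divb t x| ≤ D t) {ε : ℝ} (hε : 0 < ε) :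
    ∃ C : ℝ, 0 ≤ C ∧ ∀ s t : ℝ, 0 ≤ s → s ≤ t → t ≤ T → ∃ B : Ed d → Ed d,
      Differentiable ℝ B ∧ (∀ x, ‖B x‖ ≤ ∫ r in s..t, g r) ∧
      (∀ x, ‖fderiv ℝ B x‖ ≤ C * ∫ r in s..t, g r) ∧
      (∀ x, |ctr (fderiv ℝ B x)| ≤ ∫ r in s..t, D r) ∧
      ∀ x, ‖B x - ∫ r in s..t, b r x‖ ≤ (∫ r in s..t, g r) * h ε := by
  obtain ⟨η, C, hC, hη, hηc, hη0, hη1, H⟩ := exists_mollifier (volume : Measure (Ed d)) hε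
  refine ⟨C, hC, fun s t hs hst ht => ?_⟩
  obtain ⟨B, hB1, hB2, hB3, hB4, hB5⟩ := H (fun x => ∫ r in s..t, b r x)
    (hb.continuous_int hh hbm hs hst) _ (hb.norm_int_le hs hst)
  refine ⟨B, hB1, hB2, hB3, fun x => ?_, hB5 _ fun x x' hx => ?_⟩
  · rw [← divg_eq_ctr]
    exact divg_mollified_le hbm hh hb hdivb hDint hDbd hη hηc hη0 hη1 hs hst ht hB4 x
  · refine (hb.norm_int_sub_le hbm hs hst x x').trans ?_
    refine mul_le_mul_of_nonneg_left (hh.mono (norm_nonneg _) hx) ?_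
    exact intervalIntegral.integral_nonneg hst fun r _ => hb.g_nonneg r

end Drift

/-! ### Finite variation and weak geometricity -/

section Geometric

section VarLemmas

variable {E : Type*} [NormedAddCommGroup E]

lemma varSums_nonneg {q : ℝ} {f : ℝ → ℝ → E} {s t v : ℝ} (hv : v ∈ varSums q f s t) : 0 ≤ v := by
  obtain ⟨n, u, -, -, -, rfl⟩ := hv
  positivity

lemma pVar_nonneg {q : ℝ} {f : ℝ → ℝ → E} {s t : ℝ} : 0 ≤ pVar q f s t :=
  Real.sSup_nonneg fun _ hv => varSums_nonneg hv

/-- Sums along monotone sequences in `[0,T]`, not necessarily exhausting the interval, are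
controlled by the variation. -/
lemma FiniteVar.sum_le {q T : ℝ} (hq : 0 < q) {f : ℝ → ℝ → E} (hf : FiniteVar q f 0 T) {u : ℕ → ℝ}
    (hu : Monotone u) (hu0 : ∀ l, 0 ≤ u l) (huT : ∀ l, u l ≤ T) (n : ℕ) :
    ∑ l ∈ Finset.range n, ‖f (u l) (u (l + 1))‖ ^ q ≤ pVar q f 0 T ^ q := by
  set w : ℕ → ℝ := fun l => if l = 0 then 0 else if l ≤ n + 1 then u (l - 1) else T with hw
  have hT : 0 ≤ T := (hu0 0).trans (huT 0)
  have hwm : Monotone w := by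
    intro a b hab
    simp only [hw]
    split_ifs with h1 h2 h3 h4 h5
    all_goals first
      | exact le_rfl
      | exact hu0 _
      | exact hT
      | exact huT _
      | omega
      | exact hu (by omega)
  have hmem : (∑ i : Fin (n + 2), ‖f (w i) (w (i + 1))‖ ^ q) ^ (1 / q) ∈ varSums q f 0 T := by
    refine ⟨n + 2, fun i => w i, fun a b hab => hwm hab, by simp [hw], by simp [hw], ?_⟩
    simp
  have h1 := le_csSup hf hmem
  have h0 : 0 ≤ ∑ i : Fin (n + 2), ‖f (w i) (w (i + 1))‖ ^ q := by positivity
  have h2 := Real.rpow_le_rpow (by positivity) h1 hq.le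
  rw [← Real.rpow_mul h0, one_div_mul_cancel hq.ne', Real.rpow_one] at h2
  refine le_trans ?_ h2
  have h3 := (Finset.sum_range (fun i : ℕ => ‖f (w i) (w (i + 1))‖ ^ q) (n := n + 2)).symm
  refine le_trans ?_ h3.ge
  rw [Finset.sum_range_succ, Finset.sum_range_succ']
  have h4 : ∀ l ∈ Finset.range n, ‖f (u l) (u (l + 1))‖ ^ q = ‖f (w (l + 1)) (w (l + 1 + 1))‖ ^ q := by
    intro l hl
    have hl := Finset.mem_range.1 hl
    have e1 : w (l + 1) = u l := by simp [hw]; omega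
    have e2 : w (l + 1 + 1) = u (l + 1) := by simp [hw]; omega
    rw [e1, e2]
  rw [Finset.sum_congr rfl h4]
  have h5 : 0 ≤ ‖f (w 0) (w (0 + 1))‖ ^ q := by positivity
  have h6 : 0 ≤ ‖f (w (n + 1)) (w (n + 1 + 1))‖ ^ q := by positivity
  linarith

lemma FiniteVar.norm_le {q T : ℝ} (hq : 0 < q) {f : ℝ → ℝ → E} (hf : FiniteVar q f 0 T) {s t : ℝ}
    (hs : 0 ≤ s) (hst : s ≤ t) (ht : t ≤ T) : ‖f s t‖ ≤ pVar q f 0 T := by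
  have := hf.sum_le hq (u := fun l => if l = 0 then s else t) (fun a b hab => by
    dsimp only; split_ifs <;> first | exact le_rfl | exact hst | omega)
    (fun l => by split_ifs <;> linarith) (fun l => by split_ifs <;> linarith) 1
  simp only [Finset.range_one, Finset.sum_singleton, if_true, zero_add, one_ne_zero, if_false] at this
  exact (Real.rpow_le_rpow_iff (norm_nonneg _) pVar_nonneg hq).1 this

/-- A bound of the variation sums along monotone sequences gives finite variation. -/
lemma finiteVar_of {q T M : ℝ} (hq : 0 < q) {f : ℝ → ℝ → E}
    (H : ∀ (u : ℕ → ℝ) (n : ℕ), Monotone u → (∀ l, 0 ≤ u l) → (∀ l, u l ≤ T) →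
      ∑ l ∈ Finset.range n, ‖f (u l) (u (l + 1))‖ ^ q ≤ M) : FiniteVar q f 0 T := by
  refine ⟨M ^ (1 / q), ?_⟩
  rintro v ⟨n, u, hu, hu0, hun, rfl⟩
  refine Real.rpow_le_rpow (by positivity) ?_ (by positivity)
  have h := H (fun l => u ⟨min l n, by omega⟩) n (fun a b hab => hu (by
    simp only [Fin.mk_le_mk]; omega))
    (fun l => by rw [← hu0]; exact hu (Fin.zero_le _)) (fun l => by rw [← hun]; exact hu (Fin.le_last _))
  refine le_trans (le_of_eq ?_) h
  rw [Finset.sum_range]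
  refine Finset.sum_congr rfl fun i _ => ?_
  have e1 : (⟨min (i : ℕ) n, by omega⟩ : Fin (n + 1)) = i.castSucc := by ext; simp
  have e2 : (⟨min ((i : ℕ) + 1) n, by omega⟩ : Fin (n + 1)) = i.succ := by ext; simp
  rw [e1, e2]

lemma FiniteVar.sub {q T : ℝ} (hq : 1 ≤ q) {f f' : ℝ → ℝ → E} (hf : FiniteVar q f 0 T)
    (hf' : FiniteVar q f' 0 T) : FiniteVar q (fun s t => f s t - f' s t) 0 T := by
  have hq0 : 0 < q := by linarith
  refine finiteVar_of hq0 (M := 2 ^ q * (pVar q f 0 T ^ q + pVar q f' 0 T ^ q))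
    fun u n hu h0 hT => ?_
  have h1 := hf.sum_le hq0 hu h0 hT n
  have h2 := hf'.sum_le hq0 hu h0 hT n
  refine le_trans ?_ (mul_le_mul_of_nonneg_left (add_le_add h1 h2) (by positivity))
  rw [← Finset.sum_add_distrib, Finset.mul_sum]
  refine Finset.sum_le_sum fun l _ => ?_
  set a := ‖f (u l) (u (l + 1))‖
  set b := ‖f' (u l) (u (l + 1))‖
  have ha : 0 ≤ a := norm_nonneg _
  have hb : 0 ≤ b := norm_nonneg _
  have h3 : ‖f (u l) (u (l + 1)) - f' (u l) (u (l + 1))‖ ≤ 2 * max a b := by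
    refine (norm_sub_le _ _).trans ?_
    linarith [le_max_left a b, le_max_right a b]
  refine (Real.rpow_le_rpow (norm_nonneg _) h3 hq0.le).trans ?_
  rw [Real.mul_rpow (by norm_num) (by positivity)]
  refine mul_le_mul_of_nonneg_left ?_ (by positivity)
  have ha' : 0 ≤ a ^ q := by positivity
  have hb' : 0 ≤ b ^ q := by positivity
  rcases max_choice a b with h | h <;> rw [h] <;> linarith

lemma finiteVar_of_lipschitz {q T C : ℝ} (hq : 1 ≤ q) (hC : 0 ≤ C) {f : ℝ → ℝ → E}
    (H : ∀ s t, 0 ≤ s → s ≤ t → t ≤ T → ‖f s t‖ ≤ C * (t - s)) : FiniteVar q f 0 T := by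
  have hq0 : 0 < q := by linarith
  refine finiteVar_of hq0 (M := C ^ q * (T ^ (q - 1) * T)) fun u n hu h0 hT => ?_
  have hT0 : 0 ≤ T := (h0 0).trans (hT 0)
  have h1 : ∀ l ∈ Finset.range n, ‖f (u l) (u (l + 1))‖ ^ q ≤
      C ^ q * (T ^ (q - 1) * (u (l + 1) - u l)) := by
    intro l _
    have hd : 0 ≤ u (l + 1) - u l := sub_nonneg.2 (hu (by omega))
    refine (Real.rpow_le_rpow (norm_nonneg _) (H _ _ (h0 l) (hu (by omega)) (hT _)) hq0.le).trans ?_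
    rw [Real.mul_rpow hC hd]
    refine mul_le_mul_of_nonneg_left ?_ (by positivity)
    have e : (u (l + 1) - u l) ^ q = (u (l + 1) - u l) ^ (q - 1) * (u (l + 1) - u l) := by
      rcases hd.eq_or_lt with h | h
      · rw [← h, Real.zero_rpow hq0.ne', mul_zero]
      · rw [← Real.rpow_add_one h.ne', sub_add_cancel]
    rw [e]
    refine mul_le_mul_of_nonneg_right ?_ hd
    exact Real.rpow_le_rpow hd (by linarith [h0 l, hT (l + 1)]) (by linarith)
  refine (Finset.sum_le_sum h1).trans ?_
  rw [← Finset.mul_sum, ← Finset.mul_sum, Finset.sum_range_sub]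
  have : u n - u 0 ≤ T := by linarith [h0 0, hT n]
  gcongr

end VarLemmas

variable {m : ℕ}

lemma coord_contDiff {Z : ℝ → Ed m} (hZ : ContDiff ℝ 1 Z) (j : Fin m) :
    ContDiff ℝ 1 (fun t => Z t j) :=
  (EuclideanSpace.proj j : Ed m →L[ℝ] ℝ).contDiff.comp hZ

/-- Integration by parts: the symmetric part of the canonical lift is the product of increments. -/
lemma canonLift_symm {Z : ℝ → Ed m} (hZ : ContDiff ℝ 1 Z) (s t : ℝ) (j k : Fin m) :
    canonLift Z s t j k + canonLift Z s t k j = (Z t j - Z s j) * (Z t k - Z s k) := by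
  have hd : ∀ j : Fin m, Differentiable ℝ fun τ => Z τ j := fun j =>
    (coord_contDiff hZ j).differentiable (by simp)
  have hc : ∀ j : Fin m, Continuous (deriv fun τ => Z τ j) := fun j =>
    (coord_contDiff hZ j).continuous_deriv (by simp)
  have hcj : ∀ j : Fin m, Continuous fun τ => Z τ j := fun j => (hd j).continuous
  unfold canonLift
  have hi : ∀ j k : Fin m, IntervalIntegrable
      (fun r => (Z r j - Z s j) * deriv (fun τ => Z τ k) r) volume s t := fun j k =>
    (((hcj j).sub continuous_const).mul (hc k)).intervalIntegrable _ _
  rw [← intervalIntegral.integral_add (hi j k) (hi k j)]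
  have := intervalIntegral.integral_deriv_mul_eq_sub (a := s) (b := t)
    (u := fun τ => Z τ j - Z s j) (v := fun τ => Z τ k - Z s k)
    (u' := deriv fun τ => Z τ j) (v' := deriv fun τ => Z τ k)
    (fun x _ => ((hd j) x).hasDerivAt.sub_const _) (fun x _ => ((hd k) x).hasDerivAt.sub_const _)
    ((hc j).intervalIntegrable _ _) ((hc k).intervalIntegrable _ _)
  rw [sub_self, zero_mul, sub_zero] at this
  rw [← this]
  refine intervalIntegral.integral_congr fun r _ => ?_
  dsimp only
  ring

/-- The canonical lift of a `C¹` path has finite variation, since it is bounded by a multiple of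
the length of the interval. -/
lemma finiteVar_canonLift {Z : ℝ → Ed m} (hZ : ContDiff ℝ 1 Z) {q T : ℝ} (hq : 1 ≤ q) :
    FiniteVar q (canonLift Z) 0 T := by
  have hd : ∀ j : Fin m, Differentiable ℝ fun τ => Z τ j := fun j =>
    (coord_contDiff hZ j).differentiable (by simp)
  have hc : ∀ j : Fin m, Continuous (deriv fun τ => Z τ j) := fun j =>
    (coord_contDiff hZ j).continuous_deriv (by simp)
  have h1 : ∀ j : Fin m, ∃ M, ∀ r ∈ Icc 0 T, ‖Z r j‖ ≤ M := fun j =>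
    isCompact_Icc.exists_bound_of_continuousOn (hd j).continuous.continuousOn
  have h2 : ∀ j : Fin m, ∃ M, ∀ r ∈ Icc 0 T, ‖deriv (fun τ => Z τ j) r‖ ≤ M := fun j =>
    isCompact_Icc.exists_bound_of_continuousOn (hc j).continuousOn
  choose M hM using h1
  choose M' hM' using h2
  refine finiteVar_of_lipschitz hq (C := ∑ j, ∑ k, (2 * |M j|) * |M' k|) (by positivity) ?_
  intro s t hs hst ht
  have hts : 0 ≤ t - s := by linarith
  rw [pi_norm_le_iff_of_nonneg (by positivity)]
  intro j
  rw [pi_norm_le_iff_of_nonneg (by positivity)]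
  intro k
  have h3 : ‖canonLift Z s t j k‖ ≤ ((2 * |M j|) * |M' k|) * |t - s| := by
    refine intervalIntegral.norm_integral_le_of_norm_le_const fun r hr => ?_
    rw [uIoc_of_le hst] at hr
    have hr' : r ∈ Icc 0 T := ⟨by linarith [hr.1], by linarith [hr.2]⟩
    rw [norm_mul]
    refine mul_le_mul ?_ ((hM' k r hr').trans (le_abs_self _)) (norm_nonneg _) (by positivity)
    refine (norm_sub_le _ _).trans ?_
    have := (hM j r hr').trans (le_abs_self _)
    have := (hM j s ⟨hs, by linarith⟩).trans (le_abs_self _)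
    linarith
  rw [abs_of_nonneg hts] at h3
  refine h3.trans (mul_le_mul_of_nonneg_right ?_ hts)
  have h4 : (2 * |M j|) * |M' k| ≤ ∑ k, (2 * |M j|) * |M' k| :=
    Finset.single_le_sum (f := fun k => (2 * |M j|) * |M' k|) (fun _ _ => by positivity)
      (Finset.mem_univ k)
  refine h4.trans ?_
  exact Finset.single_le_sum (f := fun j => ∑ k, (2 * |M j|) * |M' k|)
    (fun _ _ => by positivity) (Finset.mem_univ j)

/-- A geometric rough path is weakly geometric. Integration by parts gives the identity for canonical
lifts, and both sides pass to the limit. -/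
lemma IsGeometricRoughPath.symm_eq {p T : ℝ} (hp2 : 2 ≤ p) {Z : ℝ → Ed m}
    {ZZ : ℝ → ℝ → Fin m → Fin m → ℝ} (hZ : IsGeometricRoughPath p T Z ZZ) {s t : ℝ}
    (hs : 0 ≤ s) (hst : s ≤ t) (ht : t ≤ T) (j k : Fin m) :
    ZZ s t j k + ZZ s t k j = (Z t j - Z s j) * (Z t k - Z s k) := by
  obtain ⟨⟨hZc, -, -, hZZ, -⟩, Zs, hZs, hlim⟩ := hZ
  have hq : 1 ≤ p / 2 := by linarith
  have hsup : ∀ n, 0 ≤ ⨆ t : Icc (0 : ℝ) T, ‖Zs n ↑t - Z ↑t‖ := fun n =>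
    Real.iSup_nonneg fun _ => norm_nonneg _
  have hA : Tendsto (fun n => ⨆ t : Icc (0 : ℝ) T, ‖Zs n ↑t - Z ↑t‖) atTop (𝓝 0) :=
    squeeze_zero hsup (fun n => by
      have := pVar_nonneg (q := p) (f := fun s t => (Zs n t - Z t) - (Zs n s - Z s)) (s := 0) (t := T)
      have := pVar_nonneg (q := p / 2) (f := fun s t => (fun i j => canonLift (Zs n) s t i j - ZZ s t i j))
        (s := 0) (t := T)
      linarith) hlim
  have hB : Tendsto (fun n => pVar (p / 2)
      (fun s t => (fun i j => canonLift (Zs n) s t i j - ZZ s t i j)) 0 T) atTop (𝓝 0) :=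
    squeeze_zero (fun n => pVar_nonneg) (fun n => by
      have := pVar_nonneg (q := p) (f := fun s t => (Zs n t - Z t) - (Zs n s - Z s)) (s := 0) (t := T)
      have := hsup n
      linarith) hlim
  have hZlim : ∀ r ∈ Icc 0 T, ∀ j : Fin m, Tendsto (fun n => Zs n r j) atTop (𝓝 (Z r j)) := by
    intro r hr j
    have h1 : Tendsto (fun n => Zs n r) atTop (𝓝 (Z r)) := by
      rw [tendsto_iff_norm_sub_tendsto_zero]
      refine squeeze_zero (fun _ => norm_nonneg _) (fun n => ?_) hA
      refine le_ciSup (f := fun t : Icc (0 : ℝ) T => ‖Zs n ↑t - Z ↑t‖) ?_ ⟨r, hr⟩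
      obtain ⟨M, hM⟩ := isCompact_Icc.exists_bound_of_continuousOn
        ((hZs n).continuous.continuousOn.sub hZc)
      exact ⟨M, by rintro _ ⟨x, rfl⟩; exact hM x x.2⟩
    exact ((EuclideanSpace.proj j : Ed m →L[ℝ] ℝ).continuous.tendsto _).comp h1
  have hCL : ∀ j k : Fin m, Tendsto (fun n => canonLift (Zs n) s t j k) atTop (𝓝 (ZZ s t j k)) := by
    intro j k
    rw [tendsto_iff_norm_sub_tendsto_zero]
    refine squeeze_zero (fun _ => norm_nonneg _) (fun n => ?_) hB
    have hfv : FiniteVar (p / 2) (fun s t => (fun i j => canonLift (Zs n) s t i j - ZZ s t i j)) 0 T :=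
      (finiteVar_canonLift (hZs n) hq).sub hq hZZ
    refine le_trans ?_ (hfv.norm_le (by linarith) hs hst ht)
    exact (norm_le_pi_norm ((fun i j => canonLift (Zs n) s t i j - ZZ s t i j) j) k).trans
      (norm_le_pi_norm (fun i j => canonLift (Zs n) s t i j - ZZ s t i j) j)
  refine tendsto_nhds_unique ((hCL j k).add (hCL k j)) ?_
  simp_rw [canonLift_symm (hZs _) s t j k]
  have hs' : s ∈ Icc 0 T := ⟨hs, hst.trans ht⟩
  have ht' : t ∈ Icc 0 T := ⟨hs.trans hst, ht⟩
  exact ((hZlim t ht' j).sub (hZlim s hs' j)).mul ((hZlim t ht' k).sub (hZlim s hs' k))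

end Geometric

/-! ### Jacobian of one step of the scheme -/

section Jac

variable {E : Type*} [NormedAddCommGroup E] [NormedSpace ℝ E] {m : ℕ}

lemma ctr_add (L M : E →L[ℝ] E) : ctr (L + M) = ctr L + ctr M := by
  simp only [ctr, ContinuousLinearMap.toLinearMap_add, map_add]

lemma ctr_smul (a : ℝ) (L : E →L[ℝ] E) : ctr (a • L) = a * ctr L := by
  simp only [ctr, ContinuousLinearMap.toLinearMap_smul, map_smul, smul_eq_mul]

lemma ctr_zero : ctr (0 : E →L[ℝ] E) = 0 := by
  simp only [ctr, ContinuousLinearMap.toLinearMap_zero, map_zero]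

lemma ctr_sum {ι : Type*} (s : Finset ι) (L : ι → E →L[ℝ] E) :
    ctr (∑ i ∈ s, L i) = ∑ i ∈ s, ctr (L i) := by
  classical
  induction s using Finset.induction_on with
  | empty => simp only [Finset.sum_empty, ctr_zero]
  | insert a s ha ih => rw [Finset.sum_insert ha, Finset.sum_insert ha, ctr_add, ih]

lemma ctr_mul_comm (L M : E →L[ℝ] E) : ctr (L * M) = ctr (M * L) :=
  LinearMap.trace_mul_comm ℝ (L : E →ₗ[ℝ] E) M

variable [FiniteDimensional ℝ E]

/-- Since `ξ_k` is divergence free, the second-derivative part of `D(Dξ_k ξ_j)` has zero trace. -/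
lemma ctr_fderiv_xi2 {ξ : Fin m → E → E} {K : ℝ} (hξ : ∀ k, CkbBound 3 (ξ k) K)
    (hdiv : ∀ k x, ctr (fderiv ℝ (ξ k) x) = 0) (j k : Fin m) (x : E) :
    ctr (fderiv ℝ (fun x => fderiv ℝ (ξ k) x (ξ j x)) x) =
      ctr (fderiv ℝ (ξ k) x * fderiv ℝ (ξ j) x) := by
  have hD1 : Differentiable ℝ (fderiv ℝ (ξ k)) := (hξ k).fderiv.differentiable
  have hD0 : Differentiable ℝ (ξ j) := (hξ j).differentiable
  have h1 : HasFDerivAt (fun x => fderiv ℝ (ξ k) x (ξ j x)) _ x :=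
    (hD1 x).hasFDerivAt.clm_apply (hD0 x).hasFDerivAt
  have hsym : ∀ v w, fderiv ℝ (fderiv ℝ (ξ k)) x v w = fderiv ℝ (fderiv ℝ (ξ k)) x w v := by
    have : IsSymmSndFDerivAt ℝ (ξ k) x := ((hξ k).1.contDiffAt).isSymmSndFDerivAt (by
      simp; norm_num)
    exact fun v w => this v w
  have h2 : fderiv ℝ (fun x => fderiv ℝ (ξ k) x (ξ j x)) x =
      fderiv ℝ (ξ k) x * fderiv ℝ (ξ j) x + fderiv ℝ (fderiv ℝ (ξ k)) x (ξ j x) := by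
    rw [h1.fderiv]
    ext v
    change fderiv ℝ (ξ k) x (fderiv ℝ (ξ j) x v) + fderiv ℝ (fderiv ℝ (ξ k)) x v (ξ j x) =
      fderiv ℝ (ξ k) x (fderiv ℝ (ξ j) x v) + fderiv ℝ (fderiv ℝ (ξ k)) x (ξ j x) v
    rw [hsym]
  have h3 : ∀ w, ctr (fderiv ℝ (fderiv ℝ (ξ k)) x w) = 0 := by
    intro w
    let τ : (E →L[ℝ] E) →ₗ[ℝ] ℝ :=
      { toFun := ctr, map_add' := ctr_add, map_smul' := ctr_smul }
    let τ' : (E →L[ℝ] E) →L[ℝ] ℝ := LinearMap.toContinuousLinearMap τ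
    have h4 : HasFDerivAt (fun y => τ' (fderiv ℝ (ξ k) y))
        (τ'.comp (fderiv ℝ (fderiv ℝ (ξ k)) x)) x := τ'.hasFDerivAt.comp x (hD1 x).hasFDerivAt
    have h5 : (fun y => τ' (fderiv ℝ (ξ k) y)) = fun _ => 0 := funext fun y => hdiv k y
    rw [h5] at h4
    have h6 := h4.unique (hasFDerivAt_const (0 : ℝ) x)
    exact congrArg (fun L : E →L[ℝ] ℝ => L w) h6
  rw [h2, ctr_add, h3, add_zero]

/-- One rough step changes volume by a factor `exp(O(θ³))` for divergence-free fields, provided the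
symmetric part of the second level is that of a geometric rough path. -/
lemma fA_det (m : ℕ) {K : ℝ} (hK : 0 ≤ K) : ∃ C r : ℝ, 0 < C ∧ 0 < r ∧
    ∀ (ξ : Fin m → E → E) (_ : ∀ k, CkbBound 3 (ξ k) K)
      (_ : ∀ k x, ctr (fderiv ℝ (ξ k) x) = 0) (z : Fin m → ℝ) (A : Fin m → Fin m → ℝ) (θ : ℝ),
      0 ≤ θ → θ ≤ r → (∀ k, |z k| ≤ θ) → (∀ j k, |A j k| ≤ θ ^ 2) →
      (∀ j k, A j k + A k j = z j * z k) → ∀ x,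
      Real.exp (-(C * θ ^ 3)) ≤ |(1 + fderiv ℝ (fA ξ z A) x).det| ∧
        |(1 + fderiv ℝ (fA ξ z A) x).det| ≤ Real.exp (C * θ ^ 3) := by
  obtain ⟨C, r, hC, hr, H⟩ := det_rough (E := E) (fAC m K) (fAC_nonneg m hK)
  refine ⟨C, r, hC, hr, fun ξ hξ hdiv z A θ hθ hθr hz hA hsym x => ?_⟩
  have hc1 : CkbBound 2 (fun x => ∑ k, z k • ξ k x) (m * (θ * K)) := by
    have h1 := ckbBound_sum Finset.univ
      (fun k _ => ((hξ k).mono (k' := 2) (by norm_num) le_rfl).const_smul (z k) (hz k))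
    simpa only [Finset.sum_const, Finset.card_univ, Fintype.card_fin, nsmul_eq_mul] using h1
  have hc2 := xi2sum_ckb hξ hA
  have hdξ : ∀ k, DifferentiableAt ℝ (ξ k) x := fun k => (hξ k).differentiable x
  have hdξ2 : ∀ j k, DifferentiableAt ℝ (fun x => fderiv ℝ (ξ k) x (ξ j x)) x :=
    fun j k => (xi2_ckb hξ j k).differentiable x
  have hM1 : fderiv ℝ (fun x => ∑ k, z k • ξ k x) x = ∑ k, z k • fderiv ℝ (ξ k) x := by
    rw [fderiv_fun_sum fun k _ => (hdξ k).fun_const_smul (z k)]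
    exact Finset.sum_congr rfl fun k _ => fderiv_fun_const_smul (hdξ k) _
  have hM2 : fderiv ℝ (fun x => ∑ j, ∑ k, A j k • fderiv ℝ (ξ k) x (ξ j x)) x =
      ∑ j, ∑ k, A j k • fderiv ℝ (fun x => fderiv ℝ (ξ k) x (ξ j x)) x := by
    rw [fderiv_fun_sum fun j _ => DifferentiableAt.fun_sum fun k _ => (hdξ2 j k).fun_const_smul (A j k)]
    refine Finset.sum_congr rfl fun j _ => ?_
    rw [fderiv_fun_sum fun k _ => (hdξ2 j k).fun_const_smul (A j k)]
    exact Finset.sum_congr rfl fun k _ => fderiv_fun_const_smul (hdξ2 j k) _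
  have hsplit : fderiv ℝ (fA ξ z A) x = fderiv ℝ (fun x => ∑ k, z k • ξ k x) x +
      fderiv ℝ (fun x => ∑ j, ∑ k, A j k • fderiv ℝ (ξ k) x (ξ j x)) x :=
    fderiv_fun_add (hc1.differentiable x) (hc2.differentiable x)
  rw [hsplit]
  refine H _ _ θ hθ hθr ((hc1.norm_fderiv_le x).trans ?_) ((hc2.norm_fderiv_le x).trans ?_) ?_ ?_
  · have : 0 ≤ (m * (m * (2 ^ 2 * (K * K))) : ℝ) * θ := by positivity
    unfold fAC
    linarith
  · have : 0 ≤ (m * K : ℝ) * θ ^ 2 := by positivity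
    unfold fAC
    linarith
  · rw [hM1, ctr_sum]
    exact Finset.sum_eq_zero fun k _ => by rw [ctr_smul, hdiv, mul_zero]
  · set t : Fin m → Fin m → ℝ := fun j k => ctr (fderiv ℝ (ξ k) x * fderiv ℝ (ξ j) x) with ht
    have htsym : ∀ j k, t j k = t k j := fun j k => ctr_mul_comm _ _
    have e1 : ctr (fderiv ℝ (fun x => ∑ j, ∑ k, A j k • fderiv ℝ (ξ k) x (ξ j x)) x) =
        ∑ j, ∑ k, A j k * t j k := by
      rw [hM2, ctr_sum]
      refine Finset.sum_congr rfl fun j _ => ?_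
      rw [ctr_sum]
      refine Finset.sum_congr rfl fun k _ => ?_
      rw [ctr_smul, ctr_fderiv_xi2 hξ hdiv]
    have e2 : ctr (fderiv ℝ (fun x => ∑ k, z k • ξ k x) x * fderiv ℝ (fun x => ∑ k, z k • ξ k x) x) =
        ∑ j, ∑ k, z j * z k * t j k := by
      rw [hM1, Finset.sum_mul, ctr_sum]
      refine Finset.sum_congr rfl fun j _ => ?_
      rw [Finset.mul_sum, ctr_sum]
      refine Finset.sum_congr rfl fun k _ => ?_
      rw [smul_mul_smul_comm, ctr_smul, htsym]
    have e3 : ∑ j, ∑ k, A j k * t j k = ∑ j, ∑ k, A k j * t j k := by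
      rw [Finset.sum_comm]
      exact Finset.sum_congr rfl fun j _ => Finset.sum_congr rfl fun k _ => by rw [htsym]
    rw [e1, e2]
    have e4 : ∑ j, ∑ k, z j * z k * t j k = (∑ j, ∑ k, A j k * t j k) + ∑ j, ∑ k, A k j * t j k := by
      rw [← Finset.sum_add_distrib]
      refine Finset.sum_congr rfl fun j _ => ?_
      rw [← Finset.sum_add_distrib]
      refine Finset.sum_congr rfl fun k _ => ?_
      rw [← hsym]; ring
    rw [e4, ← e3]; ring

end Jac

/-! ### The scheme driven by a rough path along a partition -/

section Driver

variable {d m : ℕ}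

/-- The increments of the second-order scheme along the partition `u`. -/
noncomputable def stepF (ξ : Fin m → Ed d → Ed d) (Z : ℝ → Ed m) (ZZ : ℝ → ℝ → Fin m → Fin m → ℝ)
    (u : ℕ → ℝ) (i j : ℕ) : Ed d → Ed d :=
  fA ξ (fun k => Z (u j) k - Z (u i) k) (ZZ (u i) (u j))

/-- The size of the data (rough path and drift) between two points of the partition `u`. -/
noncomputable def pathF (p : ℝ) (Z : ℝ → Ed m) (ZZ : ℝ → ℝ → Fin m → Fin m → ℝ) (g : ℝ → ℝ)
    (u : ℕ → ℝ) (i j : ℕ) : ℝ :=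
  ‖Z (u j) - Z (u i)‖ ^ p + ‖ZZ (u i) (u j)‖ ^ (p / 2) + ∫ r in (u i)..(u j), g r

lemma stepF_eq (ξ : Fin m → Ed d → Ed d) (Z : ℝ → Ed m) (ZZ : ℝ → ℝ → Fin m → Fin m → ℝ)
    (u : ℕ → ℝ) (i j : ℕ) (x : Ed d) :
    stepF ξ Z ZZ u i j x = xiAct ξ x (Z (u j) - Z (u i)) + xi2Act ξ x (ZZ (u i) (u j)) := rfl

lemma IsRoughPath.diag {p T : ℝ} {Z : ℝ → Ed m} {ZZ : ℝ → ℝ → Fin m → Fin m → ℝ}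
    (hZ : IsRoughPath p T Z ZZ) {s : ℝ} (hs : 0 ≤ s) (hsT : s ≤ T) : ZZ s s = 0 := by
  funext i j
  have := hZ.2.2.2.2 s s s hs le_rfl le_rfl hsT i j
  simp only [sub_self, zero_mul] at this
  simp only [Pi.zero_apply]
  linarith

variable {p T : ℝ} {Z : ℝ → Ed m} {ZZ : ℝ → ℝ → Fin m → Fin m → ℝ} {g : ℝ → ℝ} {u : ℕ → ℝ}

lemma pathF_nonneg (hg0 : ∀ r, 0 ≤ g r) (hu : Monotone u) {i j : ℕ} (hij : i ≤ j) :
    0 ≤ pathF p Z ZZ g u i j := by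
  have : 0 ≤ ∫ r in (u i)..(u j), g r := intervalIntegral.integral_nonneg (hu hij) fun r _ => hg0 r
  unfold pathF
  positivity

lemma intervalIntegrable_of_Icc {a b : ℝ} (hgi : IntegrableOn g (Icc 0 T)) (ha : a ∈ Icc 0 T)
    (hb : b ∈ Icc 0 T) : IntervalIntegrable g volume a b :=
  (intervalIntegrable_iff.2 (hgi.mono_set fun x hx => by
    rw [uIoc, mem_Ioc] at hx
    exact ⟨(le_min ha.1 hb.1).trans hx.1.le, hx.2.trans (max_le ha.2 hb.2)⟩))

/-- A superadditive majorant of `pathF` along a partition, with total mass bounded independently of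
the partition and with the same values on consecutive points. -/
lemma exists_control (hp2 : 2 ≤ p) (hZ : IsRoughPath p T Z ZZ) (hg0 : ∀ r, 0 ≤ g r)
    (hgi : IntegrableOn g (Icc 0 T)) (hu : Monotone u) (huT : ∀ l, u l ∈ Icc 0 T) :
    ∃ W : ℕ → ℕ → ℝ, DControl W ∧ (∀ i j, i ≤ j → pathF p Z ZZ g u i j ≤ W i j) ∧
      (∀ i, W i (i + 1) = pathF p Z ZZ g u i (i + 1)) ∧ ∀ i j, i ≤ j → W i j ≤
        pVar p (incr Z) 0 T ^ p + pVar (p / 2) ZZ 0 T ^ (p / 2) + ∫ r in (0:ℝ)..T, g r := by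
  refine exists_dcontrol (fun i j hij => pathF_nonneg hg0 hu hij) (fun i => ?_) fun i j v hv => ?_
  · unfold pathF
    rw [hZ.diag (huT i).1 (huT i).2, sub_self, norm_zero, norm_zero, intervalIntegral.integral_same,
      Real.zero_rpow (by positivity), Real.zero_rpow (by positivity)]
    simp
  · obtain ⟨n, w, hw, -, -, rfl⟩ := hv.exists_seq
    simp only [pathF, Finset.sum_add_distrib]
    have hm : Monotone (u ∘ w) := hu.comp hw
    have hT : 0 ≤ T := (huT 0).1.trans (huT 0).2
    refine add_le_add (add_le_add ?_ ?_) ?_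
    · exact hZ.2.2.1.sum_le (by positivity) hm (fun l => (huT _).1) (fun l => (huT _).2) n
    · exact hZ.2.2.2.1.sum_le (by positivity) hm (fun l => (huT _).1) (fun l => (huT _).2) n
    · rw [intervalIntegral.sum_integral_adjacent_intervals (a := fun l => u (w l))
        (fun k _ => intervalIntegrable_of_Icc hgi (huT _) (huT _))]
      exact intervalIntegral.integral_mono_interval (huT _).1 (hm (Nat.zero_le n)) (huT _).2
        (ae_of_all _ hg0) (intervalIntegrable_of_Icc hgi ⟨le_rfl, hT⟩ ⟨hT, le_rfl⟩)

lemma abs_coord_le (z : Ed m) (k : Fin m) : |z k| ≤ ‖z‖ := by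
  rw [← Real.norm_eq_abs]; exact PiLp.norm_apply_le z k

lemma pathF_z_le (hp2 : 2 ≤ p) (hg0 : ∀ r, 0 ≤ g r) (hu : Monotone u) {i j : ℕ} (hij : i ≤ j)
    {w : ℝ} (hw : pathF p Z ZZ g u i j ≤ w) (k : Fin m) :
    |Z (u j) k - Z (u i) k| ≤ w ^ (1 / p) := by
  have h1 : |Z (u j) k - Z (u i) k| ≤ ‖Z (u j) - Z (u i)‖ := abs_coord_le (Z (u j) - Z (u i)) k
  refine h1.trans ?_
  have : 0 ≤ ∫ r in (u i)..(u j), g r := intervalIntegral.integral_nonneg (hu hij) fun r _ => hg0 r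
  have h2 : 0 ≤ ‖ZZ (u i) (u j)‖ ^ (p / 2) := by positivity
  have h3 : ‖Z (u j) - Z (u i)‖ ^ p ≤ w := by unfold pathF at hw; linarith
  have hw0 : 0 ≤ w := le_trans (by positivity) h3
  rw [one_div]
  exact (Real.le_rpow_inv_iff_of_pos (norm_nonneg _) hw0 (by linarith)).2 h3

lemma pathF_zz_le (hp2 : 2 ≤ p) (hg0 : ∀ r, 0 ≤ g r) (hu : Monotone u) {i j : ℕ} (hij : i ≤ j)
    {w : ℝ} (hw : pathF p Z ZZ g u i j ≤ w) (k l : Fin m) :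
    |ZZ (u i) (u j) k l| ≤ (w ^ (1 / p)) ^ 2 := by
  have h1 : |ZZ (u i) (u j) k l| ≤ ‖ZZ (u i) (u j)‖ :=
    (norm_le_pi_norm (ZZ (u i) (u j) k) l).trans (norm_le_pi_norm (ZZ (u i) (u j)) k)
  refine h1.trans ?_
  have : 0 ≤ ∫ r in (u i)..(u j), g r := intervalIntegral.integral_nonneg (hu hij) fun r _ => hg0 r
  have h2 : 0 ≤ ‖Z (u j) - Z (u i)‖ ^ p := by positivity
  have h3 : ‖ZZ (u i) (u j)‖ ^ (p / 2) ≤ w := by unfold pathF at hw; linarith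
  have hw0 : 0 ≤ w := le_trans (by positivity) h3
  have h4 := (Real.le_rpow_inv_iff_of_pos (norm_nonneg _) hw0 (by linarith : 0 < p / 2)).2 h3
  refine h4.trans (le_of_eq ?_)
  rw [← Real.rpow_natCast, ← Real.rpow_mul hw0]
  congr 1
  push_cast
  rw [inv_div]
  ring

lemma rpow_one_div_cube {w : ℝ} (hw : 0 ≤ w) : (w ^ (1 / p)) ^ 3 = w ^ (3 / p) := by
  rw [← Real.rpow_natCast, ← Real.rpow_mul hw]
  congr 1
  push_cast
  ring

/-- The scheme is an almost flow, with constants independent of the partition. -/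
lemma stepF_almostFlow (m : ℕ) (hp2 : 2 ≤ p) {K : ℝ} (hK : 0 ≤ K) : ∃ C : ℝ, 0 ≤ C ∧
    ∀ {d : ℕ} {Z : ℝ → Ed m} {ZZ : ℝ → ℝ → Fin m → Fin m → ℝ} (_ : IsRoughPath p T Z ZZ)
      (g : ℝ → ℝ) (_ : ∀ r, 0 ≤ g r) (ξ : Fin m → Ed d → Ed d) (_ : ∀ k, CkbBound 3 (ξ k) K)
      (u : ℕ → ℝ) (_ : Monotone u) (_ : ∀ l, u l ∈ Icc 0 T) (W : ℕ → ℕ → ℝ) (_ : DControl W)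
      (_ : ∀ i j, i ≤ j → pathF p Z ZZ g u i j ≤ W i j),
      AlmostFlow p (fAC m K) C (stepF ξ Z ZZ u) W := by
  obtain ⟨C, hC, H⟩ := defect_bound m hK
  refine ⟨C, hC, fun {d Z ZZ} hZ g hg0 ξ hξ u hu huT W hW hFW => ?_⟩
  have hp0 : 0 < p := by linarith
  have key : ∀ i j k, i ≤ j → j ≤ k → W i k ≤ 1 →
      (∀ x, ‖stepF ξ Z ZZ u i j x + stepF ξ Z ZZ u j k (x + stepF ξ Z ZZ u i j x)
        - stepF ξ Z ZZ u i k x‖ ≤ C * W i k ^ (3 / p)) ∧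
      ∀ x x', ‖(stepF ξ Z ZZ u i j x + stepF ξ Z ZZ u j k (x + stepF ξ Z ZZ u i j x)
        - stepF ξ Z ZZ u i k x) - (stepF ξ Z ZZ u i j x' +
          stepF ξ Z ZZ u j k (x' + stepF ξ Z ZZ u i j x') - stepF ξ Z ZZ u i k x')‖
        ≤ C * W i k ^ (3 / p) * ‖x - x'‖ := by
    intro i j k hij hjk hw
    have hw0 := hW.nonneg i k (hij.trans hjk)
    rw [← rpow_one_div_cube hw0]
    have h1 : pathF p Z ZZ g u i j ≤ W i k := (hFW i j hij).trans (hW.mono le_rfl hij hjk)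
    have h2 : pathF p Z ZZ g u j k ≤ W i k := (hFW j k hjk).trans (hW.mono hij hjk le_rfl)
    refine H (Ed d) ξ hξ _ _ _ _ (W i k ^ (1 / p)) (by positivity)
      (Real.rpow_le_one hw0 hw (by positivity))
      (pathF_z_le hp2 hg0 hu hij h1) (pathF_z_le hp2 hg0 hu hjk h2)
      (pathF_zz_le hp2 hg0 hu hij h1) (pathF_zz_le hp2 hg0 hu hjk h2)
      (fun x => stepF ξ Z ZZ u i j x + stepF ξ Z ZZ u j k (x + stepF ξ Z ZZ u i j x)
        - stepF ξ Z ZZ u i k x) fun x => ?_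
    have e1 : (fun l => Z (u j) l - Z (u i) l + (Z (u k) l - Z (u j) l)) =
        fun l => Z (u k) l - Z (u i) l := by funext l; ring
    have e2 : (fun a c => ZZ (u i) (u j) a c + ZZ (u j) (u k) a c +
        (Z (u j) a - Z (u i) a) * (Z (u k) c - Z (u j) c)) = ZZ (u i) (u k) := by
      funext a c
      have := hZ.2.2.2.2 (u i) (u j) (u k) (huT i).1 (hu hij) (hu hjk) (huT k).2 a c
      linarith
    rw [e1, e2]
    rfl
  refine ⟨hW, fun i j hij hw => ?_, fun i j k hij hjk hw => (key i j k hij hjk hw).1,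
    fun i j k hij hjk hw => (key i j k hij hjk hw).2⟩
  have hw0 := hW.nonneg i j hij
  exact fA_ckb hξ (by positivity) (Real.rpow_le_one hw0 hw (by positivity)) hK
    (pathF_z_le hp2 hg0 hu hij (hFW i j hij)) (pathF_zz_le hp2 hg0 hu hij (hFW i j hij))

/-- Volume distortion of one rough step; the exponent `3 / p > 1` makes the total distortion vanish
as the mesh tends to zero. -/
lemma stepF_det (d m : ℕ) (hp2 : 2 ≤ p) {K : ℝ} (hK : 0 ≤ K) : ∃ C r : ℝ, 0 < C ∧ 0 < r ∧
    ∀ {Z : ℝ → Ed m} {ZZ : ℝ → ℝ → Fin m → Fin m → ℝ} (_ : IsGeometricRoughPath p T Z ZZ)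
      (g : ℝ → ℝ) (_ : ∀ r, 0 ≤ g r) (ξ : Fin m → Ed d → Ed d) (_ : ∀ k, CkbBound 3 (ξ k) K)
      (_ : ∀ k x, divg (ξ k) x = 0)
      (u : ℕ → ℝ) (_ : Monotone u) (_ : ∀ l, u l ∈ Icc 0 T) (i : ℕ) (w : ℝ),
      pathF p Z ZZ g u i (i + 1) ≤ w → w ≤ r → ∀ x,
      Real.exp (-(C * w ^ (3 / p))) ≤ |(1 + fderiv ℝ (stepF ξ Z ZZ u i (i + 1)) x).det| ∧
        |(1 + fderiv ℝ (stepF ξ Z ZZ u i (i + 1)) x).det| ≤ Real.exp (C * w ^ (3 / p)) := by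
  obtain ⟨C, r, hC, hr, H⟩ := fA_det (E := Ed d) m hK
  have hp0 : 0 < p := by linarith
  refine ⟨C, r ^ p, hC, by positivity, fun {Z ZZ} hZ g hg0 ξ hξ hdiv u hu huT i w hw hwr => ?_⟩
  have hw0 : 0 ≤ w := (pathF_nonneg hg0 hu (Nat.le_succ i)).trans hw
  rw [← rpow_one_div_cube hw0]
  have hθ : w ^ (1 / p) ≤ r := by
    rw [one_div]
    exact (Real.rpow_inv_le_iff_of_pos hw0 hr.le hp0).2 hwr
  exact H ξ hξ (fun k x => by rw [← divg_eq_ctr]; exact hdiv k x) _ _ (w ^ (1 / p)) (by positivity) hθ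
    (pathF_z_le hp2 hg0 hu (Nat.le_succ i) hw) (pathF_zz_le hp2 hg0 hu (Nat.le_succ i) hw)
    fun a c => hZ.symm_eq hp2 (huT i).1 (hu (Nat.le_succ i)) (huT (i + 1)).2 a c

end Driver

/-! ### Convergence of the scheme to the solution of the rough differential equation -/

section Convergence

variable {d m : ℕ} {p T : ℝ} {Z : ℝ → Ed m} {ZZ : ℝ → ℝ → Fin m → Fin m → ℝ} {g : ℝ → ℝ}

/-- By uniform continuity of the data, `pathF` is small on fine partitions. -/
lemma pathF_small (hp2 : 2 ≤ p) (hZ : IsRoughPath p T Z ZZ) (hgi : IntegrableOn g (Icc 0 T))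
    {ε : ℝ} (hε : 0 < ε) : ∃ δ > 0, ∀ u : ℕ → ℝ, Monotone u → (∀ l, u l ∈ Icc 0 T) →
      ∀ i, u (i + 1) - u i ≤ δ → pathF p Z ZZ g u i (i + 1) ≤ ε := by
  set Δ : Set (ℝ × ℝ) := {q | 0 ≤ q.1 ∧ q.1 ≤ q.2 ∧ q.2 ≤ T} with hΔ
  have hΔc : IsCompact Δ := by
    refine (isCompact_Icc.prod isCompact_Icc).of_isClosed_subset ?_ (?_ : Δ ⊆ Icc (0 : ℝ) T ×ˢ Icc (0 : ℝ) T)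
    · have h1 : IsClosed {q : ℝ × ℝ | 0 ≤ q.1} := isClosed_le continuous_const continuous_fst
      have h2 : IsClosed {q : ℝ × ℝ | q.1 ≤ q.2} := isClosed_le continuous_fst continuous_snd
      have h3 : IsClosed {q : ℝ × ℝ | q.2 ≤ T} := isClosed_le continuous_snd continuous_const
      exact h1.inter (h2.inter h3)
    · rintro ⟨a, b⟩ ⟨h1, h2, h3⟩
      exact ⟨⟨h1, h2.trans h3⟩, ⟨h1.trans h2, h3⟩⟩
  have hm1 : MapsTo (Prod.fst : ℝ × ℝ → ℝ) Δ (Icc 0 T) := fun q hq => ⟨hq.1, hq.2.1.trans hq.2.2⟩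
  have hm2 : MapsTo (Prod.snd : ℝ × ℝ → ℝ) Δ (Icc 0 T) := fun q hq => ⟨hq.1.trans hq.2.1, hq.2.2⟩
  have hG : ContinuousOn (fun t => ∫ r in (0 : ℝ)..t, g r) (Icc 0 T) :=
    intervalIntegral.continuousOn_primitive hgi |>.congr fun t ht =>
      intervalIntegral.integral_of_le ht.1
  set Q : ℝ × ℝ → ℝ := fun q => ‖Z q.2 - Z q.1‖ ^ p + ‖ZZ q.1 q.2‖ ^ (p / 2) +
    ((∫ r in (0 : ℝ)..q.2, g r) - ∫ r in (0 : ℝ)..q.1, g r) with hQ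
  have hQc : ContinuousOn Q Δ := by
    refine ContinuousOn.add (ContinuousOn.add ?_ ?_) ?_
    · exact ((hZ.1.comp continuousOn_snd hm2).sub (hZ.1.comp continuousOn_fst hm1)).norm.rpow_const
        fun q _ => Or.inr (by linarith)
    · exact hZ.2.1.norm.rpow_const fun q _ => Or.inr (by linarith)
    · exact (hG.comp continuousOn_snd hm2).sub (hG.comp continuousOn_fst hm1)
  have hun := Metric.uniformContinuousOn_iff.1 (hΔc.uniformContinuousOn_of_continuous hQc) ε hε
  obtain ⟨δ, hδ, H⟩ := hun
  refine ⟨δ / 2, by positivity, fun u hu huT i hi => ?_⟩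
  have hui : u i ≤ u (i + 1) := hu (Nat.le_succ i)
  have hT : (0 : ℝ) ≤ T := (huT 0).1.trans (huT 0).2
  have h1 := H (u i, u (i + 1)) ⟨(huT i).1, hui, (huT _).2⟩ (u i, u i)
    ⟨(huT i).1, le_rfl, (huT _).2⟩ (by
      rw [Prod.dist_eq, max_lt_iff]
      refine ⟨by simpa using hδ, ?_⟩
      rw [Real.dist_eq, abs_of_nonneg (by linarith)]
      linarith)
  have h2 : Q (u i, u i) = 0 := by
    simp only [hQ]
    rw [hZ.diag (huT i).1 (huT i).2, sub_self, norm_zero, norm_zero, sub_self,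
      Real.zero_rpow (by positivity), Real.zero_rpow (by positivity)]
    simp
  rw [h2, Real.dist_eq, sub_zero] at h1
  have h3 : pathF p Z ZZ g u i (i + 1) = Q (u i, u (i + 1)) := by
    simp only [hQ, pathF]
    rw [← intervalIntegral.integral_interval_sub_left
      (intervalIntegrable_of_Icc hgi ⟨le_rfl, hT⟩ (huT _))
      (intervalIntegrable_of_Icc hgi ⟨le_rfl, hT⟩ (huT _))]
  rw [h3]
  exact (le_abs_self _).trans h1.le

lemma stepF_ckb (hp2 : 2 ≤ p) {K : ℝ} (hK : 0 ≤ K) (hg0 : ∀ r, 0 ≤ g r) {ξ : Fin m → Ed d → Ed d}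
    (hξ : ∀ k, CkbBound 3 (ξ k) K) {u : ℕ → ℝ} (hu : Monotone u) {i j : ℕ} (hij : i ≤ j) {w : ℝ}
    (hw : pathF p Z ZZ g u i j ≤ w) (hw1 : w ≤ 1) :
    CkbBound 2 (stepF ξ Z ZZ u i j) (fAC m K * w ^ (1 / p)) := by
  have hw0 := (pathF_nonneg hg0 hu hij).trans hw
  exact fA_ckb hξ (by positivity) (Real.rpow_le_one hw0 hw1 (by positivity)) hK
    (pathF_z_le hp2 hg0 hu hij hw) (pathF_zz_le hp2 hg0 hu hij hw)

/-- For fine partitions the increments of the scheme are small in `C²_b`. -/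
lemma stepF_small (hp2 : 2 ≤ p) {K : ℝ} (hK : 0 ≤ K) (hZ : IsRoughPath p T Z ZZ)
    {ξ : Fin m → Ed d → Ed d} (hξ : ∀ k, CkbBound 3 (ξ k) K) {ε : ℝ} (hε : 0 < ε) :
    ∃ δ > 0, ∀ u : ℕ → ℝ, Monotone u → (∀ l, u l ∈ Icc 0 T) →
      ∀ i, u (i + 1) - u i ≤ δ → CkbBound 2 (stepF ξ Z ZZ u i (i + 1)) ε := by
  obtain ⟨w, hw, H⟩ := small_rpow (α := 1 / p) (by positivity) (fAC m K) hε
  obtain ⟨δ, hδ, H'⟩ := pathF_small (g := fun _ => 0) hp2 hZ integrableOn_zero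
    (lt_min hw one_pos)
  refine ⟨δ, hδ, fun u hu huT i hi => ?_⟩
  have h1 := H' u hu huT i hi
  exact (stepF_ckb hp2 hK (fun _ => le_rfl) hξ hu (Nat.le_succ i) h1 (min_le_right _ _)).mono le_rfl
    (H _ (le_min hw.le zero_le_one) (min_le_left _ _))

/-- Stability of the scheme, uniform over all sufficiently fine partitions. -/
lemma scheme_stab (hp2 : 2 ≤ p) (hp3 : p < 3) {K : ℝ} (hK : 0 ≤ K) (hZ : IsRoughPath p T Z ZZ)
    (hg0 : ∀ r, 0 ≤ g r) (hgi : IntegrableOn g (Icc 0 T))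
    {ξ : Fin m → Ed d → Ed d} (hξ : ∀ k, CkbBound 3 (ξ k) K) :
    ∃ L δ : ℝ, 0 ≤ L ∧ 0 < δ ∧ ∀ u : ℕ → ℝ, Monotone u → (∀ l, u l ∈ Icc 0 T) →
      (∀ i, u (i + 1) - u i ≤ δ) → ∀ Y v : ℕ → Ed d,
      (∀ j, Y (j + 1) = Y j + stepF ξ Z ZZ u j (j + 1) (Y j) + v j) →
      (∀ j, ‖v j‖ ≤ ∫ r in (u j)..(u (j + 1)), g r) →
      (∀ j, ‖Y j - Y 0‖ ≤ L) ∧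
      ∀ y w : ℕ → Ed d, (∀ j, y (j + 1) = y j + stepF ξ Z ZZ u j (j + 1) (y j) + w j) →
        ∀ j, ‖Y j - y j‖ ≤ L * (‖Y 0 - y 0‖ + ∑ l ∈ Finset.range j, ‖v l - w l‖) := by
  obtain ⟨C, hC, H1⟩ := stepF_almostFlow (T := T) m hp2 hK
  obtain ⟨L, δ, hL, hδ, -, H2⟩ := stability_global hp2 hp3 (fAC_nonneg m hK) hC
    (pVar p (incr Z) 0 T ^ p + pVar (p / 2) ZZ 0 T ^ (p / 2) + ∫ r in (0:ℝ)..T, g r)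
  obtain ⟨δ', hδ', H3⟩ := pathF_small (g := g) hp2 hZ hgi hδ
  refine ⟨L, δ', hL, hδ', fun u hu huT hmesh Y v hY hv => ?_⟩
  obtain ⟨W, hW, hFW, hW1, hWB⟩ := exists_control hp2 hZ hg0 hgi hu huT
  refine H2 (Ed d) _ W (H1 hZ g hg0 ξ hξ u hu huT W hW hFW) (fun i => ?_)
    (fun j => hWB 0 j (Nat.zero_le j)) Y v hY fun i j hij => ?_
  · rw [hW1]; exact H3 u hu huT i (hmesh i)
  · refine le_trans (Finset.sum_le_sum fun l _ => hv l) (le_trans ?_ (hFW i j hij))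
    rw [intervalIntegral.sum_integral_adjacent_intervals_Ico hij
      (fun k _ => intervalIntegrable_of_Icc hgi (huT _) (huT _))]
    have h1 : 0 ≤ ‖Z (u j) - Z (u i)‖ ^ p := by positivity
    have h2 : 0 ≤ ‖ZZ (u i) (u j)‖ ^ (p / 2) := by positivity
    unfold pathF
    linarith

end Convergence

section ConvergenceToSolution

variable {d m : ℕ} {p T : ℝ} {Z : ℝ → Ed m} {ZZ : ℝ → ℝ → Fin m → Fin m → ℝ} {g : ℝ → ℝ}

/-- Trading the surplus of an exponent for smallness. -/
lemma rpow_le_small {a ε α β : ℝ} (ha : 0 ≤ a) (haε : a ≤ ε) (hα : 0 < α) (hαβ : α ≤ β) :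
    a ^ β ≤ ε ^ (β - α) * a ^ α := by
  have h1 : a ^ β = a ^ (β - α) * a ^ α := by
    rw [← Real.rpow_add' ha (by linarith)]
    congr 1
    ring
  rw [h1]
  exact mul_le_mul_of_nonneg_right (Real.rpow_le_rpow ha haε (by linarith)) (by positivity)

lemma OsgoodModulus.exists_small {h : ℝ → ℝ} (hh : OsgoodModulus h) {η : ℝ} (hη : 0 < η) :
    ∃ τ > 0, h τ ≤ η := by
  have h1 := Metric.continuousWithinAt_iff.1 (hh.1 0 self_mem_Ici) η hη
  obtain ⟨δ, hδ, H⟩ := h1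
  refine ⟨δ / 2, by positivity, ?_⟩
  have := H (x := δ / 2) (mem_Ici.2 (by positivity)) (by
    rw [Real.dist_eq, sub_zero, abs_of_pos (by positivity)]; linarith)
  rw [hh.2.2.1, Real.dist_eq, sub_zero] at this
  exact (le_abs_self _).trans this.le

/-- The local error between one step of the scheme and the solution: the drift is frozen at a point
close to the solution, and the rest is the remainder of the solution. -/
lemma local_error {h : ℝ → ℝ} {b : ℝ → Ed d → Ed d} (hh : OsgoodModulus h) (hb : OsgoodDrift g h b)
    (hbm : Measurable (fun q : ℝ × Ed d => b q.1 q.2)) {y : ℝ → Ed d} {s t : ℝ} (hs : 0 ≤ s)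
    (hst : s ≤ t) (hby : IntervalIntegrable (fun r => b r (y r)) volume s t) {τ η : ℝ}
    (hτ : 0 ≤ τ) (hosc : ∀ r ∈ Icc s t, ‖y s - y r‖ ≤ τ) {Y f v : Ed d} (hf : ‖f‖ ≤ τ)
    (hv : ‖v - ∫ r in s..t, b r (Y + f)‖ ≤ (∫ r in s..t, g r) * η) :
    ‖v - ∫ r in s..t, b r (y r)‖ ≤ (∫ r in s..t, g r) * (η + 2 * h τ + h ‖Y - y s‖) := by
  have hG : 0 ≤ ∫ r in s..t, g r := intervalIntegral.integral_nonneg hst fun r _ => hb.g_nonneg r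
  have h1 := hb.norm_int_sub_le hbm hs hst (Y + f) (y s)
  have h2 : h ‖Y + f - y s‖ ≤ h τ + h ‖Y - y s‖ := by
    have : ‖Y + f - y s‖ ≤ τ + ‖Y - y s‖ := by
      rw [show Y + f - y s = f + (Y - y s) by abel]
      exact (norm_add_le _ _).trans (by linarith)
    exact (hh.mono (norm_nonneg _) this).trans (hh.2.2.2.1 _ _ hτ (norm_nonneg _))
  have h3 : ‖(∫ r in s..t, b r (y s)) - ∫ r in s..t, b r (y r)‖ ≤ (∫ r in s..t, g r) * h τ := by
    rw [← intervalIntegral.integral_sub (hb.b_int hbm hs hst _) hby,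
      ← intervalIntegral.integral_mul_const]
    refine intervalIntegral.norm_integral_le_of_norm_le hst (ae_of_all _ fun r hr => ?_)
      ((hb.g_int hs hst).mul_const _)
    refine (hb.2.2 r _ _).trans (mul_le_mul_of_nonneg_left ?_ (hb.g_nonneg r))
    exact hh.mono (norm_nonneg _) (hosc r ⟨hr.1.le, hr.2⟩)
  have h4 := mul_le_mul_of_nonneg_left h2 hG
  have h5 : v - ∫ r in s..t, b r (y r) = (v - ∫ r in s..t, b r (Y + f)) +
      ((∫ r in s..t, b r (Y + f)) - ∫ r in s..t, b r (y s)) +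
      ((∫ r in s..t, b r (y s)) - ∫ r in s..t, b r (y r)) := by abel
  rw [h5]
  refine (norm_add₃_le).trans ?_
  have h6 : (∫ r in s..t, g r) * (η + 2 * h τ + h ‖Y - y s‖) = (∫ r in s..t, g r) * η +
    (∫ r in s..t, g r) * (h τ + h ‖Y - y s‖) + (∫ r in s..t, g r) * h τ := by ring
  linarith

/-- The splitting scheme converges to the solution as the mesh and the error in the drift tend to
zero. -/
lemma scheme_conv (hp2 : 2 ≤ p) (hp3 : p < 3) {K : ℝ} (hK : 0 ≤ K) (hZ : IsRoughPath p T Z ZZ)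
    (hT : 0 < T) {ξ : Fin m → Ed d → Ed d} (hξ : ∀ k, CkbBound 3 (ξ k) K)
    {h : ℝ → ℝ} {b : ℝ → Ed d → Ed d} (hh : OsgoodModulus h) (hb : OsgoodDrift g h b)
    (hbm : Measurable (fun q : ℝ × Ed d => b q.1 q.2)) {y : ℝ → Ed d}
    (hy : SolvesRDE p T Z ZZ ξ b y) {c : ℝ} (hc : 0 < c) :
    ∃ δ > 0, ∀ u : ℕ → ℝ, Monotone u → (∀ l, u l ∈ Icc 0 T) → (∀ i, u (i + 1) - u i ≤ δ) →
      ∀ Bf : ℕ → Ed d → Ed d, (∀ i x, ‖Bf i x‖ ≤ ∫ r in (u i)..(u (i + 1)), g r) →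
      (∀ i x, ‖Bf i x - ∫ r in (u i)..(u (i + 1)), b r x‖ ≤
        (∫ r in (u i)..(u (i + 1)), g r) * δ) →
      ∀ Y : ℕ → Ed d, Y 0 = y (u 0) →
      (∀ j, Y (j + 1) = Y j + stepF ξ Z ZZ u j (j + 1) (Y j) +
        Bf j (Y j + stepF ξ Z ZZ u j (j + 1) (Y j))) →
      ∀ n, ‖Y n - y (u n)‖ ≤ c := by
  have hg0 := hb.g_nonneg
  have hgi := hb.1 T hT
  obtain ⟨hby, hyc, hR⟩ := hy
  obtain ⟨L, δ1, hL, hδ1, H1⟩ := scheme_stab (d := d) hp2 hp3 hK hZ hg0 hgi hξ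
  set G := ∫ r in (0 : ℝ)..T, g r with hGdef
  have hG : 0 ≤ G := intervalIntegral.integral_nonneg hT.le fun r _ => hg0 r
  obtain ⟨a0, ha0, H2⟩ := hh.discrete (B := L * G) hc
  set μ : ℝ → Ed d := fun t => ∫ s in (0 : ℝ)..t, b s (y s) with hμ
  set V := pVar (p / 3) (rdeRem Z ZZ ξ μ y) 0 T ^ (p / 3) with hV
  set η : ℝ := a0 / (2 * (3 * L * G + 1)) with hη
  have hη0 : 0 < η := by positivity
  obtain ⟨τ, hτ, hτη⟩ := hh.exists_small hη0
  obtain ⟨εR, hεR, HR⟩ := small_rpow (α := 1 - p / 3) (by linarith) (L * V) (half_pos ha0)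
  set κ := min τ (εR / 3) with hκ
  have hκ0 : 0 < κ := lt_min hτ (by positivity)
  obtain ⟨δ2, hδ2, H3⟩ := stepF_small (T := T) hp2 hK hZ hξ hκ0
  obtain ⟨δ3, hδ3, H4⟩ := pathF_small (g := g) hp2 hZ hgi hκ0
  obtain ⟨δ4, hδ4, H5⟩ := Metric.uniformContinuousOn_iff.1
    (isCompact_Icc.uniformContinuousOn_of_continuous hyc) κ hκ0
  refine ⟨min η (min δ1 (min δ2 (min δ3 (δ4 / 2)))), by positivity,
    fun u hu huT hmesh Bf hBf hBb Y hY0 hY => ?_⟩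
  have hm1 : ∀ i, u (i + 1) - u i ≤ δ1 := fun i => (hmesh i).trans
    ((min_le_right _ _).trans (min_le_left _ _))
  have hm2 : ∀ i, u (i + 1) - u i ≤ δ2 := fun i => (hmesh i).trans
    ((min_le_right _ _).trans ((min_le_right _ _).trans (min_le_left _ _)))
  have hm3 : ∀ i, u (i + 1) - u i ≤ δ3 := fun i => (hmesh i).trans
    ((min_le_right _ _).trans ((min_le_right _ _).trans ((min_le_right _ _).trans
      (min_le_left _ _))))
  have hm4 : ∀ i, u (i + 1) - u i ≤ δ4 / 2 := fun i => (hmesh i).trans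
    ((min_le_right _ _).trans ((min_le_right _ _).trans ((min_le_right _ _).trans
      (min_le_right _ _))))
  have hui : ∀ i, u i ≤ u (i + 1) := fun i => hu (Nat.le_succ i)
  set γ : ℕ → ℝ := fun i => ∫ r in (u i)..(u (i + 1)), g r with hγ
  have hγ0 : ∀ i, 0 ≤ γ i := fun i => intervalIntegral.integral_nonneg (hui i) fun r _ => hg0 r
  have hγG : ∀ n, ∑ l ∈ Finset.range n, γ l ≤ G := by
    intro n
    simp only [hγ]
    rw [intervalIntegral.sum_integral_adjacent_intervals
      (fun k _ => intervalIntegrable_of_Icc hgi (huT _) (huT _))]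
    exact intervalIntegral.integral_mono_interval (huT 0).1 (hu (Nat.zero_le n)) (huT n).2
      (ae_of_all _ hg0) (intervalIntegrable_of_Icc hgi ⟨le_rfl, hT.le⟩ ⟨hT.le, le_rfl⟩)
  have hγκ : ∀ i, γ i ≤ κ := by
    intro i
    refine le_trans ?_ (H4 u hu huT i (hm3 i))
    have h1 : 0 ≤ ‖Z (u (i + 1)) - Z (u i)‖ ^ p := by positivity
    have h2 : 0 ≤ ‖ZZ (u i) (u (i + 1))‖ ^ (p / 2) := by positivity
    simp only [hγ]
    unfold pathF
    linarith
  have hsκ : ∀ i x, ‖stepF ξ Z ZZ u i (i + 1) x‖ ≤ κ := fun i x =>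
    (H3 u hu huT i (hm2 i)).norm_le x
  have hosc : ∀ i, ∀ r ∈ Icc (u i) (u (i + 1)), ‖y (u i) - y r‖ ≤ κ := by
    intro i r hr
    rw [← dist_eq_norm]
    refine (H5 _ (huT i) r ⟨(huT i).1.trans hr.1, hr.2.trans (huT _).2⟩ ?_).le
    rw [dist_comm, Real.dist_eq, abs_of_nonneg (by linarith [hr.1])]
    linarith [hr.2, hm4 i]
  have hbyi : ∀ i, IntervalIntegrable (fun r => b r (y r)) volume (u i) (u (i + 1)) := by
    intro i
    rw [intervalIntegrable_iff_integrableOn_Ioc_of_le (hui i)]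
    exact hby.mono_set fun r hr => ⟨(huT i).1.trans hr.1.le, hr.2.trans (huT _).2⟩
  have hbyi0 : ∀ i, IntervalIntegrable (fun r => b r (y r)) volume 0 (u i) := by
    intro i
    rw [intervalIntegrable_iff_integrableOn_Ioc_of_le (huT i).1]
    exact hby.mono_set fun r hr => ⟨hr.1.le, hr.2.trans (huT _).2⟩
  have hμi : ∀ i, μ (u (i + 1)) - μ (u i) = ∫ r in (u i)..(u (i + 1)), b r (y r) := fun i =>
    intervalIntegral.integral_interval_sub_left (hbyi0 _) (hbyi0 _)
  set R : ℕ → Ed d := fun i => rdeRem Z ZZ ξ μ y (u i) (u (i + 1)) with hRdef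
  have hyrec : ∀ i, y (u (i + 1)) = y (u i) + stepF ξ Z ZZ u i (i + 1) (y (u i)) +
      ((∫ r in (u i)..(u (i + 1)), b r (y r)) + R i) := by
    intro i
    simp only [hRdef, rdeRem]
    rw [hμi, stepF_eq]
    abel
  have hRle : ∀ i, ‖R i‖ ≤ εR := by
    intro i
    have h1 : R i = (y (u (i + 1)) - y (u i)) - (∫ r in (u i)..(u (i + 1)), b r (y r)) -
        stepF ξ Z ZZ u i (i + 1) (y (u i)) := by
      rw [hyrec i]; abel
    have h2 : ‖∫ r in (u i)..(u (i + 1)), b r (y r)‖ ≤ κ :=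
      (intervalIntegral.norm_integral_le_of_norm_le (hui i) (ae_of_all _ fun r _ => hb.2.1 r _)
        (hb.g_int (huT i).1 (hui i))).trans (hγκ i)
    have h3 := hosc i (u (i + 1)) ⟨hui i, le_rfl⟩
    rw [norm_sub_rev] at h3
    have h4 : κ ≤ εR / 3 := min_le_right _ _
    rw [h1]
    refine (norm_sub_le _ _).trans ?_
    have h5 := norm_sub_le (y (u (i + 1)) - y (u i)) (∫ r in (u i)..(u (i + 1)), b r (y r))
    linarith [hsκ i (y (u i))]
  have hRsum : ∀ n, ∑ l ∈ Finset.range n, ‖R l‖ ≤ εR ^ (1 - p / 3) * V := by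
    intro n
    have h1 := hR.sum_le (by positivity) hu (fun l => (huT l).1) (fun l => (huT l).2) n
    refine le_trans ?_ (mul_le_mul_of_nonneg_left h1 (by positivity))
    rw [Finset.mul_sum]
    refine Finset.sum_le_sum fun l _ => ?_
    have := rpow_le_small (norm_nonneg (R l)) (hRle l) (α := p / 3) (β := 1) (by positivity)
      (by linarith)
    rwa [Real.rpow_one] at this
  have hstab := (H1 u hu huT hm1 Y _ hY (fun j => hBf j _)).2 (fun i => y (u i)) _ hyrec
  have herr : ∀ l, ‖Bf l (Y l + stepF ξ Z ZZ u l (l + 1) (Y l)) -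
      ((∫ r in (u l)..(u (l + 1)), b r (y r)) + R l)‖ ≤
      γ l * (3 * η) + γ l * h ‖Y l - y (u l)‖ + ‖R l‖ := by
    intro l
    have h1 := local_error hh hb hbm (huT l).1 (hui l) (hbyi l) hτ.le
      (fun r hr => (hosc l r hr).trans (min_le_left _ _)) (Y := Y l)
      (f := stepF ξ Z ZZ u l (l + 1) (Y l)) ((hsκ l _).trans (min_le_left _ _))
      (v := Bf l (Y l + stepF ξ Z ZZ u l (l + 1) (Y l))) (η := η)
      ((hBb l _).trans (mul_le_mul_of_nonneg_left (min_le_left _ _) (hγ0 l)))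
    rw [← sub_sub]
    refine (norm_sub_le _ _).trans ?_
    have h2 : γ l * (η + 2 * h τ + h ‖Y l - y (u l)‖) ≤
        γ l * (3 * η + h ‖Y l - y (u l)‖) :=
      mul_le_mul_of_nonneg_left (by linarith) (hγ0 l)
    have h3 : γ l * (3 * η + h ‖Y l - y (u l)‖) = γ l * (3 * η) + γ l * h ‖Y l - y (u l)‖ := by
      ring
    linarith
  refine H2 (fun n => ‖Y n - y (u n)‖) (fun l => L * γ l) a0 ha0 le_rfl (fun n => norm_nonneg _)
    (fun n => mul_nonneg hL (hγ0 n)) (fun n => ?_) (fun n => ?_)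
  · rw [← Finset.mul_sum]
    exact mul_le_mul_of_nonneg_left (hγG n) hL
  · refine (hstab n).trans ?_
    rw [hY0, sub_self, norm_zero, zero_add]
    have h1 := mul_le_mul_of_nonneg_left (Finset.sum_le_sum fun l (_ : l ∈ Finset.range n) =>
      herr l) hL
    refine h1.trans ?_
    rw [Finset.sum_add_distrib, Finset.sum_add_distrib, ← Finset.sum_mul]
    have h2 : L * ((∑ l ∈ Finset.range n, γ l) * (3 * η)) ≤ L * (G * (3 * η)) :=
      mul_le_mul_of_nonneg_left (mul_le_mul_of_nonneg_right (hγG n) (by positivity)) hL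
    have h3 : L * (G * (3 * η)) ≤ a0 / 2 := by
      have h4 : L * (G * (3 * η)) = (3 * L * G) / (3 * L * G + 1) * (a0 / 2) := by
        rw [hη]; field_simp
      rw [h4]
      have h5 : (3 * L * G) / (3 * L * G + 1) ≤ 1 := (div_le_one (by positivity)).2 (by linarith)
      have := mul_le_mul_of_nonneg_right h5 (half_pos ha0).le
      linarith
    have h4 := mul_le_mul_of_nonneg_left (hRsum n) hL
    have h5 := HR εR hεR.le le_rfl
    have h6 : L * (εR ^ (1 - p / 3) * V) = L * V * εR ^ (1 - p / 3) := by ring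
    have h7 : ∑ l ∈ Finset.range n, L * γ l * h ‖Y l - y (u l)‖ =
        L * ∑ l ∈ Finset.range n, γ l * h ‖Y l - y (u l)‖ := by
      rw [Finset.mul_sum]; exact Finset.sum_congr rfl fun l _ => by ring
    rw [h7, mul_add, mul_add]
    linarith

end ConvergenceToSolution

/-! ### Quasi-measure-preserving maps and their pointwise limits -/

section QuasiPres

variable {E : Type*} [MeasurableSpace E] {μ : Measure E}

/-- `f` distorts the measure `μ` of preimages by a factor at most `exp c`, in both directions. -/
def QuasiPres (μ : Measure E) (c : ℝ) (f : E → E) : Prop :=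
  Measurable f ∧ ∀ A, MeasurableSet A →
    μ (f ⁻¹' A) ≤ ENNReal.ofReal (Real.exp c) * μ A ∧
      μ A ≤ ENNReal.ofReal (Real.exp c) * μ (f ⁻¹' A)

lemma QuasiPres.id : QuasiPres μ 0 (fun x => x) :=
  ⟨measurable_id, fun A _ => by simp⟩

lemma QuasiPres.comp {c c' : ℝ} {f f' : E → E} (hf : QuasiPres μ c f) (hf' : QuasiPres μ c' f') :
    QuasiPres μ (c + c') (fun x => f' (f x)) := by
  refine ⟨hf'.1.comp hf.1, fun A hA => ?_⟩
  have h1 := hf.2 _ (hf'.1 hA)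
  have h2 := hf'.2 A hA
  have he : ENNReal.ofReal (Real.exp (c + c')) =
      ENNReal.ofReal (Real.exp c) * ENNReal.ofReal (Real.exp c') := by
    rw [Real.exp_add, ENNReal.ofReal_mul (Real.exp_pos _).le]
  rw [he]
  refine ⟨h1.1.trans ?_, h2.2.trans ?_⟩
  · rw [mul_assoc]; gcongr; exact h2.1
  · rw [mul_comm (ENNReal.ofReal (Real.exp c)), mul_assoc]; gcongr; exact h1.2

lemma QuasiPres.mono {c c' : ℝ} {f : E → E} (hf : QuasiPres μ c f) (hc : c ≤ c') :
    QuasiPres μ c' f := by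
  have he : ENNReal.ofReal (Real.exp c) ≤ ENNReal.ofReal (Real.exp c') :=
    ENNReal.ofReal_le_ofReal (Real.exp_le_exp.2 hc)
  refine ⟨hf.1, fun A hA => ⟨(hf.2 A hA).1.trans ?_, (hf.2 A hA).2.trans ?_⟩⟩ <;> gcongr

end QuasiPres

section QuasiPreserving

variable {E : Type*} [NormedAddCommGroup E] [NormedSpace ℝ E] [FiniteDimensional ℝ E]
  [MeasurableSpace E] [BorelSpace E] {μ : Measure E}

/-- Change of variables for a small perturbation of the identity. -/
lemma quasiPres_step [μ.IsAddHaarMeasure] {f : E → E} {c : ℝ} (hf : Differentiable ℝ f)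
    (hf' : ∀ x, ‖fderiv ℝ f x‖ ≤ 1 / 2)
    (hdet : ∀ x, Real.exp (-c) ≤ |(1 + fderiv ℝ f x).det| ∧
      |(1 + fderiv ℝ f x).det| ≤ Real.exp c) :
    QuasiPres μ c (fun x => x + f x) := by
  have hcomplete : CompleteSpace E := FiniteDimensional.complete ℝ E
  set F : E → E := fun x => x + f x with hF
  have hlip : ∀ x y, ‖f x - f y‖ ≤ 1 / 2 * ‖x - y‖ := fun x y =>
    Convex.norm_image_sub_le_of_norm_fderiv_le (s := univ) (fun z _ => hf z) (fun z _ => hf' z)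
      convex_univ (mem_univ _) (mem_univ _)
  have hinj : Function.Injective F := by
    intro x y hxy
    have h1 : x - y = -(f x - f y) := by
      have : x + f x = y + f y := hxy
      rw [neg_sub, sub_eq_sub_iff_add_eq_add, this, add_comm]
    have h2 := hlip x y
    rw [← norm_neg (f x - f y), ← h1] at h2
    have h3 : ‖x - y‖ = 0 := le_antisymm (by linarith) (norm_nonneg _)
    exact sub_eq_zero.1 (norm_eq_zero.1 h3)
  have hsurj : Function.Surjective F := by
    intro z
    -- a preimage of `z` is a fixed point of the contraction `x ↦ z - f x`
    have hc : ContractingWith (1 / 2 : ℝ≥0) (fun x => z - f x) := by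
      refine ⟨by rw [div_lt_one] <;> norm_num, LipschitzWith.of_dist_le_mul fun x y => ?_⟩
      rw [dist_eq_norm, dist_eq_norm, sub_sub_sub_cancel_left, norm_sub_rev]
      simpa using hlip x y
    obtain ⟨x, hx⟩ : ∃ x, z - f x = x := ⟨_, hc.fixedPoint_isFixedPt⟩
    exact ⟨x, by rw [hF]; exact (sub_eq_iff_eq_add.1 hx).symm⟩
  have hder : ∀ x, HasFDerivAt F (1 + fderiv ℝ f x) x := fun x =>
    (hasFDerivAt_id x).add (hf x).hasFDerivAt
  have hcont : Continuous F := continuous_id.add hf.continuous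
  refine ⟨hcont.measurable, fun A hA => ?_⟩
  have h1 := lintegral_abs_det_fderiv_eq_addHaar_image μ (hcont.measurable hA)
    (fun x _ => (hder x).hasFDerivWithinAt) hinj.injOn
  rw [image_preimage_eq A hsurj] at h1
  rw [← h1]
  constructor
  · have h2 : ENNReal.ofReal (Real.exp (-c)) * μ (F ⁻¹' A) ≤
        ∫⁻ x in F ⁻¹' A, ENNReal.ofReal |(1 + fderiv ℝ f x).det| ∂μ := by
      rw [← setLIntegral_const]
      exact lintegral_mono fun x => ENNReal.ofReal_le_ofReal (hdet x).1
    refine le_trans (le_of_eq ?_) (mul_le_mul_of_nonneg_left h2 zero_le)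
    rw [← mul_assoc, ← ENNReal.ofReal_mul (Real.exp_pos _).le, ← Real.exp_add]
    simp
  · rw [← setLIntegral_const]
    exact lintegral_mono fun x => ENNReal.ofReal_le_ofReal (hdet x).2

/-- Upper bound on open sets: by openness, a point of `Φ ⁻¹' U` eventually lies in `S n ⁻¹' U`. -/
lemma quasiPres_open {S : ℕ → E → E} {c : ℕ → ℝ} {c0 : ℝ} {Φ : E → E}
    (hS : ∀ n, QuasiPres μ (c n) (S n)) (hc : Tendsto c atTop (𝓝 c0))
    (hlim : ∀ x, Tendsto (fun n => S n x) atTop (𝓝 (Φ x))) {U : Set E} (hU : IsOpen U) :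
    μ (Φ ⁻¹' U) ≤ ENNReal.ofReal (Real.exp c0) * μ U := by
  set I : ℕ → Set E := fun N => {x | ∀ n, N ≤ n → S n x ∈ U} with hI
  have h1 : Φ ⁻¹' U ⊆ ⋃ N, I N := by
    intro x hx
    obtain ⟨N, hN⟩ := eventually_atTop.1 ((hlim x).eventually (hU.mem_nhds hx))
    exact mem_iUnion.2 ⟨N, hN⟩
  have h2 : Monotone I := by
    intro a b hab x hx n hn
    exact hx n (hab.trans hn)
  refine (measure_mono h1).trans ?_
  rw [h2.measure_iUnion]
  refine iSup_le fun N => ?_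
  have h3 : Tendsto (fun n => ENNReal.ofReal (Real.exp (c n)) * μ U) atTop
      (𝓝 (ENNReal.ofReal (Real.exp c0) * μ U)) :=
    ENNReal.Tendsto.mul_const (ENNReal.tendsto_ofReal ((Real.continuous_exp.tendsto _).comp hc))
      (Or.inl (by simpa using Real.exp_pos c0))
  refine ge_of_tendsto h3 (eventually_atTop.2 ⟨N, fun n hn => ?_⟩)
  have h4 : I N ⊆ S n ⁻¹' U := fun x hx => hx n hn
  exact (measure_mono h4).trans ((hS n).2 U hU.measurableSet).1

/-- Lower bound on compact sets: a point which lies in `S n ⁻¹' K` for infinitely many `n` lies in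
`Φ ⁻¹' K`, since `K` is closed. Bounded displacement keeps all `S n ⁻¹' K` inside a set of finite
measure, so that the measures of the decreasing unions converge. -/
lemma quasiPres_compact [IsFiniteMeasureOnCompacts μ] {S : ℕ → E → E} {c : ℕ → ℝ} {c0 L : ℝ}
    {Φ : E → E} (hS : ∀ n, QuasiPres μ (c n) (S n)) (hc : Tendsto c atTop (𝓝 c0))
    (hL : ∀ n x, ‖S n x - x‖ ≤ L)
    (hlim : ∀ x, Tendsto (fun n => S n x) atTop (𝓝 (Φ x))) {K : Set E} (hK : IsCompact K) :
    μ K ≤ ENNReal.ofReal (Real.exp c0) * μ (Φ ⁻¹' K) := by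
  set I : ℕ → Set E := fun N => ⋃ n ≥ N, S n ⁻¹' K with hI
  have hmeas : ∀ N, MeasurableSet (I N) := fun N =>
    MeasurableSet.iUnion fun n => MeasurableSet.iUnion fun _ => (hS n).1 hK.measurableSet
  have hanti : Antitone I := fun a b hab x hx => by
    simp only [hI, mem_iUnion] at hx ⊢
    obtain ⟨n, hn, hx⟩ := hx
    exact ⟨n, le_trans hab hn, hx⟩
  have hfin : μ (I 0) ≠ ⊤ := by
    have hprop : ProperSpace E := FiniteDimensional.proper ℝ E
    have h1 : I 0 ⊆ cthickening L K := by
      intro x hx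
      simp only [hI, mem_iUnion] at hx
      obtain ⟨n, -, hx⟩ := hx
      refine mem_cthickening_of_dist_le x (S n x) L K hx ?_
      rw [dist_comm, dist_eq_norm]
      exact hL n x
    exact ((measure_mono h1).trans_lt (hK.cthickening.measure_lt_top)).ne
  have hsub : ⋂ N, I N ⊆ Φ ⁻¹' K := by
    intro x hx
    have h1 : ∃ᶠ n in atTop, S n x ∈ K := by
      rw [frequently_atTop]
      intro N
      have := mem_iInter.1 hx N
      simp only [hI, mem_iUnion] at this
      obtain ⟨n, hn, hx⟩ := this
      exact ⟨n, hn, hx⟩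
    exact hK.isClosed.mem_of_frequently_of_tendsto h1 (hlim x)
  have hstep : ∀ N, μ K ≤ ENNReal.ofReal (Real.exp c0) * μ (I N) := by
    intro N
    have h3 : Tendsto (fun n => ENNReal.ofReal (Real.exp (c n)) * μ (I N)) atTop
        (𝓝 (ENNReal.ofReal (Real.exp c0) * μ (I N))) :=
      ENNReal.Tendsto.mul_const (ENNReal.tendsto_ofReal ((Real.continuous_exp.tendsto _).comp hc))
        (Or.inl (by simpa using Real.exp_pos c0))
    refine ge_of_tendsto h3 (eventually_atTop.2 ⟨N, fun n hn => ?_⟩)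
    refine ((hS n).2 K hK.measurableSet).2.trans ?_
    gcongr
    exact subset_biUnion_of_mem (u := fun n => S n ⁻¹' K) hn
  have hlim' : Tendsto (fun N => ENNReal.ofReal (Real.exp c0) * μ (I N)) atTop
      (𝓝 (ENNReal.ofReal (Real.exp c0) * μ (⋂ N, I N))) :=
    ENNReal.Tendsto.const_mul (tendsto_measure_iInter_atTop
      (fun N => (hmeas N).nullMeasurableSet) hanti ⟨0, hfin⟩) (Or.inr ENNReal.ofReal_ne_top)
  refine (ge_of_tendsto' hlim' hstep).trans ?_
  gcongr

/-- A pointwise limit, with bounded displacement, of quasi-measure-preserving maps is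
quasi-measure-preserving. -/
lemma quasiPres_lim [μ.IsAddHaarMeasure] {S : ℕ → E → E} {c : ℕ → ℝ} {c0 L : ℝ}
    {Φ : E → E} (hΦ : Measurable Φ) (hS : ∀ n, QuasiPres μ (c n) (S n))
    (hc : Tendsto c atTop (𝓝 c0)) (hL : ∀ n x, ‖S n x - x‖ ≤ L)
    (hlim : ∀ x, Tendsto (fun n => S n x) atTop (𝓝 (Φ x))) : QuasiPres μ c0 Φ := by
  have hprop : ProperSpace E := FiniteDimensional.proper ℝ E
  refine ⟨hΦ, fun A hA => ⟨?_, ?_⟩⟩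
  · by_contra! hlt
    rw [mul_comm, ← ENNReal.lt_div_iff_mul_lt (Or.inl (by simpa using Real.exp_pos c0))
      (Or.inl ENNReal.ofReal_ne_top)] at hlt
    obtain ⟨U, hAU, hU, hUlt⟩ := A.exists_isOpen_lt_of_lt _ hlt
    rw [ENNReal.lt_div_iff_mul_lt (Or.inl (by simpa using Real.exp_pos c0))
      (Or.inl ENNReal.ofReal_ne_top), mul_comm] at hUlt
    exact absurd ((measure_mono (preimage_mono hAU)).trans (quasiPres_open hS hc hlim hU))
      (not_le.2 hUlt)
  · by_contra! hlt
    obtain ⟨K, hKA, hK, hlt'⟩ := hA.exists_lt_isCompact hlt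
    refine absurd ((quasiPres_compact hS hc hL hlim hK).trans ?_) (not_le.2 hlt')
    gcongr

end QuasiPreserving

/-! ### Volume distortion of the scheme and of the flow -/

section Volume

variable {d m : ℕ} {p T : ℝ} {Z : ℝ → Ed m} {ZZ : ℝ → ℝ → Fin m → Fin m → ℝ} {g : ℝ → ℝ}

lemma exists_grid {t δ : ℝ} (ht : 0 ≤ t) (hδ : 0 < δ) : ∃ (u : ℕ → ℝ) (N : ℕ), Monotone u ∧
    (∀ l, u l ∈ Icc 0 t) ∧ (∀ i, u (i + 1) - u i ≤ δ) ∧ u 0 = 0 ∧ u N = t := by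
  obtain ⟨N, hN⟩ := exists_nat_ge (t / δ)
  refine ⟨fun i => min (i * δ) t, N, fun a b hab => ?_, fun l => ⟨by positivity, min_le_right _ _⟩,
    fun i => ?_, by simpa using ht, min_eq_right ((div_le_iff₀ hδ).1 hN)⟩
  · have : (a : ℝ) ≤ b := by exact_mod_cast hab
    exact min_le_min_right _ (mul_le_mul_of_nonneg_right this hδ.le)
  · push_cast
    rcases le_total ((i : ℝ) * δ) t with h | h
    · rw [min_eq_left h]
      linarith [min_le_left (((i : ℝ) + 1) * δ) t]
    · rw [min_eq_right h]
      linarith [min_le_right (((i : ℝ) + 1) * δ) t]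

/-- The splitting scheme on the partition `u`: one rough step, followed by one drift step. -/
noncomputable def schemeMap (ξ : Fin m → Ed d → Ed d) (Z : ℝ → Ed m)
    (ZZ : ℝ → ℝ → Fin m → Fin m → ℝ) (u : ℕ → ℝ) (Bf : ℕ → Ed d → Ed d) : ℕ → Ed d → Ed d
  | 0, x => x
  | n + 1, x => schemeMap ξ Z ZZ u Bf n x + stepF ξ Z ZZ u n (n + 1) (schemeMap ξ Z ZZ u Bf n x) +
      Bf n (schemeMap ξ Z ZZ u Bf n x + stepF ξ Z ZZ u n (n + 1) (schemeMap ξ Z ZZ u Bf n x))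

lemma schemeMap_quasiPres {ξ : Fin m → Ed d → Ed d} {u : ℕ → ℝ} {Bf : ℕ → Ed d → Ed d}
    {c c' : ℕ → ℝ}
    (h1 : ∀ i, QuasiPres volume (c i) fun x => x + stepF ξ Z ZZ u i (i + 1) x)
    (h2 : ∀ i, QuasiPres volume (c' i) fun x => x + Bf i x) (n : ℕ) :
    QuasiPres volume (∑ i ∈ Finset.range n, (c i + c' i)) (schemeMap ξ Z ZZ u Bf n) := by
  induction n with
  | zero => rw [Finset.range_zero, Finset.sum_empty]; exact QuasiPres.id
  | succ n ih =>
    rw [Finset.sum_range_succ, ← add_assoc]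
    exact (ih.comp (h1 n)).comp (h2 n)

/-- Arbitrarily fine schemes whose volume distortion is at most `exp (∫ D + δ)`. -/
lemma exists_scheme (hp2 : 2 ≤ p) (hp3 : p < 3) (hT : 0 < T) {K : ℝ} (hK : 0 ≤ K)
    (hZ : IsGeometricRoughPath p T Z ZZ)
    {ξ : Fin m → Ed d → Ed d} (hξ : ∀ k, CkbBound 3 (ξ k) K) (hdivξ : ∀ k x, divg (ξ k) x = 0)
    {h : ℝ → ℝ} {b : ℝ → Ed d → Ed d} (hh : OsgoodModulus h) (hb : OsgoodDrift g h b)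
    (hbm : Measurable (fun q : ℝ × Ed d => b q.1 q.2)) {divb : ℝ → Ed d → ℝ}
    (hdivb : ∀ t ∈ Icc (0 : ℝ) T, ∀ φ : Ed d → ℝ, IsSmoothFn φ → HasCompactSupport φ →
      (∫ x, ⟪b t x, gradient φ x⟫) = -∫ x, divb t x * φ x)
    {D : ℝ → ℝ} (hDint : IntegrableOn D (Icc 0 T) volume)
    (hDbd : ∀ t ∈ Icc (0 : ℝ) T, ∀ᵐ x : Ed d, |divb t x| ≤ D t) {t δ : ℝ} (ht : t ∈ Icc 0 T)
    (hδ : 0 < δ) :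
    ∃ (u : ℕ → ℝ) (Bf : ℕ → Ed d → Ed d) (N : ℕ), Monotone u ∧ (∀ l, u l ∈ Icc 0 T) ∧
      (∀ i, u (i + 1) - u i ≤ δ) ∧ u 0 = 0 ∧ u N = t ∧
      (∀ i x, ‖Bf i x‖ ≤ ∫ r in (u i)..(u (i + 1)), g r) ∧
      (∀ i x, ‖Bf i x - ∫ r in (u i)..(u (i + 1)), b r x‖ ≤
        (∫ r in (u i)..(u (i + 1)), g r) * δ) ∧
      QuasiPres volume ((∫ r in (0 : ℝ)..t, D r) + δ) (schemeMap ξ Z ZZ u Bf N) := by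
  have hg0 := hb.g_nonneg
  have hgi := hb.1 T hT
  set V := pVar p (incr Z) 0 T ^ p + pVar (p / 2) ZZ 0 T ^ (p / 2) + ∫ r in (0:ℝ)..T, g r with hV
  obtain ⟨ε, hε, hεδ⟩ := hh.exists_small hδ
  obtain ⟨Cε, hCε, Hdrift⟩ := drift_approx hbm hh hb hdivb hDint hDbd hε
  obtain ⟨C, r, hC, hr, Hdet⟩ := stepF_det (T := T) d m hp2 hK
  obtain ⟨K1, r1, hK1, hr1, Hdet1⟩ := det_drift (E := Ed d)
  obtain ⟨w1, hw1, Hw1⟩ := small_rpow (α := 3 / p - 1)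
    (by rw [sub_pos, lt_div_iff₀ (by linarith)]; linarith) (C * V) (half_pos hδ)
  obtain ⟨w2, hw2, Hw2⟩ := small_rpow (α := 1) one_pos (K1 * Cε ^ 2 * V) (half_pos hδ)
  obtain ⟨w3, hw3, Hw3⟩ := small_rpow (α := 1) one_pos Cε (lt_min hr1 (half_pos one_pos))
  set w := min (min w1 w2) (min w3 r) with hw
  have hw0 : 0 < w := by positivity
  have hww1 : w ≤ w1 := (min_le_left _ _).trans (min_le_left _ _)
  have hww2 : w ≤ w2 := (min_le_left _ _).trans (min_le_right _ _)
  have hww3 : w ≤ w3 := (min_le_right _ _).trans (min_le_left _ _)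
  have hwr : w ≤ r := (min_le_right _ _).trans (min_le_right _ _)
  obtain ⟨δ1, hδ1, H1⟩ := pathF_small (g := g) hp2 hZ.1 hgi hw0
  obtain ⟨δ2, hδ2, H2⟩ := stepF_small (T := T) hp2 hK hZ.1 hξ (half_pos one_pos)
  obtain ⟨u, N, hu, hut, hmesh, hu0, huN⟩ := exists_grid ht.1 (lt_min hδ (lt_min hδ1 hδ2))
  have huT : ∀ l, u l ∈ Icc 0 T := fun l => ⟨(hut l).1, (hut l).2.trans ht.2⟩
  have hui : ∀ i, u i ≤ u (i + 1) := fun i => hu (Nat.le_succ i)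
  choose Bf hBd hBn hBf hBc hBb using fun i => Hdrift (u i) (u (i + 1)) (huT i).1 (hui i)
    (huT (i + 1)).2
  set γ : ℕ → ℝ := fun i => ∫ r in (u i)..(u (i + 1)), g r with hγ
  have hγ0 : ∀ i, 0 ≤ γ i := fun i => intervalIntegral.integral_nonneg (hui i) fun r _ => hg0 r
  obtain ⟨W, hW, hFW, hW1, hWB⟩ := exists_control hp2 hZ.1 hg0 hgi hu huT
  have hWw : ∀ i, W i (i + 1) ≤ w := fun i => by
    rw [hW1]
    exact H1 u hu huT i ((hmesh i).trans ((min_le_right _ _).trans (min_le_left _ _)))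
  have hW0 : ∀ i, 0 ≤ W i (i + 1) := fun i => hW.nonneg _ _ (Nat.le_succ i)
  have hWsum : ∀ n, ∑ i ∈ Finset.range n, W i (i + 1) ≤ W 0 n := by
    intro n
    induction n with
    | zero => simp [hW.diag]
    | succ n ih =>
      rw [Finset.sum_range_succ]
      linarith [hW.super 0 n (n + 1) (Nat.zero_le n) (Nat.le_succ n)]
  have hWV : ∑ i ∈ Finset.range N, W i (i + 1) ≤ V :=
    (hWsum N).trans (hWB 0 N (Nat.zero_le N))
  have hγW : ∀ i, γ i ≤ W i (i + 1) := by
    intro i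
    rw [hW1]
    have h1 : 0 ≤ ‖Z (u (i + 1)) - Z (u i)‖ ^ p := by positivity
    have h2 : 0 ≤ ‖ZZ (u i) (u (i + 1))‖ ^ (p / 2) := by positivity
    simp only [hγ]
    unfold pathF
    linarith
  have hq1 : ∀ i, QuasiPres volume (C * W i (i + 1) ^ (3 / p))
      fun x => x + stepF ξ Z ZZ u i (i + 1) x := by
    intro i
    have h1 := H2 u hu huT i ((hmesh i).trans ((min_le_right _ _).trans (min_le_right _ _)))
    exact quasiPres_step h1.differentiable h1.norm_fderiv_le
      (Hdet hZ g hg0 ξ hξ hdivξ u hu huT i _ (hW1 i).ge ((hWw i).trans hwr))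
  have hq2 : ∀ i, QuasiPres volume ((∫ r in (u i)..(u (i + 1)), D r) + K1 * (Cε * γ i) ^ 2)
      fun x => x + Bf i x := by
    intro i
    have h1 : Cε * γ i ≤ min r1 (1 / 2) := by
      refine le_trans (mul_le_mul_of_nonneg_left ((hγW i).trans (hWw i)) hCε) ?_
      have := Hw3 w hw0.le hww3
      rwa [Real.rpow_one] at this
    refine quasiPres_step (hBd i) (fun x => (hBf i x).trans (h1.trans (min_le_right _ _)))
      fun x => ?_
    have h2 := Hdet1 (fderiv ℝ (Bf i) x) ((hBf i x).trans (h1.trans (min_le_left _ _)))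
    have h3 := abs_le.1 (hBc i x)
    have h4 : K1 * ‖fderiv ℝ (Bf i) x‖ ^ 2 ≤ K1 * (Cε * γ i) ^ 2 := by
      have := hBf i x
      gcongr
    exact ⟨le_trans (Real.exp_le_exp.2 (by linarith [h3.1])) h2.1,
      h2.2.trans (Real.exp_le_exp.2 (by linarith [h3.2]))⟩
  refine ⟨u, Bf, N, hu, huT, fun i => (hmesh i).trans (min_le_left _ _), hu0, huN, hBn,
    fun i x => (hBb i x).trans (mul_le_mul_of_nonneg_left hεδ (hγ0 i)),
    (schemeMap_quasiPres hq1 hq2 N).mono ?_⟩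
  rw [Finset.sum_add_distrib, Finset.sum_add_distrib,
    intervalIntegral.sum_integral_adjacent_intervals
      (fun k _ => intervalIntegrable_of_Icc hDint (huT _) (huT _)), hu0, huN]
  have hs1 : ∑ i ∈ Finset.range N, C * W i (i + 1) ^ (3 / p) ≤ δ / 2 := by
    have h1 : ∀ i ∈ Finset.range N, C * W i (i + 1) ^ (3 / p) ≤
        C * w ^ (3 / p - 1) * W i (i + 1) := by
      intro i _
      have := rpow_le_small (hW0 i) (hWw i) (α := 1) (β := 3 / p) one_pos
        (by rw [le_div_iff₀ (by linarith)]; linarith)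
      rw [Real.rpow_one] at this
      rw [mul_assoc]
      exact mul_le_mul_of_nonneg_left this hC.le
    refine (Finset.sum_le_sum h1).trans ?_
    rw [← Finset.mul_sum]
    refine (mul_le_mul_of_nonneg_left hWV (by positivity)).trans ?_
    have := Hw1 w hw0.le hww1
    linarith
  have hs2 : ∑ i ∈ Finset.range N, K1 * (Cε * γ i) ^ 2 ≤ δ / 2 := by
    have h1 : ∀ i ∈ Finset.range N, K1 * (Cε * γ i) ^ 2 ≤ K1 * Cε ^ 2 * w * W i (i + 1) := by
      intro i _
      have h2 : γ i * γ i ≤ w * W i (i + 1) :=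
        mul_le_mul ((hγW i).trans (hWw i)) (hγW i) (hγ0 i) hw0.le
      have h3 := mul_le_mul_of_nonneg_left h2 (by positivity : 0 ≤ K1 * Cε ^ 2)
      calc K1 * (Cε * γ i) ^ 2 = K1 * Cε ^ 2 * (γ i * γ i) := by ring
        _ ≤ _ := h3
        _ = _ := by ring
    refine (Finset.sum_le_sum h1).trans ?_
    rw [← Finset.mul_sum]
    refine (mul_le_mul_of_nonneg_left hWV (by positivity)).trans ?_
    have := Hw2 w hw0.le hww2
    rw [Real.rpow_one] at this
    linarith
  linarith

/-- The flow distorts volume by a factor at most `exp (∫ D)`. -/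
lemma flow_quasiPres (hp2 : 2 ≤ p) (hp3 : p < 3) (hT : 0 < T) {K : ℝ} (hK : 0 ≤ K)
    (hZ : IsGeometricRoughPath p T Z ZZ)
    {ξ : Fin m → Ed d → Ed d} (hξ : ∀ k, CkbBound 3 (ξ k) K) (hdivξ : ∀ k x, divg (ξ k) x = 0)
    {h : ℝ → ℝ} {b : ℝ → Ed d → Ed d} (hh : OsgoodModulus h) (hb : OsgoodDrift g h b)
    (hbm : Measurable (fun q : ℝ × Ed d => b q.1 q.2)) {divb : ℝ → Ed d → ℝ}
    (hdivb : ∀ t ∈ Icc (0 : ℝ) T, ∀ φ : Ed d → ℝ, IsSmoothFn φ → HasCompactSupport φ →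
      (∫ x, ⟪b t x, gradient φ x⟫) = -∫ x, divb t x * φ x)
    {D : ℝ → ℝ} (hDint : IntegrableOn D (Icc 0 T) volume)
    (hDbd : ∀ t ∈ Icc (0 : ℝ) T, ∀ᵐ x : Ed d, |divb t x| ≤ D t)
    {Φ : ℝ → Ed d → Ed d}
    (hΦ : ∀ x, Φ 0 x = x ∧ SolvesRDE p T Z ZZ ξ b (fun t => Φ t x)) {t : ℝ} (ht : t ∈ Icc 0 T)
    (hΦt : Continuous (Φ t)) :
    QuasiPres volume (∫ r in (0 : ℝ)..t, D r) (Φ t) := by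
  obtain ⟨L, δ0, hL, hδ0, Hstab⟩ :=
    scheme_stab (d := d) hp2 hp3 hK hZ.1 hb.g_nonneg (hb.1 T hT) hξ
  set δ : ℕ → ℝ := fun n => min δ0 (1 / ((n : ℝ) + 1)) with hδ
  have hδpos : ∀ n, 0 < δ n := fun n => lt_min hδ0 (by positivity)
  have hδlim : Tendsto δ atTop (𝓝 0) :=
    squeeze_zero (fun n => (hδpos n).le) (fun n => min_le_right _ _)
      tendsto_one_div_add_atTop_nhds_zero_nat
  choose u Bf N hu huT hmesh hu0 huN hBn hBb hq using fun n =>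
    exists_scheme hp2 hp3 hT hK hZ hξ hdivξ hh hb hbm hdivb hDint hDbd ht (hδpos n)
  refine quasiPres_lim (S := fun n => schemeMap ξ Z ZZ (u n) (Bf n) (N n)) (L := L)
    hΦt.measurable hq ?_ (fun n x => ?_) fun x => ?_
  · simpa using hδlim.const_add (∫ r in (0 : ℝ)..t, D r)
  · exact (Hstab (u n) (hu n) (huT n) (fun i => (hmesh n i).trans (min_le_left _ _))
      (fun j => schemeMap ξ Z ZZ (u n) (Bf n) j x) _ (fun j => rfl) fun j => hBn n j _).1 (N n)
  · rw [Metric.tendsto_atTop]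
    intro ε hε
    obtain ⟨δ', hδ', Hconv⟩ :=
      scheme_conv hp2 hp3 hK hZ.1 hT hξ hh hb hbm (hΦ x).2 (half_pos hε)
    obtain ⟨n0, hn0⟩ := eventually_atTop.1 (hδlim.eventually (gt_mem_nhds hδ'))
    refine ⟨n0, fun n hn => ?_⟩
    have h1 : δ n ≤ δ' := (hn0 n hn).le
    have h2 := Hconv (u n) (hu n) (huT n) (fun i => (hmesh n i).trans h1) (Bf n) (hBn n)
      (fun i z => (hBb n i z).trans (mul_le_mul_of_nonneg_left h1
        (intervalIntegral.integral_nonneg (hu n (Nat.le_succ i)) fun r _ => hb.g_nonneg r)))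
      (fun j => schemeMap ξ Z ZZ (u n) (Bf n) j x) (by rw [hu0 n]; exact (hΦ x).1.symm)
      (fun j => rfl) (N n)
    rw [huN n] at h2
    rw [dist_eq_norm]
    exact h2.trans_lt (half_lt_self hε)

end Volume

/-- Corollary 3.8: quasi-incompressibility of the RDE flow for geometric
rough paths, divergence-free vector fields and Osgood drifts with bounded divergence. -/
theorem stmt1 (d m : ℕ) (p T : ℝ) (hp2 : 2 ≤ p) (hp3 : p < 3) (hT : 0 < T)
    (Z : ℝ → Ed m) (ZZ : ℝ → ℝ → Fin m → Fin m → ℝ)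
    (hZ : IsGeometricRoughPath p T Z ZZ)
    (ξ : Fin m → Ed d → Ed d) (Kξ : ℝ) (hξ : ∀ k, CkbBound 3 (ξ k) Kξ)
    (hdivξ : ∀ k x, divg (ξ k) x = 0)
    (b : ℝ → Ed d → Ed d) (hbmeas : Measurable (fun q : ℝ × Ed d => b q.1 q.2))
    (g h : ℝ → ℝ) (hOsg : OsgoodModulus h) (hb : OsgoodDrift g h b)
    -- `divb` represents the distributional divergence of `b_t`
    (divb : ℝ → Ed d → ℝ)
    (hdivb : ∀ t ∈ Icc (0 : ℝ) T, ∀ φ : Ed d → ℝ, IsSmoothFn φ → HasCompactSupport φ →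
      (∫ x, ⟪b t x, gradient φ x⟫) = -∫ x, divb t x * φ x)
    -- `D t` is an essential bound for `‖∇·b_t‖_{L^∞}`, integrable in time
    (D : ℝ → ℝ) (hD0 : ∀ t, 0 ≤ D t) (hDint : IntegrableOn D (Icc 0 T) volume)
    (hDbd : ∀ t ∈ Icc (0 : ℝ) T, ∀ᵐ x : Ed d, |divb t x| ≤ D t)
    -- `Φ` is the flow of the RDE `dy = b_t(y) dt + ξ(y) d𝐙`
    (Φ : ℝ → Ed d → Ed d)
    (hΦ : ∀ x, Φ 0 x = x ∧ SolvesRDE p T Z ZZ ξ b (fun t => Φ t x))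
    (hΦhomeo : ∀ t ∈ Icc (0 : ℝ) T, ∃ e : Ed d ≃ₜ Ed d, ∀ x, e x = Φ t x) :
    ∀ t ∈ Icc (0 : ℝ) T, ∀ A : Set (Ed d), MeasurableSet A →
      (ENNReal.ofReal (Real.exp (-∫ s in (0 : ℝ)..t, D s)) * volume A ≤ volume (Φ t '' A) ∧
        volume (Φ t '' A) ≤ ENNReal.ofReal (Real.exp (∫ s in (0 : ℝ)..t, D s)) * volume A) ∧
      (ENNReal.ofReal (Real.exp (-∫ s in (0 : ℝ)..t, D s)) * volume A ≤ volume (Φ t ⁻¹' A) ∧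
        volume (Φ t ⁻¹' A) ≤ ENNReal.ofReal (Real.exp (∫ s in (0 : ℝ)..t, D s)) * volume A) := by
  intro t ht A hA
  obtain ⟨e, he⟩ := hΦhomeo t ht
  have hΦe : Φ t = e := funext fun x => (he x).symm
  -- for `m = 0` the constant `Kξ` is unconstrained, so it is replaced by its positive part
  have hq := flow_quasiPres hp2 hp3 hT (le_max_right Kξ 0) hZ
    (fun k => (hξ k).mono le_rfl (le_max_left Kξ 0)) hdivξ hOsg hb hbmeas hdivb hDint hDbd hΦ ht
    (by rw [hΦe]; exact e.continuous)
  have hflip : ∀ X Y : ℝ≥0∞, X ≤ ENNReal.ofReal (Real.exp (∫ s in (0 : ℝ)..t, D s)) * Y →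
      ENNReal.ofReal (Real.exp (-∫ s in (0 : ℝ)..t, D s)) * X ≤ Y := by
    intro X Y hXY
    refine (mul_le_mul_of_nonneg_left hXY zero_le).trans (le_of_eq ?_)
    rw [← mul_assoc, ← ENNReal.ofReal_mul (Real.exp_pos _).le, ← Real.exp_add]
    simp
  have hpre : Φ t ⁻¹' (Φ t '' A) = A := by
    rw [hΦe]; exact e.injective.preimage_image A
  have himg : MeasurableSet (Φ t '' A) := by
    rw [hΦe]; exact e.measurableEmbedding.measurableSet_image.2 hA
  have h1 := hq.2 A hA
  have h2 := hq.2 _ himg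
  rw [hpre] at h2
  exact ⟨⟨hflip _ _ h2.1, h2.2⟩, ⟨hflip _ _ h1.2, h1.1⟩⟩
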